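/- arXiv:2112.13919 — 9 statements merged into one kernel-verified Lean document; each statement's English description precedes it below -/
import Mathlib

section
/- Let α be a real algebraic number of degree d ≥ 3 over ℚ and let β ∈ ℚ(α) be irrational. Let μ be a real number with d/2 + 1 < μ < d and let C₀ > 0. Then there exist positive real numbers C₁ and C₂ (depending only on α, β, μ and C₀) with the following property: if x₁/y₁ and x₂/y₂ are rational numbers in lowest terms with H(x₂,y₂) ≥ H(x₁,y₁) ≥ C₁, |α − x₁/y₁| < C₀/H(x₁,y₁)^μ and |β − x₂/y₂| < C₀/H(x₂,y₂)^μ, then either H(x₂,y₂) > C₂⁻¹ · H(x₁,y₁)^{μ − d/2}, or there exist integers s, t, u, v with sv − tu ≠ 0 such that β = (sα + t)/(uα + v) and x₂/y₂ = (s x₁ + t y₁)/(u x₁ + v y₁). -/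
/-!
Write `β = P(α) / Q(α)` with rational polynomials `P`, `Q` for which `r = max (deg P) (deg Q)` is
as small as possible, and let `φ = P / Q`. Counting dimensions gives `r ≤ d / 2`. Minimality makes
`P` and `Q` coprime, so the height of `φ(z)` is of exact order `H(z) ^ r`. It also makes
`φ'(α) ≠ 0`, since otherwise `(P', Q')` would be a smaller pair; so `|φ(z) - β|` is of exact order
`|z - α|`.

Let `z` and `w` be the given approximations to `α` and `β`. If `w ≠ φ(z)`, then `|w - φ(z)|` is
at least `c / (H(w) H(z) ^ r)`, while it is at most `|w - β| + |φ(z) - β| = O(H(z) ^ (-μ))`. Hence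
`H(w) ≥ c' H(z) ^ (μ - r)`. If `w = φ(z)` and `r = 1`, then `φ` is the Möbius transformation
sought. If `w = φ(z)` and `r ≥ 2`, then `|z - α| = O(|w - β|) = O(H(w) ^ (-μ)) = O(H(z) ^ (-r μ))`.
As `r μ > d`, this contradicts Liouville's inequality once `H(z)` is large.
-/

/-- The height `H(x, y) = max (|x|, |y|)` of a rational number `x/y` in lowest terms,
as a real number. -/
noncomputable def ratHeight (x y : ℤ) : ℝ := max |(x : ℝ)| |(y : ℝ)|

open Polynomial Height Filter Topology Asymptotics

section Representation

variable {K L : Type*} [Field K] [Field L] [Algebra K L] {α β : L} {P Q : K[X]}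

/-- The nonzero pair `(P, Q)` represents `β` as `P(α) / Q(α)`, in a form without denominators so
that the condition is linear in `(P, Q)`. -/
structure Represents (α β : L) (P Q : K[X]) : Prop where
  ne_zero : P ≠ 0 ∨ Q ≠ 0
  aeval_eq : aeval α P = β * aeval α Q

/-- `(P, Q)` represents `β` as `P(α) / Q(α)`, and no other such pair has a smaller degree
`max (deg P) (deg Q)`. -/
structure IsMinimalRepresentation (α β : L) (P Q : K[X]) : Prop extends Represents α β P Q where
  max_natDegree_le : ∀ {P' Q' : K[X]}, Represents α β P' Q' →
    max P.natDegree Q.natDegree ≤ max P'.natDegree Q'.natDegree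

lemma Represents.exists_isMinimalRepresentation (h : Represents α β P Q) :
    ∃ P₀ Q₀ : K[X], IsMinimalRepresentation α β P₀ Q₀ := by
  obtain ⟨⟨P₀, Q₀⟩, h₀, hmin⟩ := exists_minimalFor_of_wellFoundedLT
    (fun p : K[X] × K[X] ↦ Represents α β p.1 p.2) (fun p ↦ max p.1.natDegree p.2.natDegree)
    ⟨(P, Q), h⟩
  exact ⟨P₀, Q₀, h₀, fun {P' Q'} h' ↦ (le_total _ _).elim id (hmin (j := (P', Q')) h')⟩

lemma finrank_degreeLT (n : ℕ) : Module.finrank K (degreeLT K n) = n := by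
  rw [(degreeLTEquiv K n).finrank_eq, Module.finrank_fin_fun]

lemma natDegree_lt_of_mem_degreeLT {n : ℕ} (hn : n ≠ 0) {p : K[X]} (hp : p ∈ degreeLT K n) :
    p.natDegree < n := by
  rcases eq_or_ne p 0 with rfl | h
  · simpa using hn.bot_lt
  · exact (natDegree_lt_iff_degree_lt h).2 (mem_degreeLT.1 hp)

/- With `d = [K(α) : K]`, the pairs of polynomials of degree at most `⌊d / 2⌋` form a space of
dimension `2 (⌊d / 2⌋ + 1) > d`. -/
lemma exists_represents_natDegree_le (hα : IsIntegral K α) (hβ : β ∈ Algebra.adjoin K {α}) :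
    ∃ P Q : K[X], Represents α β P Q ∧
      2 * max P.natDegree Q.natDegree ≤ (minpoly K α).natDegree := by
  set n := (minpoly K α).natDegree / 2 + 1
  let pb := Algebra.adjoin.powerBasis hα
  have := pb.finite
  have := (degreeLTEquiv K n).symm.finiteDimensional
  let e : degreeLT K n →ₗ[K] Algebra.adjoin K {α} :=
    (aeval ⟨α, Algebra.self_mem_adjoin_singleton K α⟩).toLinearMap ∘ₗ (degreeLT K n).subtype
  let f : degreeLT K n × degreeLT K n →ₗ[K] Algebra.adjoin K {α} :=
    e.coprod (-(LinearMap.mulLeft K ⟨β, hβ⟩ ∘ₗ e))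
  have hker : LinearMap.ker f ≠ ⊥ := by
    apply LinearMap.ker_ne_bot_of_finrank_lt
    rw [Module.finrank_prod, finrank_degreeLT, pb.finrank, Algebra.adjoin.powerBasis_dim]
    lia
  obtain ⟨⟨P, Q⟩, hPQ, hne⟩ := (Submodule.ne_bot_iff _).1 hker
  refine ⟨P, Q, ⟨?_, ?_⟩, ?_⟩
  · contrapose! hne
    exact Prod.ext (Subtype.ext hne.1) (Subtype.ext hne.2)
  · have h := congrArg Subtype.val (LinearMap.mem_ker.1 hPQ)
    simpa [f, e, Subalgebra.aeval_coe, add_neg_eq_zero] using h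
  · have hP := natDegree_lt_of_mem_degreeLT (by lia) P.2
    have hQ := natDegree_lt_of_mem_degreeLT (by lia) Q.2
    lia

lemma aeval_ne_zero_of_natDegree_lt_minpoly {p : K[X]} (hp : p ≠ 0)
    (hdeg : p.natDegree < (minpoly K α).natDegree) : aeval α p ≠ 0 := fun h ↦
  hdeg.not_ge (natDegree_le_natDegree (minpoly.degree_le_of_ne_zero K α hp h))

lemma max_natDegree_mul_left {g : K[X]} (hg : g ≠ 0) (hPQ : P ≠ 0 ∨ Q ≠ 0) :
    max (g * P).natDegree (g * Q).natDegree = g.natDegree + max P.natDegree Q.natDegree := by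
  by_cases hP : P = 0 <;> by_cases hQ : Q = 0 <;>
    simp_all [natDegree_mul, max_add_add_left]

namespace IsMinimalRepresentation

variable (h : IsMinimalRepresentation α β P Q)
include h

lemma two_mul_max_natDegree_le (hα : IsIntegral K α) (hβ : β ∈ Algebra.adjoin K {α}) :
    2 * max P.natDegree Q.natDegree ≤ (minpoly K α).natDegree := by
  obtain ⟨P', Q', h', hdeg⟩ := exists_represents_natDegree_le hα hβ
  exact (Nat.mul_le_mul_left 2 (h.max_natDegree_le h')).trans hdeg

lemma aeval_denom_ne_zero (hα : IsIntegral K α) (hβ : β ∈ Algebra.adjoin K {α}) :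
    aeval α Q ≠ 0 := by
  have hdeg := h.two_mul_max_natDegree_le hα hβ
  have hpos := minpoly.natDegree_pos hα
  refine aeval_ne_zero_of_natDegree_lt_minpoly ?_ (by lia)
  rintro rfl
  refine aeval_ne_zero_of_natDegree_lt_minpoly (α := α) (h.ne_zero.resolve_right (· rfl))
    (by lia) ?_
  simpa only [map_zero, mul_zero] using h.aeval_eq

lemma isCoprime (hα : IsIntegral K α) (hβ : β ∈ Algebra.adjoin K {α}) : IsCoprime P Q := by
  refine isCoprime_of_dvd P Q (by have := h.ne_zero; tauto) ?_
  rintro g hg hg₀ ⟨P', rfl⟩ ⟨Q', rfl⟩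
  have hgα : aeval α g ≠ 0 := by
    have := h.aeval_denom_ne_zero hα hβ
    rw [map_mul] at this
    exact left_ne_zero_of_mul this
  have hne : P' ≠ 0 ∨ Q' ≠ 0 := h.ne_zero.imp right_ne_zero_of_mul right_ne_zero_of_mul
  have hrep : Represents α β P' Q' := by
    refine ⟨hne, mul_left_cancel₀ hgα ?_⟩
    simpa only [map_mul, mul_left_comm β] using h.aeval_eq
  have hle := h.max_natDegree_le hrep
  have hpos : 0 < g.natDegree :=
    natDegree_pos_iff_degree_pos.2 (degree_pos_of_ne_zero_of_nonunit hg₀ hg)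
  rw [max_natDegree_mul_left hg₀ hne] at hle
  lia

lemma max_natDegree_pos (hα : IsIntegral K α) (hβ : β ∈ Algebra.adjoin K {α})
    (hβK : β ∉ Set.range (algebraMap K L)) : 0 < max P.natDegree Q.natDegree := by
  have hQα := h.aeval_denom_ne_zero hα hβ
  by_contra! hdeg
  have hP := eq_C_of_natDegree_eq_zero (p := P) (by lia)
  have hQ := eq_C_of_natDegree_eq_zero (p := Q) (by lia)
  have heq := h.aeval_eq
  rw [hQ, aeval_C] at hQα
  rw [hP, hQ, aeval_C, aeval_C] at heq
  exact hβK ⟨P.coeff 0 / Q.coeff 0, by rw [map_div₀, heq, mul_div_cancel_right₀ _ hQα]⟩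

lemma aeval_derivative_ne [CharZero K] (hdeg : 0 < max P.natDegree Q.natDegree) :
    aeval α (derivative P) ≠ β * aeval α (derivative Q) := by
  intro heq
  have hne : derivative P ≠ 0 ∨ derivative Q ≠ 0 := by
    simp only [ne_eq, derivative_eq_zero]
    lia
  have hle := h.max_natDegree_le ⟨hne, heq⟩
  have hP := natDegree_derivative_le P
  have hQ := natDegree_derivative_le Q
  lia

end IsMinimalRepresentation

end Representation
section HeightOfValues

variable {K : Type*} [Field K] {P Q R : K[X]}

lemma exists_mul_add_mul_eq_of_degree_le (hPQ : IsCoprime P Q) (hdeg : Q.degree ≤ P.degree)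
    (hR : R.natDegree ≤ 2 * P.natDegree) :
    ∃ A B : K[X], A.natDegree ≤ P.natDegree ∧ B.natDegree ≤ P.natDegree ∧ A * P + B * Q = R := by
  have hP : P ≠ 0 := by
    rintro rfl
    rw [degree_zero, le_bot_iff, degree_eq_bot] at hdeg
    exact hPQ.ne_zero_or_ne_zero.elim (· rfl) (· hdeg)
  obtain ⟨a, b, hab⟩ := hPQ
  set A := R * a + R * b / P * Q
  set B := R * b % P
  have hsum : A * P + B * Q = R := by
    linear_combination R * hab + Q * EuclideanDomain.mod_add_div (R * b) P
  have hBP : B.natDegree ≤ P.natDegree := natDegree_le_natDegree (degree_mod_lt _ hP).le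
  have hQP : Q.natDegree ≤ P.natDegree := natDegree_le_natDegree hdeg
  have hAP : (A * P).natDegree ≤ 2 * P.natDegree := by
    rw [eq_sub_of_add_eq hsum]
    refine (natDegree_sub_le _ _).trans (max_le hR (natDegree_mul_le.trans ?_))
    lia
  refine ⟨A, B, ?_, hBP, hsum⟩
  rcases eq_or_ne A 0 with h | h
  · simp [h]
  · rw [natDegree_mul h hP] at hAP
    lia

lemma exists_mul_add_mul_eq (hPQ : IsCoprime P Q)
    (hR : R.natDegree ≤ 2 * max P.natDegree Q.natDegree) :
    ∃ A B : K[X], A.natDegree ≤ max P.natDegree Q.natDegree ∧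
      B.natDegree ≤ max P.natDegree Q.natDegree ∧ A * P + B * Q = R := by
  rcases le_total Q.degree P.degree with h | h
  · rw [max_eq_left (natDegree_le_natDegree h)] at hR ⊢
    exact exists_mul_add_mul_eq_of_degree_le hPQ h hR
  · rw [max_eq_right (natDegree_le_natDegree h)] at hR ⊢
    obtain ⟨B, A, hB, hA, hsum⟩ := exists_mul_add_mul_eq_of_degree_le hPQ.symm h hR
    exact ⟨A, B, hA, hB, by rw [add_comm, hsum]⟩

lemma exists_homogenize_mul_add_mul_eq_X_pow {r : ℕ} (hPQ : IsCoprime P Q)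
    (hr : max P.natDegree Q.natDegree = r) (k : Fin 2) :
    ∃ A B : K[X], A.homogenize r * P.homogenize r + B.homogenize r * Q.homogenize r =
      MvPolynomial.X k ^ (r + r) := by
  obtain ⟨R, hR, hRk⟩ : ∃ R : K[X], R.natDegree ≤ 2 * r ∧
      R.homogenize (r + r) = MvPolynomial.X k ^ (r + r) := by
    fin_cases k
    · exact ⟨X ^ (r + r), by rw [natDegree_X_pow, two_mul], by simp [homogenize_X_pow]⟩
    · exact ⟨1, by simp, by simp⟩
  subst hr
  obtain ⟨A, B, hA, hB, rfl⟩ := exists_mul_add_mul_eq hPQ hR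
  rw [homogenize_add, homogenize_mul _ _ hA (le_max_left _ _),
    homogenize_mul _ _ hB (le_max_right _ _)] at hRk
  exact ⟨A, B, hRk⟩

variable [AdmissibleAbsValues K]

lemma mulHeight₁_eval_div_eq_mulHeight {r : ℕ} (hP : P.natDegree ≤ r) (hQ : Q.natDegree ≤ r)
    (x : K) : mulHeight₁ (P.eval x / Q.eval x) =
      mulHeight fun j ↦ (![P.homogenize r, Q.homogenize r] j).eval ![x, 1] := by
  rw [mulHeight₁_div_eq_mulHeight]
  congr
  ext j
  fin_cases j <;> simp [eval_homogenize, hP, hQ]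

variable (P Q) in
lemma exists_mulHeight₁_eval_div_le :
    ∃ C > 0, ∀ x : K, mulHeight₁ (P.eval x / Q.eval x) ≤
      C * mulHeight₁ x ^ max P.natDegree Q.natDegree := by
  set r := max P.natDegree Q.natDegree
  have hom (j : Fin 2) : (![P.homogenize r, Q.homogenize r] j).IsHomogeneous r := by
    fin_cases j <;> exact isHomogeneous_homogenize ..
  obtain ⟨C, hC, hle⟩ := mulHeight_eval_le' hom
  refine ⟨C, hC, fun x ↦ ?_⟩
  rw [mulHeight₁_eval_div_eq_mulHeight (le_max_left _ _) (le_max_right _ _),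
    mulHeight₁_eq_mulHeight x]
  exact hle _

lemma exists_le_mulHeight₁_eval_div (hPQ : IsCoprime P Q) :
    ∃ C > 0, ∀ x : K, C * mulHeight₁ x ^ max P.natDegree Q.natDegree ≤
      mulHeight₁ (P.eval x / Q.eval x) := by
  set r := max P.natDegree Q.natDegree with hr
  choose A B hAB using exists_homogenize_mul_add_mul_eq_X_pow hPQ hr.symm
  let q (a : Fin 2 × Fin 2) : MvPolynomial (Fin 2) K :=
    ![(A a.1).homogenize r, (B a.1).homogenize r] a.2
  have hom (a : Fin 2 × Fin 2) : (q a).IsHomogeneous r := by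
    obtain ⟨k, j⟩ := a
    fin_cases j <;> exact isHomogeneous_homogenize ..
  obtain ⟨C, hC, hle⟩ := mulHeight_eval_ge' (N := r) hom
  refine ⟨C, hC, fun x ↦ ?_⟩
  rw [mulHeight₁_eval_div_eq_mulHeight (le_max_left _ _) (le_max_right _ _),
    mulHeight₁_eq_mulHeight x]
  refine hle _ fun k ↦ ?_
  simpa [q, Fin.sum_univ_two] using congrArg (MvPolynomial.eval ![x, 1]) (hAB k)

end HeightOfValues
section RationalHeights

lemma abs_le_mulHeight₁ (q : ℚ) : |(q : ℝ)| ≤ mulHeight₁ q := by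
  have hden : (1 : ℝ) ≤ q.den := by exact_mod_cast q.den_pos
  rw [Rat.mulHeight₁_eq_max, Rat.cast_def, abs_div, Nat.abs_cast, Nat.cast_max, Nat.cast_natAbs,
    Int.cast_abs]
  exact (div_le_self (abs_nonneg _) hden).trans (le_max_left _ _)

lemma one_le_abs_mul_mulHeight₁ {q : ℚ} (hq : q ≠ 0) : 1 ≤ |(q : ℝ)| * mulHeight₁ q := by
  have hpos : 0 < |(q : ℝ)| := by positivity
  have hinv := abs_le_mulHeight₁ q⁻¹
  rwa [mulHeight₁_inv, Rat.cast_inv, abs_inv, inv_le_iff_one_le_mul₀' hpos] at hinv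

lemma one_le_abs_sub_mul_mulHeight₁ {q q' : ℚ} (h : q ≠ q') :
    1 ≤ |(q : ℝ) - q'| * (2 ^ totalWeight ℚ * mulHeight₁ q * mulHeight₁ q') := by
  have hle := one_le_abs_mul_mulHeight₁ (sub_ne_zero.2 h)
  grw [mulHeight₁_sub_le] at hle
  rwa [Rat.cast_sub] at hle

lemma ratHeight_eq_mulHeight₁ {x y : ℤ} (hy : 0 < y) (hxy : IsCoprime x y) :
    ratHeight x y = mulHeight₁ (x / y : ℚ) := by
  have hgcd := Int.isCoprime_iff_nat_coprime.1 hxy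
  have hden : ((x / y : ℚ).den : ℤ) = y := Rat.den_div_eq_of_coprime hy hgcd
  have hnum : (x / y : ℚ).num = x := Rat.num_div_eq_of_coprime hy hgcd
  rw [Rat.mulHeight₁_eq_max, hnum, ratHeight, Nat.cast_max, Nat.cast_natAbs, Int.cast_abs]
  congr
  rw [← Int.cast_natCast (R := ℝ), hden, abs_of_pos (by exact_mod_cast hy)]

end RationalHeights

section LocalBehaviour

variable {P Q : ℚ[X]} {α β : ℝ}

lemma Represents.hasDerivAt_aeval_div (h : Represents α β P Q) (hQ : aeval α Q ≠ 0) :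
    HasDerivAt (fun t : ℝ ↦ aeval t P / aeval t Q)
      ((aeval α (derivative P) - β * aeval α (derivative Q)) / aeval α Q) α := by
  convert! (P.hasDerivAt_aeval α).div (Q.hasDerivAt_aeval α) hQ using 1
  rw [h.aeval_eq]
  field_simp

lemma Represents.aeval_div_eq (h : Represents α β P Q) (hQ : aeval α Q ≠ 0) :
    aeval α P / aeval α Q = β := by
  rw [h.aeval_eq, mul_div_cancel_right₀ _ hQ]

lemma ratCast_eval_div (P Q : ℚ[X]) (z : ℚ) :
    ((P.eval z / Q.eval z : ℚ) : ℝ) = aeval (z : ℝ) P / aeval (z : ℝ) Q := by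
  simp only [← eq_ratCast (algebraMap ℚ ℝ), map_div₀, aeval_algebraMap_apply, coe_aeval_eq_eval]

lemma exists_one_le_of_ne_eval_div
    (h : (fun t : ℝ ↦ aeval t P / aeval t Q - β) =O[𝓝 α] (· - α)) :
    ∃ C > 0, ∀ᶠ z : ℚ in comap (↑) (𝓝 α), ∀ w : ℚ, w ≠ P.eval z / Q.eval z →
      1 ≤ C * (|α - z| + |β - w|) * mulHeight₁ w *
        mulHeight₁ z ^ max P.natDegree Q.natDegree := by
  obtain ⟨K, hK, hφ⟩ := h.exists_pos
  obtain ⟨C, hC, hheight⟩ := exists_mulHeight₁_eval_div_le P Q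
  refine ⟨(K + 1) * 2 ^ totalWeight ℚ * C, by positivity, ?_⟩
  filter_upwards [hφ.bound.comap _] with z hz w hw
  rw [← ratCast_eval_div, Real.norm_eq_abs, Real.norm_eq_abs, abs_sub_comm _ α] at hz
  set q := P.eval z / Q.eval z
  have hdist : |(w : ℝ) - q| ≤ (K + 1) * (|α - z| + |β - w|) := by
    have := abs_sub_le (w : ℝ) β q
    rw [abs_sub_comm _ β, abs_sub_comm β q] at this
    nlinarith [abs_nonneg (α - z), abs_nonneg (β - w)]
  calc 1 ≤ |(w : ℝ) - q| * (2 ^ totalWeight ℚ * mulHeight₁ w * mulHeight₁ q) :=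
        one_le_abs_sub_mul_mulHeight₁ hw
    _ ≤ (K + 1) * (|α - z| + |β - w|) * (2 ^ totalWeight ℚ * mulHeight₁ w *
          (C * mulHeight₁ z ^ max P.natDegree Q.natDegree)) := by gcongr; exact hheight z
    _ = _ := by ring

lemma exists_liouville_bound (hα : IsIntegral ℚ α) (hdeg : (minpoly ℚ α).natDegree ≠ 1) :
    ∃ C > 0, ∀ᶠ z : ℚ in comap (↑) (𝓝 α),
      1 ≤ C * |α - z| * mulHeight₁ z ^ (minpoly ℚ α).natDegree := by
  have hO : (fun t : ℝ ↦ aeval t (minpoly ℚ α) / aeval t (1 : ℚ[X]) - 0) =O[𝓝 α] (· - α) := by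
    simpa using ((minpoly ℚ α).hasDerivAt_aeval α).isBigO_sub
  obtain ⟨C, hC, hgap⟩ := exists_one_le_of_ne_eval_div hO
  refine ⟨C, hC, hgap.mono fun z hz ↦ ?_⟩
  have hroot := (minpoly.irreducible hα).not_isRoot_of_natDegree_ne_one hdeg (x := z)
  simpa using hz 0 (by simpa using Ne.symm hroot)

lemma eventually_of_abs_sub_lt {μ : ℝ} (hμ : 0 < μ) (C₀ : ℝ) {p : ℚ → Prop}
    (hp : ∀ᶠ z : ℚ in comap (↑) (𝓝 α), p z) :
    ∀ᶠ z : ℚ in comap mulHeight₁ atTop, |α - z| < C₀ / mulHeight₁ z ^ μ → p z := by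
  rw [(Metric.nhds_basis_ball.comap _).eventually_iff] at hp
  obtain ⟨ε, hε, hball⟩ := hp
  have hlim : Tendsto (fun H : ℝ ↦ C₀ / H ^ μ) atTop (𝓝 0) :=
    (tendsto_rpow_atTop hμ).const_div_atTop C₀
  filter_upwards [(hlim.eventually_lt_const hε).comap mulHeight₁] with z hz hlt
  exact hball (by simpa [Real.dist_eq, abs_sub_comm] using hlt.trans hz)

end LocalBehaviour

section Moebius

variable {K L : Type*} [Field K] [Field L] [Algebra K L] {P Q : K[X]}

lemma aeval_eq_of_natDegree_le_one (hP : P.natDegree ≤ 1) (x : L) :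
    aeval x P = algebraMap K L (P.coeff 1) * x + algebraMap K L (P.coeff 0) := by
  conv_lhs => rw [eq_X_add_C_of_natDegree_le_one hP]
  simp

lemma coeff_ne_zero_of_natDegree_eq_one (hP : P.natDegree = 1) : P.coeff 1 ≠ 0 := by
  rw [← hP, coeff_natDegree, leadingCoeff_ne_zero]
  rintro rfl
  simp at hP

-- If the determinant vanished, the root of one polynomial would be a common root.
lemma coeff_mul_coeff_sub_ne_zero (hPQ : IsCoprime P Q)
    (hdeg : max P.natDegree Q.natDegree = 1) :
    P.coeff 1 * Q.coeff 0 - P.coeff 0 * Q.coeff 1 ≠ 0 := by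
  intro hdet
  have hlead : P.coeff 1 ≠ 0 ∨ Q.coeff 1 ≠ 0 := (max_choice P.natDegree Q.natDegree).imp
    (fun h ↦ coeff_ne_zero_of_natDegree_eq_one (h.symm.trans hdeg))
    (fun h ↦ coeff_ne_zero_of_natDegree_eq_one (h.symm.trans hdeg))
  have hroot (x : K) := aeval_ne_zero_of_isCoprime hPQ x
  simp only [aeval_eq_of_natDegree_le_one ((le_max_left _ _).trans_eq hdeg),
    aeval_eq_of_natDegree_le_one ((le_max_right _ _).trans_eq hdeg), Algebra.algebraMap_self,
    RingHom.id_apply] at hroot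
  rcases hlead with hP | hQ
  · have := hroot (-P.coeff 0 / P.coeff 1)
    grind
  · have := hroot (-Q.coeff 0 / Q.coeff 1)
    grind

lemma exists_int_moebius [Algebra ℚ L] {P Q : ℚ[X]} (hPQ : IsCoprime P Q)
    (hdeg : max P.natDegree Q.natDegree = 1) :
    ∃ s t u v : ℤ, s * v - t * u ≠ 0 ∧
      ∀ x : L, aeval x P / aeval x Q = (s * x + t) / (u * x + v) := by
  obtain ⟨⟨N, hN⟩, hint⟩ := IsLocalization.exist_integer_multiples_of_finite (nonZeroDivisors ℤ)
    ![P.coeff 1, P.coeff 0, Q.coeff 1, Q.coeff 0]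
  choose c hc using hint
  have hN : (N : ℚ) ≠ 0 := Int.cast_ne_zero.2 (nonZeroDivisors.ne_zero hN)
  obtain ⟨hs, ht, hu, hv⟩ : c 0 = N * P.coeff 1 ∧ c 1 = N * P.coeff 0 ∧
      c 2 = N * Q.coeff 1 ∧ c 3 = N * Q.coeff 0 := by simpa [Fin.forall_fin_succ] using hc
  refine ⟨c 0, c 1, c 2, c 3, ?_, fun x ↦ ?_⟩
  · have hdet : ((c 0 * c 3 - c 1 * c 2 : ℤ) : ℚ) =
        N ^ 2 * (P.coeff 1 * Q.coeff 0 - P.coeff 0 * Q.coeff 1) := by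
      push_cast [hs, ht, hu, hv]
      ring
    rw [← Int.cast_ne_zero (α := ℚ), hdet]
    exact mul_ne_zero (pow_ne_zero 2 hN) (coeff_mul_coeff_sub_ne_zero hPQ hdeg)
  · have hcast (n : ℤ) : (n : L) = algebraMap ℚ L n := (map_intCast _ n).symm
    have hNL : algebraMap ℚ L N ≠ 0 := (_root_.map_ne_zero _).2 hN
    rw [aeval_eq_of_natDegree_le_one ((le_max_left _ _).trans_eq hdeg),
      aeval_eq_of_natDegree_le_one ((le_max_right _ _).trans_eq hdeg), hcast, hcast, hcast, hcast,
      hs, ht, hu, hv, ← mul_div_mul_left _ _ hNL]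
    simp only [map_mul, mul_add, mul_assoc]

end Moebius

section Gap

variable {P Q : ℚ[X]} {α β μ C₀ : ℝ}

lemma IsMinimalRepresentation.isTheta_aeval_div_sub (h : IsMinimalRepresentation α β P Q)
    (hα : IsIntegral ℚ α) (hβ : β ∈ Algebra.adjoin ℚ {α}) (hβirr : Irrational β) :
    (fun t : ℝ ↦ aeval t P / aeval t Q - β) =Θ[𝓝 α] (· - α) := by
  have hQ := h.aeval_denom_ne_zero hα hβ
  have hderiv := h.aeval_derivative_ne (h.max_natDegree_pos hα hβ hβirr)
  have hθ := (h.hasDerivAt_aeval_div hQ).isTheta_sub (div_ne_zero (sub_ne_zero.2 hderiv) hQ)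
  rw [prod_pure] at hθ
  simpa [IsTheta, isBigO_map, Function.comp_def, h.aeval_div_eq hQ] using hθ

lemma exists_rpow_lt_of_ne_eval_div
    (h : (fun t : ℝ ↦ aeval t P / aeval t Q - β) =O[𝓝 α] (· - α)) (hμ : 0 < μ) (hC₀ : 0 < C₀) :
    ∃ C > 0, ∀ᶠ z : ℚ in comap mulHeight₁ atTop, ∀ w : ℚ, mulHeight₁ z ≤ mulHeight₁ w →
      |α - z| < C₀ / mulHeight₁ z ^ μ → |β - w| < C₀ / mulHeight₁ w ^ μ →
      w ≠ P.eval z / Q.eval z →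
      mulHeight₁ z ^ (μ - (max P.natDegree Q.natDegree : ℕ)) < C * mulHeight₁ w := by
  obtain ⟨C, hC, hgap⟩ := exists_one_le_of_ne_eval_div h
  refine ⟨2 * C * C₀, by positivity, ?_⟩
  filter_upwards [eventually_of_abs_sub_lt hμ C₀ hgap] with z hnear w hle hz hw hne
  set r := max P.natDegree Q.natDegree
  have hH := mulHeight₁_pos z
  have hw' : |β - w| < C₀ / mulHeight₁ z ^ μ := hw.trans_le (by gcongr)
  rw [← one_lt_div (by positivity)]
  calc 1 ≤ C * (|α - z| + |β - w|) * mulHeight₁ w * mulHeight₁ z ^ r := hnear hz w hne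
    _ < C * (C₀ / mulHeight₁ z ^ μ + C₀ / mulHeight₁ z ^ μ) * mulHeight₁ w *
          mulHeight₁ z ^ r := by gcongr
    _ = 2 * C * C₀ * mulHeight₁ w / mulHeight₁ z ^ (μ - r) := by
      rw [Real.rpow_sub hH, Real.rpow_natCast]
      field_simp
      ring

lemma IsMinimalRepresentation.eventually_ne_eval_div (h : IsMinimalRepresentation α β P Q)
    (hα : IsIntegral ℚ α) (hβ : β ∈ Algebra.adjoin ℚ {α}) (hβirr : Irrational β)
    (hr : 2 ≤ max P.natDegree Q.natDegree) (hC₀ : 0 < C₀)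
    (hμr : (minpoly ℚ α).natDegree < (max P.natDegree Q.natDegree : ℕ) * μ) :
    ∀ᶠ z : ℚ in comap mulHeight₁ atTop, ∀ w : ℚ,
      |α - z| < C₀ / mulHeight₁ z ^ μ → |β - w| < C₀ / mulHeight₁ w ^ μ →
      w ≠ P.eval z / Q.eval z := by
  have hμ : 0 < μ :=
    pos_of_mul_pos_right ((Nat.cast_nonneg _).trans_lt hμr) (Nat.cast_nonneg _)
  have hrd := h.two_mul_max_natDegree_le hα hβ
  obtain ⟨K, hK, hφ⟩ := (h.isTheta_aeval_div_sub hα hβ hβirr).2.exists_pos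
  obtain ⟨L, hL, hliouville⟩ := exists_liouville_bound hα (by lia)
  obtain ⟨c, hc, hheight⟩ := exists_le_mulHeight₁_eval_div (h.isCoprime hα hβ)
  set r := max P.natDegree Q.natDegree
  set d := (minpoly ℚ α).natDegree
  filter_upwards [eventually_of_abs_sub_lt hμ C₀ (hliouville.and (hφ.bound.comap _)),
    ((tendsto_rpow_atTop (sub_pos.2 hμr)).eventually_ge_atTop (L * K * C₀ / c ^ μ)).comap _]
    with z hnear hlarge w hz hw hwz
  obtain ⟨hone, hdist⟩ := hnear hz
  rw [← ratCast_eval_div, ← hwz, Real.norm_eq_abs, Real.norm_eq_abs, abs_sub_comm,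
    abs_sub_comm _ β] at hdist
  have hH := mulHeight₁_pos z
  have hwH : c * mulHeight₁ z ^ r ≤ mulHeight₁ w := hwz ▸ hheight z
  refine lt_irrefl (1 : ℝ) ?_
  calc 1 ≤ L * |α - z| * mulHeight₁ z ^ d := hone
    _ ≤ L * (K * |β - w|) * mulHeight₁ z ^ d := by gcongr
    _ < L * (K * (C₀ / mulHeight₁ w ^ μ)) * mulHeight₁ z ^ d := by gcongr
    _ ≤ L * (K * (C₀ / (c * mulHeight₁ z ^ r) ^ μ)) * mulHeight₁ z ^ d := by gcongr
    _ = L * K * C₀ / c ^ μ / mulHeight₁ z ^ (r * μ - d) := by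
      rw [Real.mul_rpow hc.le (by positivity), ← Real.rpow_natCast_mul hH.le, Real.rpow_sub hH,
        Real.rpow_natCast]
      field_simp
    _ ≤ 1 := div_le_one_of_le₀ hlarge (by positivity)

lemma exists_rpow_lt_or_moebius (hα : IsIntegral ℚ α) (hβ : β ∈ Algebra.adjoin ℚ {α})
    (hβirr : Irrational β) (hμ : ((minpoly ℚ α).natDegree : ℝ) / 2 < μ) (hC₀ : 0 < C₀) :
    ∃ C > 0, ∀ᶠ z : ℚ in comap mulHeight₁ atTop, ∀ w : ℚ, mulHeight₁ z ≤ mulHeight₁ w →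
      |α - z| < C₀ / mulHeight₁ z ^ μ → |β - w| < C₀ / mulHeight₁ w ^ μ →
      mulHeight₁ z ^ (μ - ((minpoly ℚ α).natDegree : ℝ) / 2) < C * mulHeight₁ w ∨
        ∃ s t u v : ℤ, s * v - t * u ≠ 0 ∧ β = (s * α + t) / (u * α + v) ∧
          w = (s * z + t) / (u * z + v) := by
  obtain ⟨_, _, hrep, -⟩ := exists_represents_natDegree_le hα hβ
  obtain ⟨P, Q, h⟩ := hrep.exists_isMinimalRepresentation
  have hμ₀ : 0 < μ := lt_of_le_of_lt (by positivity) hμ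
  have hrd : (2 : ℝ) * (max P.natDegree Q.natDegree : ℕ) ≤ (minpoly ℚ α).natDegree := by
    exact_mod_cast h.two_mul_max_natDegree_le hα hβ
  have hexp (z : ℚ) : mulHeight₁ z ^ (μ - ((minpoly ℚ α).natDegree : ℝ) / 2) ≤
      mulHeight₁ z ^ (μ - (max P.natDegree Q.natDegree : ℕ)) :=
    Real.rpow_le_rpow_of_exponent_le (one_le_mulHeight₁ z) (by linarith)
  obtain ⟨C, hC, hgap⟩ :=
    exists_rpow_lt_of_ne_eval_div (h.isTheta_aeval_div_sub hα hβ hβirr).isBigO hμ₀ hC₀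
  refine ⟨C, hC, ?_⟩
  rcases (Nat.succ_le_of_lt (h.max_natDegree_pos hα hβ hβirr)).eq_or_lt with hr | hr
  · obtain ⟨s, t, u, v, hdet, hmoebius⟩ := exists_int_moebius (L := ℝ) (h.isCoprime hα hβ) hr.symm
    filter_upwards [hgap] with z hz w hle hzα hwβ
    by_cases hw : w = P.eval z / Q.eval z
    · refine .inr ⟨s, t, u, v, hdet, ?_, ?_⟩
      · rw [← hmoebius, h.aeval_div_eq (h.aeval_denom_ne_zero hα hβ)]
      · rw [← Rat.cast_inj (α := ℝ), hw, ratCast_eval_div, hmoebius]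
        push_cast
        rfl
    · exact .inl ((hexp z).trans_lt (hz w hle hzα hwβ hw))
  · have hμr : (minpoly ℚ α).natDegree < (max P.natDegree Q.natDegree : ℕ) * μ := by
      have : (2 : ℝ) ≤ (max P.natDegree Q.natDegree : ℕ) := by exact_mod_cast hr
      nlinarith
    filter_upwards [hgap, h.eventually_ne_eval_div hα hβ hβirr hr hC₀ hμr]
      with z hz hne w hle hzα hwβ
    exact .inl ((hexp z).trans_lt (hz w hle hzα hwβ (hne w hzα hwβ)))

end Gap

theorem generalized_archimedean_gap_principle_general {α β μ C₀ : ℝ} (hα : IsAlgebraic ℚ α)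
    (hβmem : β ∈ Algebra.adjoin ℚ {α}) (hβirr : Irrational β)
    (hμ : ((minpoly ℚ α).natDegree : ℝ) / 2 < μ) (hC₀ : 0 < C₀) :
    ∃ C₁ C₂ : ℝ, 0 < C₁ ∧ 0 < C₂ ∧
      ∀ x₁ y₁ x₂ y₂ : ℤ, 0 < y₁ → 0 < y₂ → IsCoprime x₁ y₁ → IsCoprime x₂ y₂ →
        C₁ ≤ ratHeight x₁ y₁ → ratHeight x₁ y₁ ≤ ratHeight x₂ y₂ →
        |α - (x₁ : ℝ) / (y₁ : ℝ)| < C₀ / ratHeight x₁ y₁ ^ μ →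
        |β - (x₂ : ℝ) / (y₂ : ℝ)| < C₀ / ratHeight x₂ y₂ ^ μ →
        (C₂⁻¹ * ratHeight x₁ y₁ ^ (μ - ((minpoly ℚ α).natDegree : ℝ) / 2) < ratHeight x₂ y₂ ∨
          ∃ s t u v : ℤ, s * v - t * u ≠ 0 ∧
            β = ((s : ℝ) * α + (t : ℝ)) / ((u : ℝ) * α + (v : ℝ)) ∧
            (x₂ : ℚ) / (y₂ : ℚ) =
              ((s * x₁ + t * y₁ : ℤ) : ℚ) / ((u * x₁ + v * y₁ : ℤ) : ℚ)) := by
  obtain ⟨C₂, hC₂, hgap⟩ := exists_rpow_lt_or_moebius hα.isIntegral hβmem hβirr hμ hC₀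
  obtain ⟨C₁, -, hC₁⟩ := (atTop_basis.comap _).eventually_iff.1 hgap
  refine ⟨max 1 C₁, C₂, by positivity, hC₂, ?_⟩
  intro x₁ y₁ x₂ y₂ hy₁ hy₂ hxy₁ hxy₂ hlarge hle hx₁ hx₂
  rw [ratHeight_eq_mulHeight₁ hy₁ hxy₁] at hlarge hle hx₁ ⊢
  rw [ratHeight_eq_mulHeight₁ hy₂ hxy₂] at hle hx₂ ⊢
  rcases hC₁ ((le_max_right _ _).trans hlarge) (x₂ / y₂) hle (by exact_mod_cast hx₁)
    (by exact_mod_cast hx₂) with hlt | ⟨s, t, u, v, hdet, hβ, hw⟩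
  · exact .inl ((inv_mul_lt_iff₀ hC₂).2 hlt)
  · refine .inr ⟨s, t, u, v, hdet, hβ, ?_⟩
    have hy₁' : (y₁ : ℚ) ≠ 0 := by exact_mod_cast hy₁.ne'
    rw [hw, ← mul_div_mul_right _ _ hy₁']
    push_cast
    field_simp

/-- **A generalized Archimedean gap principle.** Let `α` be a real algebraic number of
degree `d ≥ 3` over `ℚ` and let `β ∈ ℚ(α)` be irrational. Let `μ` be a real number with
`d/2 + 1 < μ < d` and let `C₀ > 0`. Then there exist positive reals `C₁`, `C₂`
(depending only on `α`, `β`, `μ`, `C₀`) such that: if `x₁/y₁` and `x₂/y₂` are rationals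
in lowest terms with `H(x₂,y₂) ≥ H(x₁,y₁) ≥ C₁`, `|α − x₁/y₁| < C₀/H(x₁,y₁)^μ` and
`|β − x₂/y₂| < C₀/H(x₂,y₂)^μ`, then either `H(x₂,y₂) > C₂⁻¹·H(x₁,y₁)^(μ−d/2)`, or there
are integers `s, t, u, v` with `s·v − t·u ≠ 0` such that `β = (sα+t)/(uα+v)` and
`x₂/y₂ = (s·x₁+t·y₁)/(u·x₁+v·y₁)`. -/
theorem generalized_archimedean_gap_principle
    (d : ℕ) (hd : 3 ≤ d) (α : ℝ) (hα : IsAlgebraic ℚ α)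
    (hdeg : (minpoly ℚ α).natDegree = d)
    (β : ℝ) (hβmem : β ∈ Algebra.adjoin ℚ {α}) (hβirr : Irrational β)
    (μ C₀ : ℝ) (hμ₁ : (d : ℝ) / 2 + 1 < μ) (hμ₂ : μ < d) (hC₀ : 0 < C₀) :
    ∃ C₁ C₂ : ℝ, 0 < C₁ ∧ 0 < C₂ ∧
      ∀ x₁ y₁ x₂ y₂ : ℤ, 0 < y₁ → 0 < y₂ → IsCoprime x₁ y₁ → IsCoprime x₂ y₂ →
        C₁ ≤ ratHeight x₁ y₁ → ratHeight x₁ y₁ ≤ ratHeight x₂ y₂ →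
        |α - (x₁ : ℝ) / (y₁ : ℝ)| < C₀ / ratHeight x₁ y₁ ^ μ →
        |β - (x₂ : ℝ) / (y₂ : ℝ)| < C₀ / ratHeight x₂ y₂ ^ μ →
        (C₂⁻¹ * ratHeight x₁ y₁ ^ (μ - (d : ℝ) / 2) < ratHeight x₂ y₂ ∨
          ∃ s t u v : ℤ, s * v - t * u ≠ 0 ∧
            β = ((s : ℝ) * α + (t : ℝ)) / ((u : ℝ) * α + (v : ℝ)) ∧
            (x₂ : ℚ) / (y₂ : ℚ) =
              ((s * x₁ + t * y₁ : ℤ) : ℚ) / ((u * x₁ + v * y₁ : ℤ) : ℚ)) := by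
  subst hdeg
  exact generalized_archimedean_gap_principle_general hα hβmem hβirr (by linarith) hC₀
end

section
/- Let p be a rational prime, let α ∈ ℚ_p be a p-adic algebraic number of degree d ≥ 3 over ℚ, and let β ∈ ℚ(α) be irrational. Let μ be a real number with d/2 + 1 < μ < d and let C₀ > 0. Then there exist positive real numbers C₃ and C₄ (depending only on α, β, μ and C₀) with the following property: if x₁/y₁ and x₂/y₂ are rational numbers in lowest terms with H(x₂,y₂) ≥ H(x₁,y₁) ≥ C₃, |y₁α − x₁|_p < C₀/H(x₁,y₁)^μ and |y₂β − x₂|_p < C₀/H(x₂,y₂)^μ, then either H(x₂,y₂) > C₄⁻¹ · H(x₁,y₁)^{μ − d/2}, or there exist integers s, t, u, v with sv − tu ≠ 0 such that β = (sα + t)/(uα + v) and x₂/y₂ = (s x₁ + t y₁)/(u x₁ + v y₁). -/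
/-!
Write `β = P(α) / Q(α)` with `P`, `Q` integral and `k = max (deg P) (deg Q)` minimal. A dimension
count gives `2 * k ≤ d`, and minimality makes `P` and `Q` coprime and `α` a simple zero of
`P - β * Q`. Let `a`, `b` be the values at `(x₁, y₁)` of the homogenizations of `P`, `Q`, and let
`Hᵢ` be the heights and `δᵢ` the `p`-adic approximation errors of the two fractions. The integer
`N = a * y₂ - b * x₂` has `|N| ≪ H₁ ^ k * H₂` and `p`-adic norm `‖N‖ ≪ max δ₁ δ₂`.

* If `N ≠ 0`, then `1 ≤ |N| * ‖N‖` yields `H₂ ≫ H₁ ^ (μ - k)`.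
* If `N = 0` and `k = 1`, then `P / Q` is the required fractional linear map.
* If `N = 0` and `k ≥ 2`, then `a / b = x₂ / y₂`, and coprimality of `P`, `Q` gives `H₂ ≫ H₁ ^ k`.
  Since `α` is a simple zero, `δ₁ ≪ δ₂ ≪ H₁ ^ (-k * μ)`, while Liouville's inequality gives
  `δ₁ ≫ H₁ ^ (-d)`. As `k * μ > d`, this bounds `H₁`.
-/

open Asymptotics Filter Polynomial Topology

lemma ciSup_fin_two {α : Type*} [ConditionallyCompleteLattice α] (f : Fin 2 → α) :
    ⨆ i, f i = f 0 ⊔ f 1 :=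
  le_antisymm (ciSup_le fun i ↦ by fin_cases i <;> simp)
    (sup_le (Finite.le_ciSup f 0) (Finite.le_ciSup f 1))

lemma mulHeight_eq_ratHeight {x y : ℤ} (hxy : IsCoprime x y) :
    Height.mulHeight ![(x : ℚ), (y : ℚ)] = ratHeight x y := by
  have hgcd : Finset.univ.gcd ![x, y] = 1 := by
    simpa [Finset.univ_fin2, ← Int.coe_gcd, Int.gcd_def, ← Int.abs_eq_normalize, Int.natAbs_abs]
      using Int.isCoprime_iff_gcd_eq_one.mp hxy
  have hcast : ![(x : ℚ), (y : ℚ)] = ((↑) : ℤ → ℚ) ∘ ![x, y] := by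
    ext i; fin_cases i <;> rfl
  rw [hcast, Rat.mulHeight_eq_max_abs_of_gcd_eq_one hgcd, ciSup_fin_two, ratHeight]
  push_cast
  rfl

lemma one_le_ratHeight {x y : ℤ} (hxy : IsCoprime x y) : 1 ≤ ratHeight x y :=
  mulHeight_eq_ratHeight hxy ▸ Height.one_le_mulHeight _

/-- The value at `(x, y)` of the homogenization of degree `k` of `P`, which is `y ^ k * P (x / y)`
when `y` is invertible and `k` is at least the degree of `P`. -/
noncomputable def homEval {R : Type*} [CommSemiring R] (P : R[X]) (k : ℕ) (x y : R) : R :=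
  MvPolynomial.eval ![x, y] (P.homogenize k)

namespace homEval

lemma map {R S : Type*} [CommSemiring R] [CommSemiring S] (f : R →+* S) (P : R[X]) (k : ℕ)
    (x y : R) : homEval (P.map f) k (f x) (f y) = f (homEval P k x y) := by
  have hcast : ![f x, f y] = f ∘ ![x, y] := by ext i; fin_cases i <;> rfl
  rw [homEval, homEval, homogenize_map, hcast, MvPolynomial.eval_map, MvPolynomial.eval₂_comp]

lemma mul {R : Type*} [CommSemiring R] {P Q : R[X]} {k l : ℕ} (hP : P.natDegree ≤ k)
    (hQ : Q.natDegree ≤ l) (x y : R) :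
    homEval (P * Q) (k + l) x y = homEval P k x y * homEval Q l x y := by
  simp only [homEval, homogenize_mul _ _ hP hQ, map_mul]

lemma eq_eval_div_mul_pow {F : Type*} [Field F] {P : F[X]} {k : ℕ} (hP : P.natDegree ≤ k)
    (x : F) {y : F} (hy : y ≠ 0) : homEval P k x y = P.eval (x / y) * y ^ k :=
  eval_homogenize hP _ hy

lemma eq_of_natDegree_le_one {R : Type*} [CommSemiring R] {P : R[X]} (hP : P.natDegree ≤ 1)
    (x y : R) : homEval P 1 x y = P.coeff 1 * x + P.coeff 0 * y := by
  obtain ⟨a, b, rfl⟩ := exists_eq_X_add_C_of_natDegree_le_one hP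
  simp [homEval]

lemma exists_abs_le (P : ℤ[X]) (k : ℕ) :
    ∃ C > 0, ∀ x y : ℤ, |((homEval P k x y : ℤ) : ℝ)| ≤ C * ratHeight x y ^ k := by
  obtain ⟨C, hC⟩ : ∃ C : ℝ, ∀ x y : ℤ,
      |((homEval P k x y : ℤ) : ℝ)| ≤ C * ratHeight x y ^ k := by
    refine ⟨(AddMonoidAlgebra.coeff ((P.map (Int.castRingHom ℝ)).homogenize k)).sum fun _ c ↦ |c|,
      fun x y ↦ ?_⟩
    have h := AbsoluteValue.abs.eval_mvPolynomial_le
      (isHomogeneous_homogenize (n := k) (P.map (Int.castRingHom ℝ))) ![(x : ℝ), (y : ℝ)]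
    rw [ciSup_fin_two] at h
    exact (congrArg abs (homEval.map (Int.castRingHom ℝ) P k x y).symm).trans_le h
  refine ⟨max C 1, by positivity, fun x y ↦ (hC x y).trans ?_⟩
  have : 0 ≤ ratHeight x y := le_max_of_le_left (abs_nonneg _)
  gcongr
  exact le_max_left _ _

end homEval

lemma exists_mul_add_mul_eq_of_natDegree_le {F : Type*} [Field F] {P Q T : F[X]} {k : ℕ}
    (hPQ : IsCoprime P Q) (hk : max P.natDegree Q.natDegree = k) (hT : T.natDegree ≤ k + k) :
    ∃ U V : F[X], U.natDegree ≤ k ∧ V.natDegree ≤ k ∧ U * P + V * Q = T := by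
  wlog hP : P ≠ 0 ∧ P.natDegree = k generalizing P Q
  · have hQ : Q ≠ 0 ∧ Q.natDegree = k := by
      rcases eq_or_ne P 0 with rfl | hP₀
      · exact ⟨(isCoprime_zero_left.mp hPQ).ne_zero, by simpa using hk⟩
      · have hPk : P.natDegree ≠ k := fun h ↦ hP ⟨hP₀, h⟩
        have hQk : Q.natDegree = k := by lia
        exact ⟨fun hQ₀ ↦ hPk (by simp_all), hQk⟩
    obtain ⟨V, U, hV, hU, h⟩ := this hPQ.symm (max_comm P.natDegree _ ▸ hk) hQ
    exact ⟨U, V, hU, hV, add_comm (V * Q) _ ▸ h⟩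
  obtain ⟨A, B, hAB⟩ := hPQ
  set V := B * T % P
  set U := A * T + B * T / P * Q
  have hUV : U * P + V * Q = T := by
    linear_combination T * hAB + Q * EuclideanDomain.mod_add_div (B * T) P
  have hV : V.natDegree ≤ k := by
    have := natDegree_le_natDegree (degree_mod_lt (B * T) hP.1).le
    rwa [hP.2] at this
  refine ⟨U, V, ?_, hV, hUV⟩
  have hUP : (U * P).natDegree ≤ k + k := by
    rw [eq_sub_of_add_eq hUV, ← max_self (k + k)]
    exact natDegree_sub_le_of_le hT (natDegree_mul_le_of_le hV (hk ▸ le_max_right _ _))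
  rcases eq_or_ne U 0 with hU | hU
  · simp [hU]
  · rw [natDegree_mul hU hP.1] at hUP
    lia

open Height in
lemma exists_mul_mulHeight_pow_le {F : Type*} [Field F] [AdmissibleAbsValues F] {P Q : F[X]}
    {k : ℕ} (hPQ : IsCoprime P Q) (hk : max P.natDegree Q.natDegree = k) :
    ∃ c > 0, ∀ x y : F,
      c * mulHeight ![x, y] ^ k ≤ mulHeight ![homEval P k x y, homEval Q k x y] := by
  have hP : P.natDegree ≤ k := hk ▸ le_max_left _ _
  have hQ : Q.natDegree ≤ k := hk ▸ le_max_right _ _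
  -- Homogenized, the two Bézout identities express `x ^ (2 * k)` and `y ^ (2 * k)` through the
  -- values of `P` and `Q`, which therefore share only bounded factors.
  obtain ⟨U, V, hU, hV, hUV⟩ :=
    exists_mul_add_mul_eq_of_natDegree_le (T := X ^ (k + k)) hPQ hk (natDegree_X_pow_le _)
  obtain ⟨U', V', hU', hV', hUV'⟩ :=
    exists_mul_add_mul_eq_of_natDegree_le (T := 1) hPQ hk (by simp)
  have key {A B : F[X]} (hA : A.natDegree ≤ k) (hB : B.natDegree ≤ k) (x y : F) :
      homEval (A * P + B * Q) (k + k) x y =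
        homEval A k x y * homEval P k x y + homEval B k x y * homEval Q k x y := by
    rw [← homEval.mul hA hP, ← homEval.mul hB hQ]
    simp only [homEval, homogenize_add, map_add]
  obtain ⟨c, hc, h⟩ := mulHeight_eval_ge' (M := k) (N := k)
    (q := fun i : Fin 2 × Fin 2 ↦ (![![U, V], ![U', V']] i.1 i.2).homogenize k)
    fun _ ↦ isHomogeneous_homogenize _
  refine ⟨c, hc, fun x y ↦ ?_⟩
  have h' := h ![P.homogenize k, Q.homogenize k] (x := ![x, y]) ?_
  · convert! h' using 2
    ext i; fin_cases i <;> rfl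
  · intro i
    rw [Fin.sum_univ_two]
    fin_cases i
    · simpa [homEval, hUV] using (key hU hV x y).symm
    · simpa [homEval, hUV'] using (key hU' hV' x y).symm

lemma aeval_of_natDegree_le_one {R A : Type*} [CommSemiring R] [Semiring A] [Algebra R A]
    {P : R[X]} (hP : P.natDegree ≤ 1) (x : A) :
    aeval x P = algebraMap R A (P.coeff 1) * x + algebraMap R A (P.coeff 0) := by
  conv_lhs => rw [eq_X_add_C_of_natDegree_le_one hP]
  simp

section Representations

variable {F L : Type*} [Field F] [Field L] [Algebra F L] {α β : L} {P Q : F[X]}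

/-- `P / Q` represents `β` as a rational function of `α`. -/
structure Represents_s1 (α β : L) (P Q : F[X]) : Prop where
  aeval_ne_zero : aeval α Q ≠ 0
  aeval_eq : aeval α P = β * aeval α Q

/-- `P / Q` represents `β` as a rational function of `α` and `max (deg P) (deg Q)` is as small as
possible, which forces `P` and `Q` to be coprime. -/
structure MinimallyRepresents (α β : L) (P Q : F[X]) : Prop extends Represents_s1 α β P Q where
  le_of_represents : ∀ {P' Q' : F[X]}, Represents_s1 α β P' Q' →
    max P.natDegree Q.natDegree ≤ max P'.natDegree Q'.natDegree

lemma Represents_s1.notMem_range (h : Represents_s1 α β P Q) (hβ : β ∉ (algebraMap F L).range) :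
    α ∉ (algebraMap F L).range := by
  rintro ⟨a, rfl⟩
  obtain ⟨hQ, hPQ⟩ := h
  simp only [aeval_algebraMap_apply_eq_algebraMap_eval] at hQ hPQ
  exact hβ ⟨P.eval a / Q.eval a, by rw [map_div₀, hPQ, mul_div_cancel_right₀ _ hQ]⟩

lemma Represents_s1.of_natDegree_lt (hne : P ≠ 0 ∨ Q ≠ 0) (hP : P.natDegree < (minpoly F α).natDegree)
    (hQ : Q.natDegree < (minpoly F α).natDegree) (h : aeval α P = β * aeval α Q) :
    Represents_s1 α β P Q := by
  have eq_zero {W : F[X]} (hW : W.natDegree < (minpoly F α).natDegree) (hWα : aeval α W = 0) :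
      W = 0 := by
    by_contra hW₀
    exact hW.not_ge (natDegree_le_natDegree (minpoly.degree_le_of_ne_zero F α hW₀ hWα))
  refine ⟨fun hQα ↦ ?_, h⟩
  have hPα : aeval α P = 0 := by rw [h, hQα, mul_zero]
  exact hne.elim (· (eq_zero hP hPα)) (· (eq_zero hQ hQα))

lemma exists_represents_of_mem_adjoin (hα : IsAlgebraic F α) (hβ : β ∈ Algebra.adjoin F {α}) :
    ∃ P Q : F[X], Represents_s1 α β P Q ∧
      2 * max P.natDegree Q.natDegree ≤ (minpoly F α).natDegree := by
  set d := (minpoly F α).natDegree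
  have hd_pos : 0 < d := minpoly.natDegree_pos hα.isIntegral
  let pb := Algebra.adjoin.powerBasis hα.isIntegral
  have : Module.Finite F (Algebra.adjoin F {α}) := pb.finite
  let a : Algebra.adjoin F {α} := ⟨α, Algebra.subset_adjoin rfl⟩
  let b : Algebra.adjoin F {α} := ⟨β, hβ⟩
  let V := degreeLT F (d / 2 + 1)
  let g : F[X] × F[X] →ₗ[F] Algebra.adjoin F {α} :=
    (aeval a).toLinearMap.coprod (-(LinearMap.mulLeft F b ∘ₗ (aeval a).toLinearMap))
  have hV : Module.finrank F V = d / 2 + 1 := by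
    rw [(degreeLTEquiv F _).finrank_eq, Module.finrank_fin_fun]
  have : Module.Finite F V := Module.finite_of_finrank_pos (by lia)
  obtain ⟨⟨P, Q⟩, hPQ, hne⟩ : ∃ w ∈ LinearMap.ker (g ∘ₗ V.subtype.prodMap V.subtype), w ≠ 0 := by
    refine (Submodule.ne_bot_iff _).mp (LinearMap.ker_ne_bot_of_finrank_lt ?_)
    rw [pb.finrank, Algebra.adjoin.powerBasis_dim, Module.finrank_prod, hV]
    lia
  have hdeg (W : V) : (W : F[X]).natDegree ≤ d / 2 :=
    natDegree_le_of_degree_le (mem_degreeLE.mp (degreeLT_succ_eq_degreeLE (R := F) ▸ W.2))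
  have hrel : aeval α (P : F[X]) = β * aeval α (Q : F[X]) := by
    have h : aeval a (P : F[X]) + -(b * aeval a (Q : F[X])) = 0 := by simpa [g] using hPQ
    simpa [← aeval_algHom_apply, a, b, ← sub_eq_add_neg, sub_eq_zero]
      using congrArg (Algebra.adjoin F {α}).val h
  have hP := hdeg P
  have hQ := hdeg Q
  refine ⟨P, Q, .of_natDegree_lt ?_ (by lia) (by lia) hrel, by lia⟩
  contrapose! hne
  ext <;> simp [hne]

lemma exists_minimallyRepresents (hα : IsAlgebraic F α) (hβ : β ∈ Algebra.adjoin F {α}) :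
    ∃ P Q : F[X], MinimallyRepresents α β P Q ∧
      2 * max P.natDegree Q.natDegree ≤ (minpoly F α).natDegree := by
  obtain ⟨P₀, Q₀, h₀, hdeg⟩ := exists_represents_of_mem_adjoin hα hβ
  obtain ⟨⟨P, Q⟩, hPQ, hmin⟩ := exists_minimalFor_of_wellFoundedLT
    (fun w : F[X] × F[X] ↦ Represents_s1 α β w.1 w.2) (fun w ↦ max w.1.natDegree w.2.natDegree)
    ⟨(P₀, Q₀), h₀⟩
  have hle (P' Q' : F[X]) (h : Represents_s1 α β P' Q') :
      max P.natDegree Q.natDegree ≤ max P'.natDegree Q'.natDegree :=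
    (le_total _ _).elim id (hmin (j := (P', Q')) h)
  exact ⟨P, Q, ⟨hPQ, hle _ _⟩, by grw [hle _ _ h₀, hdeg]⟩

namespace MinimallyRepresents

lemma C_mul (h : MinimallyRepresents α β P Q) {r : F} (hr : r ≠ 0) :
    MinimallyRepresents α β (C r * P) (C r * Q) := by
  have hr' : algebraMap F L r ≠ 0 := by simpa
  refine ⟨⟨by simp [hr', h.aeval_ne_zero], ?_⟩, ?_⟩
  · simp only [map_mul, aeval_C, h.aeval_eq]
    ring
  · intro P' Q' h'
    simpa only [natDegree_C_mul hr] using h.le_of_represents h'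

lemma isCoprime (h : MinimallyRepresents α β P Q) : IsCoprime P Q := by
  have hQ₀ : Q ≠ 0 := by
    rintro rfl
    simpa using h.aeval_ne_zero
  refine isCoprime_of_dvd _ _ (fun h₀ ↦ hQ₀ h₀.2) ?_
  rintro G hG hG₀ ⟨P', rfl⟩ ⟨Q', rfl⟩
  have hGα : aeval α G ≠ 0 := fun hGα ↦ h.aeval_ne_zero (by simp [hGα])
  have hrep : Represents_s1 α β P' Q' := by
    refine ⟨fun hQα ↦ h.aeval_ne_zero (by simp [hQα]), mul_left_cancel₀ hGα ?_⟩
    linear_combination (by simpa using h.aeval_eq : aeval α G * aeval α P' = _)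
  have hG_pos : 0 < G.natDegree :=
    natDegree_pos_iff_degree_pos.mpr (degree_pos_of_ne_zero_of_nonunit hG₀ hG)
  have hle := h.le_of_represents hrep
  rw [natDegree_mul hG₀ (right_ne_zero_of_mul hQ₀)] at hle
  rcases eq_or_ne P' 0 with rfl | hP'
  · simp only [mul_zero, natDegree_zero] at hle
    lia
  · rw [natDegree_mul hG₀ hP'] at hle
    lia

lemma max_natDegree_pos (h : MinimallyRepresents α β P Q) (hβ : β ∉ (algebraMap F L).range) :
    0 < max P.natDegree Q.natDegree := by
  by_contra! hk
  rw [eq_C_of_natDegree_eq_zero (p := P) (by lia), eq_C_of_natDegree_eq_zero (p := Q) (by lia)] at h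
  have hQ := h.aeval_ne_zero
  have hPQ := h.aeval_eq
  rw [aeval_C] at hQ
  rw [aeval_C, aeval_C] at hPQ
  exact hβ ⟨P.coeff 0 / Q.coeff 0, by rw [map_div₀, hPQ, mul_div_cancel_right₀ _ hQ]⟩

/-- Otherwise `P' / Q'` would represent `β` in smaller degree. -/
lemma aeval_derivative_ne [CharZero F] (h : MinimallyRepresents α β P Q)
    (hβ : β ∉ (algebraMap F L).range)
    (hdeg : max P.natDegree Q.natDegree ≤ (minpoly F α).natDegree) :
    aeval α (derivative P) ≠ β * aeval α (derivative Q) := by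
  intro hder
  have hk := h.max_natDegree_pos hβ
  have hP := natDegree_derivative P
  have hQ := natDegree_derivative Q
  have hne : derivative P ≠ 0 ∨ derivative Q ≠ 0 := by
    by_contra! h₀
    simp only [derivative_eq_zero] at h₀
    lia
  have hrep := Represents_s1.of_natDegree_lt hne (by lia) (by lia) hder
  have := h.le_of_represents hrep
  lia

lemma mul_sub_mul_ne_zero (h : MinimallyRepresents α β P Q) (hβ : β ∉ (algebraMap F L).range)
    (hk : max P.natDegree Q.natDegree = 1) :
    P.coeff 1 * Q.coeff 0 - P.coeff 0 * Q.coeff 1 ≠ 0 := by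
  have hP := aeval_of_natDegree_le_one (hk ▸ le_max_left P.natDegree _) α
  have hQ := aeval_of_natDegree_le_one (hk ▸ le_max_right _ Q.natDegree) α
  have hPQ := h.aeval_eq
  have hQα := h.aeval_ne_zero
  intro hdet
  have hβ_eq : algebraMap F L (Q.coeff 1) * β = algebraMap F L (P.coeff 1) := by
    refine mul_left_cancel₀ hQα ?_
    have hdet' := congrArg (algebraMap F L) hdet
    simp only [map_sub, map_mul, map_zero] at hdet'
    linear_combination -algebraMap F L (Q.coeff 1) * hPQ + algebraMap F L (Q.coeff 1) * hP -
      algebraMap F L (P.coeff 1) * hQ - hdet'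
  have hQ₁ : Q.coeff 1 = 0 := by
    by_contra hQ₁
    refine hβ ⟨P.coeff 1 / Q.coeff 1, ?_⟩
    rw [map_div₀, ← hβ_eq, mul_div_cancel_left₀ _ (by simpa)]
  have hP₁ : P.coeff 1 = 0 := by simpa [hQ₁] using hβ_eq.symm
  have hlc {W : F[X]} (hW : W.natDegree = 1) : W.coeff 1 ≠ 0 :=
    hW ▸ leadingCoeff_ne_zero.mpr (ne_zero_of_natDegree_gt (n := 0) (by lia))
  rcases max_choice P.natDegree Q.natDegree with hmax | hmax
  · exact hlc (hmax ▸ hk) hP₁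
  · exact hlc (hmax ▸ hk) hQ₁

end MinimallyRepresents

end Representations

section ApproxFilter

variable {K : Type*} [NontriviallyNormedField K]

/-- The reduced fraction `x / y` satisfies `‖y * α - x‖ < C₀ / H(x, y) ^ μ`. -/
def IsApprox (C₀ μ : ℝ) (α : K) (x y : ℤ) : Prop :=
  IsCoprime x y ∧ ‖(y : K) * α - x‖ < C₀ / ratHeight x y ^ μ

/-- The filter describing reduced fractions `x / y`, encoded as pairs `(x, y)`, whose height tends
to infinity while `‖y * α - x‖` tends to `0`. -/
noncomputable def approxFilter (α : K) : Filter (ℤ × ℤ) :=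
  comap (fun z ↦ ((z.2 : K) * α - z.1, ratHeight z.1 z.2)) (𝓝 0 ×ˢ atTop) ⊓
    𝓟 {z | IsCoprime z.1 z.2}

lemma eventually_isCoprime (α : K) : ∀ᶠ z in approxFilter α, IsCoprime z.1 z.2 :=
  mem_inf_of_right (mem_principal_self _)

lemma tendsto_mul_sub (α : K) :
    Tendsto (fun z : ℤ × ℤ ↦ (z.2 : K) * α - z.1) (approxFilter α) (𝓝 0) :=
  (tendsto_fst.comp tendsto_comap).mono_left inf_le_left

lemma tendsto_ratHeight (α : K) :
    Tendsto (fun z : ℤ × ℤ ↦ ratHeight z.1 z.2) (approxFilter α) atTop :=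
  (tendsto_snd.comp tendsto_comap).mono_left inf_le_left

lemma exists_forall_isApprox {C₀ μ : ℝ} (hμ : 0 < μ) {α : K} {p : ℤ × ℤ → Prop}
    (h : ∀ᶠ z in approxFilter α, p z) :
    ∃ C > 0, ∀ x y : ℤ, IsApprox C₀ μ α x y → C ≤ ratHeight x y → p (x, y) := by
  rw [approxFilter, eventually_inf_principal, eventually_comap,
    (Metric.nhds_basis_ball.prod atTop_basis).eventually_iff] at h
  obtain ⟨⟨ε, B⟩, ⟨hε, -⟩, h⟩ := h
  have hlim : Tendsto (fun H : ℝ ↦ C₀ / H ^ μ) atTop (𝓝 0) :=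
    tendsto_const_nhds.div_atTop (tendsto_rpow_atTop hμ)
  obtain ⟨C, hC⟩ := eventually_atTop.mp ((hlim.eventually_lt_const hε).and (eventually_ge_atTop B))
  refine ⟨max C 1, by positivity, fun x y hxy hH ↦ ?_⟩
  obtain ⟨hlt, hB⟩ := hC _ ((le_max_left _ _).trans hH)
  have hmem : ((y : K) * α - x, ratHeight x y) ∈ Metric.ball 0 ε ×ˢ Set.Ici B :=
    ⟨by simpa using hxy.2.trans hlt, hB⟩
  exact h hmem (x, y) rfl hxy.1

variable [IsUltrametricDist K]

lemma isTheta_snd_one (α : K) : (fun z : ℤ × ℤ ↦ (z.2 : K)) =Θ[approxFilter α] fun _ ↦ (1 : K) := by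
  refine ⟨.of_bound 1 (.of_forall fun z ↦ ?_), .of_bound (max 1 ‖α‖) ?_⟩
  · simpa using IsUltrametricDist.norm_intCast_le_one K z.2
  have hsmall : ∀ᶠ z in approxFilter α, ‖(z.2 : K) * α - z.1‖ < 1 := by
    simpa using (tendsto_mul_sub α).norm.eventually_lt_const (by simp : ‖(0 : K)‖ < 1)
  filter_upwards [hsmall, eventually_isCoprime α] with ⟨x, y⟩ hδ ⟨m, n, hmn⟩
  have hbezout : (m * α + n) * y + -m * (y * α - x) = (1 : K) := by
    have h : (m : K) * x + n * y = 1 := by exact_mod_cast congrArg (Int.cast (R := K)) hmn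
    linear_combination h
  have hm : ‖-(m : K) * (y * α - x)‖ < 1 := by
    rw [norm_mul, norm_neg]
    exact (mul_le_of_le_one_left (norm_nonneg _)
      (IsUltrametricDist.norm_intCast_le_one K m)).trans_lt hδ
  have hmax : 1 ≤ max ‖(m * α + n) * (y : K)‖ ‖-(m : K) * (y * α - x)‖ := by
    rw [← norm_one (α := K), ← hbezout]
    exact IsUltrametricDist.norm_add_le_max _ _
  have hle : 1 ≤ ‖(m * α + n) * (y : K)‖ := (le_max_iff.mp hmax).resolve_right hm.not_ge
  have hmn : ‖m * α + n‖ ≤ max 1 ‖α‖ := by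
    refine (IsUltrametricDist.norm_add_le_max _ _).trans ?_
    rw [norm_mul, max_comm]
    exact max_le_max (IsUltrametricDist.norm_intCast_le_one K n)
      (mul_le_of_le_one_left (norm_nonneg _) (IsUltrametricDist.norm_intCast_le_one K m))
  rw [norm_one]
  grw [hle, norm_mul, hmn]

lemma eventually_snd_ne_zero (α : K) : ∀ᶠ z in approxFilter α, (z.2 : K) ≠ 0 := by
  filter_upwards [(isTheta_snd_one α).eq_zero_iff] with z hz
  simp [hz]

lemma isTheta_div_sub (α : K) :
    (fun z : ℤ × ℤ ↦ (z.1 : K) / z.2 - α) =Θ[approxFilter α] fun z ↦ (z.2 : K) * α - z.1 := by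
  have h := (isTheta_refl (fun z : ℤ × ℤ ↦ (z.2 : K) * α - z.1) (approxFilter α)).div
    (isTheta_snd_one α)
  simp only [div_one] at h
  refine isTheta_norm_left.mp ((EventuallyEq.isTheta ?_).trans h.norm_left)
  filter_upwards [eventually_snd_ne_zero α] with z hz
  rw [sub_div, mul_div_cancel_left₀ _ hz, norm_sub_rev]

lemma tendsto_div_approxFilter (α : K) :
    Tendsto (fun z : ℤ × ℤ ↦ (z.1 : K) / z.2) (approxFilter α) (𝓝 α) :=
  tendsto_sub_nhds_zero_iff.mp ((isTheta_div_sub α).isBigO.trans_tendsto (tendsto_mul_sub α))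

lemma isTheta_homEval (α : K) {W : K[X]} {k : ℕ} (hW : W.natDegree ≤ k) :
    (fun z : ℤ × ℤ ↦ homEval W k (z.1 : K) z.2) =Θ[approxFilter α]
      fun z ↦ W.eval ((z.1 : K) / z.2) := by
  have h := (isTheta_refl (fun z : ℤ × ℤ ↦ W.eval ((z.1 : K) / z.2)) (approxFilter α)).mul
    ((isTheta_snd_one α).pow k)
  simp only [one_pow, mul_one] at h
  refine (EventuallyEq.isTheta ?_).trans h
  filter_upwards [eventually_snd_ne_zero α] with z hz
  exact homEval.eq_eval_div_mul_pow hW _ hz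

lemma isBigO_homEval {α : K} {W : K[X]} {k : ℕ} (hW : W.natDegree ≤ k) (hα : W.IsRoot α) :
    (fun z : ℤ × ℤ ↦ homEval W k (z.1 : K) z.2) =O[approxFilter α]
      fun z ↦ (z.2 : K) * α - z.1 := by
  have h := (W.hasDerivAt α).isBigO_sub.comp_tendsto (tendsto_div_approxFilter α)
  simp only [hα.eq_zero, sub_zero] at h
  exact (isTheta_homEval α hW).isBigO.trans (h.trans (isTheta_div_sub α).isBigO)

lemma isBigO_homEval_symm {α : K} {W : K[X]} {k : ℕ} (hW : W.natDegree ≤ k) (hα : W.IsRoot α)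
    (hα' : W.derivative.eval α ≠ 0) :
    (fun z : ℤ × ℤ ↦ (z.2 : K) * α - z.1) =O[approxFilter α]
      fun z ↦ homEval W k (z.1 : K) z.2 := by
  have h : (fun t ↦ t - α) =O[𝓝 α] fun t ↦ W.eval t := by
    simpa [hα.eq_zero, isBigO_map, Function.comp_def] using ((W.hasDerivAt α).isTheta_sub hα').2
  exact (isTheta_div_sub α).isBigO_symm.trans
    ((h.comp_tendsto (tendsto_div_approxFilter α)).trans (isTheta_homEval α hW).isBigO_symm)

end ApproxFilter

section IntegerPolynomials

lemma exists_map_eq_C_mul {A F : Type*} [CommRing A] [Field F] [Algebra A F] [IsFractionRing A F]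
    (P : F[X]) :
    ∃ r : A, r ≠ 0 ∧ ∃ P' : A[X], P'.map (algebraMap A F) = C (algebraMap A F r) * P := by
  have : IsDomain A := (IsFractionRing.injective A F).isDomain (algebraMap A F)
  obtain ⟨r, hr, hP⟩ := IsLocalization.integerNormalization_spec (nonZeroDivisors A) P
  exact ⟨r, nonZeroDivisors.ne_zero hr, _, by rw [hP, ← algebraMap_smul F r P, smul_eq_C_mul]⟩

lemma exists_int_minimallyRepresents {L : Type*} [Field L] [Algebra ℚ L] {α β : L}
    (hα : IsAlgebraic ℚ α) (hβ : β ∈ Algebra.adjoin ℚ {α}) :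
    ∃ P Q : ℤ[X],
      MinimallyRepresents α β (P.map (algebraMap ℤ ℚ)) (Q.map (algebraMap ℤ ℚ)) ∧
      2 * max P.natDegree Q.natDegree ≤ (minpoly ℚ α).natDegree := by
  obtain ⟨P, Q, hPQ, hdeg⟩ := exists_minimallyRepresents hα hβ
  obtain ⟨r, hr, P', hP'⟩ := exists_map_eq_C_mul (A := ℤ) P
  obtain ⟨s, hs, Q', hQ'⟩ := exists_map_eq_C_mul (A := ℤ) Q
  have hrs : algebraMap ℤ ℚ r * algebraMap ℤ ℚ s ≠ 0 := by simp [hr, hs]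
  have hPmap : (C s * P').map (algebraMap ℤ ℚ) = C (algebraMap ℤ ℚ r * algebraMap ℤ ℚ s) * P := by
    rw [Polynomial.map_mul, map_C, hP', C_mul]
    ring
  have hQmap : (C r * Q').map (algebraMap ℤ ℚ) = C (algebraMap ℤ ℚ r * algebraMap ℤ ℚ s) * Q := by
    rw [Polynomial.map_mul, map_C, hQ', C_mul]
    ring
  refine ⟨C s * P', C r * Q', hPmap ▸ hQmap ▸ hPQ.C_mul hrs, ?_⟩
  have hinj := (algebraMap ℤ ℚ).injective_int
  rwa [← natDegree_map_eq_of_injective hinj, ← natDegree_map_eq_of_injective hinj (C r * Q'),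
    hPmap, hQmap, natDegree_C_mul hrs, natDegree_C_mul hrs]

lemma exists_mul_ratHeight_pow_le {P Q : ℤ[X]} {k : ℕ}
    (hPQ : IsCoprime (P.map (algebraMap ℤ ℚ)) (Q.map (algebraMap ℤ ℚ)))
    (hk : max P.natDegree Q.natDegree = k) :
    ∃ c > 0, ∀ x₁ y₁ x₂ y₂ g : ℤ, IsCoprime x₁ y₁ → IsCoprime x₂ y₂ →
      homEval P k x₁ y₁ = g * x₂ → homEval Q k x₁ y₁ = g * y₂ →
        c * ratHeight x₁ y₁ ^ k ≤ ratHeight x₂ y₂ := by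
  have hinj := (algebraMap ℤ ℚ).injective_int
  rw [← natDegree_map_eq_of_injective hinj, ← natDegree_map_eq_of_injective hinj Q] at hk
  obtain ⟨c, hc, h⟩ := exists_mul_mulHeight_pow_le hPQ hk
  refine ⟨c, hc, fun x₁ y₁ x₂ y₂ g h₁ h₂ hP hQ ↦ ?_⟩
  have hPQ' : ![homEval (P.map (algebraMap ℤ ℚ)) k x₁ y₁, homEval (Q.map (algebraMap ℤ ℚ)) k x₁ y₁]
      = (g : ℚ) • ![(x₂ : ℚ), (y₂ : ℚ)] := by
    have hP' := homEval.map (algebraMap ℤ ℚ) P k x₁ y₁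
    have hQ' := homEval.map (algebraMap ℤ ℚ) Q k x₁ y₁
    rw [hP] at hP'
    rw [hQ] at hQ'
    ext i; fin_cases i
    · simpa using hP'
    · simpa using hQ'
  calc c * ratHeight x₁ y₁ ^ k
      ≤ Height.mulHeight ((g : ℚ) • ![(x₂ : ℚ), (y₂ : ℚ)]) := by
        rw [← mulHeight_eq_ratHeight h₁, ← hPQ']
        exact h x₁ y₁
    _ ≤ ratHeight x₂ y₂ := by
        rcases eq_or_ne (g : ℚ) 0 with hg | hg
        · simpa [hg] using one_le_ratHeight h₂
        · rw [Height.mulHeight_smul_eq_mulHeight _ hg, mulHeight_eq_ratHeight h₂]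

end IntegerPolynomials

lemma exists_eq_mul_of_mul_eq_mul {R : Type*} [CommRing R] {a b x y : R} (hxy : IsCoprime x y)
    (h : a * y = b * x) : ∃ g, a = g * x ∧ b = g * y := by
  obtain ⟨m, n, hmn⟩ := hxy
  exact ⟨m * a + n * b, by linear_combination (-a) * hmn + n * h, by
    linear_combination (-b) * hmn - m * h⟩

lemma one_le_abs_mul_norm_intCast (p : ℕ) [Fact p.Prime] {K : Type*} [NormedField K]
    [NormedAlgebra ℚ_[p] K] {n : ℤ} (hn : n ≠ 0) : 1 ≤ |(n : ℝ)| * ‖(n : K)‖ := by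
  have hn' : (n : ℚ_[p]) ≠ 0 := mod_cast hn
  have hp : (0 : ℝ) < p := mod_cast (Fact.out : p.Prime).pos
  rw [← map_intCast (algebraMap ℚ_[p] K), norm_algebraMap',
    Padic.norm_eq_zpow_neg_valuation hn', Padic.valuation_intCast, zpow_neg, zpow_natCast,
    ← div_eq_mul_inv, one_le_div (by positivity)]
  have h := Int.le_of_dvd (abs_pos.mpr hn) ((dvd_abs _ _).mpr (padicValInt_dvd (p := p) n))
  exact mod_cast h

lemma eval_minpoly_ne_zero {F L : Type*} [Field F] [Field L] [Algebra F L] {α : L}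
    (hα : IsAlgebraic F α) (hirr : α ∉ (algebraMap F L).range) (q : F) :
    (minpoly F α).eval q ≠ 0 := fun hq ↦
  hirr (minpoly.natDegree_eq_one_iff.mp (natDegree_eq_of_degree_eq_some
    (degree_eq_one_of_irreducible_of_root (minpoly.irreducible hα.isIntegral) hq)))

lemma isBigO_inv_ratHeight_pow (p : ℕ) [Fact p.Prime] {K : Type*} [NontriviallyNormedField K]
    [NormedAlgebra ℚ_[p] K] [Algebra ℚ K] {α : K} (hα : IsAlgebraic ℚ α)
    (hirr : α ∉ (algebraMap ℚ K).range) :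
    (fun z : ℤ × ℤ ↦ (ratHeight z.1 z.2 ^ (minpoly ℚ α).natDegree)⁻¹) =O[approxFilter α]
      fun z ↦ (z.2 : K) * α - z.1 := by
  have : IsUltrametricDist K := .of_normedAlgebra ℚ_[p]
  set d := (minpoly ℚ α).natDegree
  obtain ⟨r, hr, f, hf⟩ := exists_map_eq_C_mul (A := ℤ) (minpoly ℚ α)
  have hr' : algebraMap ℤ ℚ r ≠ 0 := by simpa
  have hfd : f.natDegree = d := by
    rw [← natDegree_map_eq_of_injective (algebraMap ℤ ℚ).injective_int, hf, natDegree_C_mul hr']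
  have hfα : (f.map (algebraMap ℤ K)).IsRoot α := by
    rw [IsRoot, eval_map_algebraMap, ← aeval_map_algebraMap ℚ, hf, map_mul, minpoly.aeval, mul_zero]
  have hne (x y : ℤ) (hy : y ≠ 0) : homEval f d x y ≠ 0 := by
    have h : homEval (f.map (algebraMap ℤ ℚ)) d (x : ℚ) y ≠ 0 := by
      rw [homEval.eq_eval_div_mul_pow (natDegree_map_le.trans hfd.le) _ (mod_cast hy), hf]
      simp [hr, eval_minpoly_ne_zero hα hirr, hy]
    exact fun h₀ ↦ h ((homEval.map (algebraMap ℤ ℚ) f d x y).trans (by simp [h₀]))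
  obtain ⟨B, -, hle⟩ := homEval.exists_abs_le f d
  refine .trans (.of_bound B ?_) (isBigO_homEval (natDegree_map_le.trans hfd.le) hfα)
  filter_upwards [eventually_isCoprime α, eventually_snd_ne_zero α] with z hz hy
  have hH := one_le_ratHeight hz
  have hF := one_le_abs_mul_norm_intCast p (K := K) (hne z.1 z.2 fun h ↦ hy (by simp [h]))
  grw [hle, mul_right_comm] at hF
  rw [Real.norm_of_nonneg (by positivity), inv_le_iff_one_le_mul₀ (by positivity)]
  rwa [← eq_intCast (algebraMap ℤ K), ← homEval.map] at hF

section DiffPoly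

variable {K : Type*} [CommRing K]

/-- The polynomial `P - β * Q`, which vanishes at `α` when `P / Q` represents `β` as a rational
function of `α`. -/
noncomputable def diffPoly (β : K) (P Q : ℤ[X]) : K[X] :=
  P.map (algebraMap ℤ K) - C β * Q.map (algebraMap ℤ K)

lemma natDegree_diffPoly_le (β : K) {P Q : ℤ[X]} {k : ℕ} (hk : max P.natDegree Q.natDegree ≤ k) :
    (diffPoly β P Q).natDegree ≤ k :=
  natDegree_sub_le_of_le (natDegree_map_le.trans (le_of_max_le_left hk))
    ((natDegree_C_mul_le _ _).trans (natDegree_map_le.trans (le_of_max_le_right hk))) |>.trans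
      (max_self k).le

lemma homEval_diffPoly (β : K) (P Q : ℤ[X]) (k : ℕ) (x y : ℤ) :
    homEval (diffPoly β P Q) k (x : K) y =
      ((homEval P k x y : ℤ) : K) - β * (homEval Q k x y : ℤ) := by
  have hP := homEval.map (algebraMap ℤ K) P k x y
  have hQ := homEval.map (algebraMap ℤ K) Q k x y
  simp only [eq_intCast] at hP hQ
  rw [← hP, ← hQ]
  simp only [homEval, diffPoly, homogenize_sub, homogenize_C_mul, map_sub, map_mul,
    MvPolynomial.eval_C]

end DiffPoly

section Approximations

variable {K : Type*} [NontriviallyNormedField K] {α β : K} {P Q : ℤ[X]} {k : ℕ}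

namespace MinimallyRepresents

variable [Algebra ℚ K]

lemma isRoot_diffPoly
    (h : MinimallyRepresents α β (P.map (algebraMap ℤ ℚ)) (Q.map (algebraMap ℤ ℚ))) :
    (diffPoly β P Q).IsRoot α := by
  have hPQ := h.aeval_eq
  rw [aeval_map_algebraMap, aeval_map_algebraMap] at hPQ
  simp only [IsRoot, diffPoly, eval_sub, eval_mul, eval_C, eval_map_algebraMap, hPQ, sub_self]

lemma eval_derivative_diffPoly_ne_zero
    (h : MinimallyRepresents α β (P.map (algebraMap ℤ ℚ)) (Q.map (algebraMap ℤ ℚ)))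
    (hβ : β ∉ (algebraMap ℚ K).range)
    (hdeg : max P.natDegree Q.natDegree ≤ (minpoly ℚ α).natDegree) :
    (diffPoly β P Q).derivative.eval α ≠ 0 := by
  have hPQ := h.aeval_derivative_ne hβ
    ((max_le_max natDegree_map_le natDegree_map_le).trans hdeg)
  rw [derivative_map, derivative_map, aeval_map_algebraMap, aeval_map_algebraMap] at hPQ
  simpa only [diffPoly, derivative_sub, derivative_C_mul, derivative_map, eval_sub, eval_mul,
    eval_C, eval_map_algebraMap, sub_ne_zero] using hPQ

end MinimallyRepresents

lemma exists_abs_homEval_mul_sub_le (P Q : ℤ[X]) (k : ℕ) :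
    ∃ C > 0, ∀ x₁ y₁ x₂ y₂ : ℤ,
      |((homEval P k x₁ y₁ * y₂ - homEval Q k x₁ y₁ * x₂ : ℤ) : ℝ)| ≤
        C * ratHeight x₁ y₁ ^ k * ratHeight x₂ y₂ := by
  obtain ⟨A, hA, hP⟩ := homEval.exists_abs_le P k
  obtain ⟨B, hB, hQ⟩ := homEval.exists_abs_le Q k
  refine ⟨A + B, by positivity, fun x₁ y₁ x₂ y₂ ↦ ?_⟩
  have hx : |(x₂ : ℝ)| ≤ ratHeight x₂ y₂ := le_max_left _ _
  have hy : |(y₂ : ℝ)| ≤ ratHeight x₂ y₂ := le_max_right _ _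
  have hH : 0 ≤ ratHeight x₂ y₂ := (abs_nonneg _).trans hx
  push_cast
  grw [abs_sub, abs_mul, abs_mul, hx, hy, hP, hQ]
  exact le_of_eq (by ring)

lemma exists_norm_homEval_mul_sub_le [IsUltrametricDist K] (hk : max P.natDegree Q.natDegree ≤ k)
    (hα : (diffPoly β P Q).IsRoot α) :
    ∃ C > 0, ∀ᶠ z in approxFilter α, ∀ x₂ y₂ : ℤ,
      ‖((homEval P k z.1 z.2 * y₂ - homEval Q k z.1 z.2 * x₂ : ℤ) : K)‖ ≤
        C * max ‖(z.2 : K) * α - z.1‖ ‖(y₂ : K) * β - x₂‖ := by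
  obtain ⟨C, hC, hle⟩ := (isBigO_homEval (natDegree_diffPoly_le β hk) hα).exists_pos
  refine ⟨max C 1, by positivity, ?_⟩
  filter_upwards [hle.bound] with z hz x₂ y₂
  have hint := IsUltrametricDist.norm_intCast_le_one K
  have hsplit : ((homEval P k z.1 z.2 * y₂ - homEval Q k z.1 z.2 * x₂ : ℤ) : K) =
      y₂ * homEval (diffPoly β P Q) k (z.1 : K) z.2 +
        (homEval Q k z.1 z.2 : ℤ) * (y₂ * β - x₂) := by
    rw [homEval_diffPoly]
    push_cast
    ring
  rw [hsplit]
  refine (IsUltrametricDist.norm_add_le_max _ _).trans ?_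
  rw [mul_max_of_nonneg _ _ (by positivity), norm_mul, norm_mul]
  grw [hint, hint, hz]
  rw [one_mul, one_mul]
  exact max_le_max (mul_le_mul_of_nonneg_right (le_max_left _ _) (norm_nonneg _))
    (le_mul_of_one_le_left (norm_nonneg _) (le_max_right _ _))

end Approximations

section Gap

variable (p : ℕ) [Fact p.Prime] {K : Type*} [NontriviallyNormedField K] [NormedAlgebra ℚ_[p] K]
  {α β : K} {P Q : ℤ[X]} {k : ℕ} {C₀ μ : ℝ}

include p in
lemma exists_ratHeight_lt_of_homEval_mul_ne (hC₀ : 0 < C₀) (hμ : 0 ≤ μ)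
    (hk : max P.natDegree Q.natDegree ≤ k) (hα : (diffPoly β P Q).IsRoot α) :
    ∃ C > 0, ∀ᶠ z in approxFilter α, ∀ x₂ y₂ : ℤ,
      IsApprox C₀ μ α z.1 z.2 → IsApprox C₀ μ β x₂ y₂ → ratHeight z.1 z.2 ≤ ratHeight x₂ y₂ →
      homEval P k z.1 z.2 * y₂ ≠ homEval Q k z.1 z.2 * x₂ →
        C⁻¹ * ratHeight z.1 z.2 ^ (μ - k) < ratHeight x₂ y₂ := by
  have : IsUltrametricDist K := .of_normedAlgebra ℚ_[p]
  obtain ⟨A, hA, habs⟩ := exists_abs_homEval_mul_sub_le P Q k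
  obtain ⟨B, hB, hnorm⟩ := exists_norm_homEval_mul_sub_le hk hα
  refine ⟨A * B * C₀, by positivity, ?_⟩
  filter_upwards [hnorm] with z hz x₂ y₂ h₁ h₂ hle hne
  have hH₁ := one_le_ratHeight h₁.1
  have hH₂ := one_le_ratHeight h₂.1
  set H₁ := ratHeight z.1 z.2
  set H₂ := ratHeight x₂ y₂
  have hmax : max ‖(z.2 : K) * α - z.1‖ ‖(y₂ : K) * β - x₂‖ < C₀ / H₁ ^ μ :=
    max_lt h₁.2 (h₂.2.trans_le (by gcongr))
  have hlt : 1 < A * H₁ ^ k * H₂ * (B * (C₀ / H₁ ^ μ)) := by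
    refine (one_le_abs_mul_norm_intCast p (K := K) (sub_ne_zero.mpr hne)).trans_lt ?_
    grw [habs, hz, hmax]
  rw [Real.rpow_sub (by positivity), Real.rpow_natCast, inv_mul_lt_iff₀ (by positivity),
    div_lt_iff₀ (by positivity)]
  calc H₁ ^ μ = 1 * H₁ ^ μ := (one_mul _).symm
    _ < A * H₁ ^ k * H₂ * (B * (C₀ / H₁ ^ μ)) * H₁ ^ μ := by gcongr
    _ = A * B * C₀ * H₂ * H₁ ^ k := by
        field_simp

include p in
lemma eventually_homEval_mul_ne [Algebra ℚ K] (hC₀ : 0 < C₀) (hα : IsAlgebraic ℚ α)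
    (hβ : β ∉ (algebraMap ℚ K).range)
    (h : MinimallyRepresents α β (P.map (algebraMap ℤ ℚ)) (Q.map (algebraMap ℤ ℚ)))
    (hk : max P.natDegree Q.natDegree = k) (hkd : k ≤ (minpoly ℚ α).natDegree)
    (hμ : (minpoly ℚ α).natDegree < k * μ) :
    ∀ᶠ z in approxFilter α, ∀ x₂ y₂ : ℤ, IsApprox C₀ μ β x₂ y₂ →
      homEval P k z.1 z.2 * y₂ ≠ homEval Q k z.1 z.2 * x₂ := by
  have : IsUltrametricDist K := .of_normedAlgebra ℚ_[p]
  have hμ₀ : 0 < μ := pos_of_mul_pos_right ((Nat.cast_nonneg _).trans_lt hμ) (Nat.cast_nonneg k)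
  set d := (minpoly ℚ α).natDegree
  obtain ⟨A, hA, hlow⟩ := ((isBigO_inv_ratHeight_pow p hα (h.notMem_range hβ)).trans
    (isBigO_homEval_symm (natDegree_diffPoly_le β hk.le) h.isRoot_diffPoly
      (h.eval_derivative_diffPoly_ne_zero hβ (hk ▸ hkd)))).exists_pos
  obtain ⟨c, hc, hheight⟩ := exists_mul_ratHeight_pow_le h.isCoprime hk
  have hlim : Tendsto (fun z : ℤ × ℤ ↦ ratHeight z.1 z.2 ^ (k * μ - d)) (approxFilter α) atTop :=
    (tendsto_rpow_atTop (by linarith)).comp (tendsto_ratHeight α)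
  filter_upwards [hlow.bound, hlim.eventually_ge_atTop (A * C₀ / c ^ μ), eventually_isCoprime α]
    with ⟨x₁, y₁⟩ hlow hlarge hcop x₂ y₂ h₂ heq
  obtain ⟨g, hP, hQ⟩ := exists_eq_mul_of_mul_eq_mul h₂.1 heq
  have hH₂ : c * ratHeight x₁ y₁ ^ k ≤ ratHeight x₂ y₂ := hheight _ _ _ _ g hcop h₂.1 hP hQ
  have hH₁ := one_le_ratHeight hcop
  set H₁ := ratHeight x₁ y₁
  have hdiff : ‖homEval (diffPoly β P Q) k (x₁ : K) y₁‖ < C₀ / ratHeight x₂ y₂ ^ μ := by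
    have hg : homEval (diffPoly β P Q) k (x₁ : K) y₁ = -g * (y₂ * β - x₂) := by
      rw [homEval_diffPoly, hP, hQ]
      push_cast
      ring
    rw [hg, norm_mul, norm_neg]
    exact (mul_le_of_le_one_left (norm_nonneg _)
      (IsUltrametricDist.norm_intCast_le_one K g)).trans_lt h₂.2
  have hlt : (H₁ ^ d)⁻¹ < A * (C₀ / (c * H₁ ^ k) ^ μ) := by
    rw [Real.norm_of_nonneg (by positivity)] at hlow
    grw [hlow, hdiff, hH₂]
  rw [Real.mul_rpow (by positivity) (by positivity), ← Real.rpow_natCast_mul (by positivity)] at hlt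
  rw [Real.rpow_sub (by positivity), Real.rpow_natCast, div_le_div_iff₀ (by positivity)
    (by positivity)] at hlarge
  refine hlt.not_ge ?_
  rw [← mul_div_assoc, div_le_iff₀ (by positivity), inv_mul_eq_div, le_div_iff₀ (by positivity)]
  linarith

end Gap

lemma exists_int_eq_div_of_max_natDegree_eq_one {L : Type*} [Field L] [Algebra ℚ L] {α β : L}
    {P Q : ℤ[X]} (h : MinimallyRepresents α β (P.map (algebraMap ℤ ℚ)) (Q.map (algebraMap ℤ ℚ)))
    (hβ : β ∉ (algebraMap ℚ L).range) (hk : max P.natDegree Q.natDegree = 1) {x₁ y₁ x₂ y₂ : ℤ}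
    (hy₁ : y₁ ≠ 0) (hcop : IsCoprime x₂ y₂)
    (heq : homEval P 1 x₁ y₁ * y₂ = homEval Q 1 x₁ y₁ * x₂) :
    ∃ s t u v : ℤ, s * v - t * u ≠ 0 ∧ β = (s * α + t) / (u * α + v) ∧
      (x₂ / y₂ : ℚ) = ((s * x₁ + t * y₁ : ℤ) : ℚ) / ((u * x₁ + v * y₁ : ℤ) : ℚ) := by
  have hP : P.natDegree ≤ 1 := hk ▸ le_max_left _ _
  have hQ : Q.natDegree ≤ 1 := hk ▸ le_max_right _ _
  have hdet : P.coeff 1 * Q.coeff 0 - P.coeff 0 * Q.coeff 1 ≠ 0 := by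
    have hinj := (algebraMap ℤ ℚ).injective_int
    have h' := h.mul_sub_mul_ne_zero hβ
      (by rwa [natDegree_map_eq_of_injective hinj, natDegree_map_eq_of_injective hinj])
    simp only [coeff_map, eq_intCast] at h'
    exact_mod_cast h'
  refine ⟨P.coeff 1, P.coeff 0, Q.coeff 1, Q.coeff 0, hdet, ?_, ?_⟩
  · have hPQ := h.aeval_eq
    have hQα := h.aeval_ne_zero
    simp only [aeval_map_algebraMap, aeval_of_natDegree_le_one hP, aeval_of_natDegree_le_one hQ,
      eq_intCast] at hPQ hQα
    exact eq_div_of_mul_eq hQα hPQ.symm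
  · obtain ⟨g, hgP, hgQ⟩ := exists_eq_mul_of_mul_eq_mul hcop heq
    rw [homEval.eq_of_natDegree_le_one hP] at hgP
    rw [homEval.eq_of_natDegree_le_one hQ] at hgQ
    have hg : g ≠ 0 := by
      rintro rfl
      refine mul_ne_zero hdet hy₁ ?_
      linear_combination P.coeff 1 * hgQ - Q.coeff 1 * hgP
    rw [hgP, hgQ, Int.cast_mul, Int.cast_mul, mul_div_mul_left _ _ (mod_cast hg)]

theorem generalized_non_archimedean_gap_principle_general (p : ℕ) [Fact p.Prime] {K : Type*}
    [NontriviallyNormedField K] [NormedAlgebra ℚ_[p] K] [Algebra ℚ K] {α β : K}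
    (hα : IsAlgebraic ℚ α) (hβmem : β ∈ Algebra.adjoin ℚ {α}) (hβ : β ∉ (algebraMap ℚ K).range)
    {μ C₀ : ℝ} (hμ : ((minpoly ℚ α).natDegree : ℝ) / 2 < μ) (hC₀ : 0 < C₀) :
    ∃ C₃ C₄ : ℝ, 0 < C₃ ∧ 0 < C₄ ∧
      ∀ x₁ y₁ x₂ y₂ : ℤ, 0 < y₁ → 0 < y₂ → IsCoprime x₁ y₁ → IsCoprime x₂ y₂ →
        C₃ ≤ ratHeight x₁ y₁ → ratHeight x₁ y₁ ≤ ratHeight x₂ y₂ →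
        ‖(y₁ : K) * α - x₁‖ < C₀ / ratHeight x₁ y₁ ^ μ →
        ‖(y₂ : K) * β - x₂‖ < C₀ / ratHeight x₂ y₂ ^ μ →
        C₄⁻¹ * ratHeight x₁ y₁ ^ (μ - ((minpoly ℚ α).natDegree : ℝ) / 2) < ratHeight x₂ y₂ ∨
          ∃ s t u v : ℤ, s * v - t * u ≠ 0 ∧ β = (s * α + t) / (u * α + v) ∧
            (x₂ : ℚ) / (y₂ : ℚ) = ((s * x₁ + t * y₁ : ℤ) : ℚ) / ((u * x₁ + v * y₁ : ℤ) : ℚ) := by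
  have hμ₀ : 0 < μ := hμ.trans_le' (by positivity)
  obtain ⟨P, Q, hPQ, hdeg⟩ := exists_int_minimallyRepresents hα hβmem
  obtain ⟨k, hk⟩ : ∃ k, max P.natDegree Q.natDegree = k := ⟨_, rfl⟩
  set d := (minpoly ℚ α).natDegree
  have hk_pos : 0 < k := (hPQ.max_natDegree_pos hβ).trans_le
    (hk ▸ max_le_max natDegree_map_le natDegree_map_le)
  have hkd : (k : ℝ) ≤ d / 2 := by
    rw [le_div_iff₀' two_pos]
    exact_mod_cast hk ▸ hdeg
  obtain ⟨C₄, hC₄, hlt⟩ :=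
    exists_ratHeight_lt_of_homEval_mul_ne p hC₀ hμ₀.le hk.le hPQ.isRoot_diffPoly
  have hne : ∀ᶠ z in approxFilter α, k ≠ 1 → ∀ x y : ℤ, IsApprox C₀ μ β x y →
      homEval P k z.1 z.2 * y ≠ homEval Q k z.1 z.2 * x := by
    refine eventually_imp_distrib_left.mpr fun hk₁ ↦
      eventually_homEval_mul_ne p hC₀ hα hβ hPQ hk (by lia) ?_
    have hk₂ : (2 : ℝ) ≤ k := mod_cast (by lia : 2 ≤ k)
    nlinarith
  obtain ⟨C₃, hC₃, h⟩ := exists_forall_isApprox (C₀ := C₀) hμ₀ (hlt.and hne)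
  refine ⟨C₃, C₄, hC₃, hC₄, fun x₁ y₁ x₂ y₂ hy₁ _ hcop₁ hcop₂ hH₁ hH h₁ h₂ ↦ ?_⟩
  obtain ⟨hlt, hne⟩ := h x₁ y₁ ⟨hcop₁, h₁⟩ hH₁
  by_cases heq : homEval P k x₁ y₁ * y₂ = homEval Q k x₁ y₁ * x₂
  · obtain rfl : k = 1 := by_contra fun hk₁ ↦ hne hk₁ x₂ y₂ ⟨hcop₂, h₂⟩ heq
    exact .inr (exists_int_eq_div_of_max_natDegree_eq_one hPQ hβ hk hy₁.ne' hcop₂ heq)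
  · refine .inl (lt_of_le_of_lt ?_ (hlt x₂ y₂ ⟨hcop₁, h₁⟩ ⟨hcop₂, h₂⟩ hH heq))
    gcongr
    exact one_le_ratHeight hcop₁

/-- **A generalized non-Archimedean gap principle.** Let `p` be a rational prime,
`α ∈ ℚ_p` a `p`-adic algebraic number of degree `d ≥ 3` over `ℚ` and `β ∈ ℚ(α)`
irrational. Let `μ` be a real number with `d/2 + 1 < μ < d` and let `C₀ > 0`. Then
there exist positive reals `C₃`, `C₄` (depending only on `α`, `β`, `μ`, `C₀`) such
that: if `x₁/y₁`, `x₂/y₂` are rationals in lowest terms with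
`H(x₂,y₂) ≥ H(x₁,y₁) ≥ C₃`, `|y₁α − x₁|_p < C₀/H(x₁,y₁)^μ` and
`|y₂β − x₂|_p < C₀/H(x₂,y₂)^μ`, then either `H(x₂,y₂) > C₄⁻¹·H(x₁,y₁)^(μ−d/2)`, or
there are integers `s, t, u, v` with `s·v − t·u ≠ 0` such that `β = (sα+t)/(uα+v)`
and `x₂/y₂ = (s·x₁+t·y₁)/(u·x₁+v·y₁)`. -/
theorem generalized_non_archimedean_gap_principle
    (p : ℕ) [Fact p.Prime] (d : ℕ) (hd : 3 ≤ d) (α : ℚ_[p]) (hα : IsAlgebraic ℚ α)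
    (hdeg : (minpoly ℚ α).natDegree = d)
    (β : ℚ_[p]) (hβmem : β ∈ Algebra.adjoin ℚ {α}) (hβirr : ∀ q : ℚ, (q : ℚ_[p]) ≠ β)
    (μ C₀ : ℝ) (hμ₁ : (d : ℝ) / 2 + 1 < μ) (hμ₂ : μ < d) (hC₀ : 0 < C₀) :
    ∃ C₃ C₄ : ℝ, 0 < C₃ ∧ 0 < C₄ ∧
      ∀ x₁ y₁ x₂ y₂ : ℤ, 0 < y₁ → 0 < y₂ → IsCoprime x₁ y₁ → IsCoprime x₂ y₂ →
        C₃ ≤ ratHeight x₁ y₁ → ratHeight x₁ y₁ ≤ ratHeight x₂ y₂ →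
        ‖(y₁ : ℚ_[p]) * α - (x₁ : ℚ_[p])‖ < C₀ / ratHeight x₁ y₁ ^ μ →
        ‖(y₂ : ℚ_[p]) * β - (x₂ : ℚ_[p])‖ < C₀ / ratHeight x₂ y₂ ^ μ →
        (C₄⁻¹ * ratHeight x₁ y₁ ^ (μ - (d : ℝ) / 2) < ratHeight x₂ y₂ ∨
          ∃ s t u v : ℤ, s * v - t * u ≠ 0 ∧
            β = ((s : ℚ_[p]) * α + (t : ℚ_[p])) / ((u : ℚ_[p]) * α + (v : ℚ_[p])) ∧
            (x₂ : ℚ) / (y₂ : ℚ) =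
              ((s * x₁ + t * y₁ : ℤ) : ℚ) / ((u * x₁ + v * y₁ : ℤ) : ℚ)) := by
  subst hdeg
  exact generalized_non_archimedean_gap_principle_general p hα hβmem (fun ⟨q, hq⟩ ↦ hβirr q hq)
    (by linarith) hC₀
end

section
/- (p-adic Liouville theorem) Let p be a rational prime and let α ∈ ℚ_p be a p-adic algebraic number of degree d over ℚ. Then there exists a positive real number C₇, depending only on α, such that for all integers x and y with x ≠ yα, the inequality |yα − x|_p ≥ C₇ / H(x,y)^d holds. -/
/-!
Let `f` be the minimal polynomial of `α` scaled to have integer coefficients `a i`, of degree `d`.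
The binary form `F(x, y) = ∑ a i * x ^ i * y ^ (d - i)`, written here as `(f.scaleRoots y).eval x`,
vanishes at `(y α, y)`, and at no integral point with `x ≠ y α`, since `minpoly ℚ α` has no
rational root other than `α`. For such a point the nonzero integer `F(x, y)` satisfies
`1 ≤ |F(x, y)| * |F(x, y)|_p`. The first factor is at most `(∑ |a i|) * H(x, y) ^ d`. Since
`F(x, y) = F(x, y) - F(y α, y)`, the ultrametric inequality bounds the second one by
`max(1, |α|_p) ^ (d - 1) * |y α - x|_p`.
-/

open Polynomial Finset

section BinaryForm

theorem abs_eval_scaleRoots_le {R : Type*} [CommRing R] [LinearOrder R] [IsOrderedRing R]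
    (f : R[X]) (x y : R) :
    |(f.scaleRoots y).eval x| ≤
      (∑ i ∈ range (f.natDegree + 1), |f.coeff i|) * max |x| |y| ^ f.natDegree := by
  rw [eval_eq_sum_range, natDegree_scaleRoots, sum_mul]
  refine (abs_sum_le_sum_abs _ _).trans (sum_le_sum fun i hi ↦ ?_)
  have hi : i ≤ f.natDegree := mem_range_succ_iff.1 hi
  calc |(f.scaleRoots y).coeff i * x ^ i|
      = |f.coeff i| * (|y| ^ (f.natDegree - i) * |x| ^ i) := by
        rw [coeff_scaleRoots, abs_mul, abs_mul, abs_pow, abs_pow, mul_assoc]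
    _ ≤ |f.coeff i| * (max |x| |y| ^ (f.natDegree - i) * max |x| |y| ^ i) := by
        gcongr
        exacts [le_max_right _ _, le_max_left _ _]
    _ = |f.coeff i| * max |x| |y| ^ f.natDegree := by rw [← pow_add, Nat.sub_add_cancel hi]

theorem eval_scaleRoots_minpoly_ne_zero {F K : Type*} [Field F] [Ring K] [IsDomain K] [Algebra F K]
    {α : K} (hα : IsIntegral F α) {x y : F} (hxy : algebraMap F K x ≠ algebraMap F K y * α) :
    ((minpoly F α).scaleRoots y).eval x ≠ 0 := by
  intro h
  rcases eq_or_ne y 0 with rfl | hy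
  · have hx : x = 0 := by simpa [minpoly.monic hα, (minpoly.natDegree_pos hα).ne'] using h
    simp [hx] at hxy
  · have hroot : (minpoly F α).IsRoot (x / y) := by
      rw [← mul_div_cancel₀ x hy, scaleRoots_eval_mul] at h
      exact (mul_eq_zero.1 h).resolve_left (pow_ne_zero _ hy)
    rw [← minpoly.root hα hroot, ← map_mul, mul_div_cancel₀ x hy] at hxy
    exact hxy rfl

theorem exists_natDegree_eq_minpoly_and_eval_scaleRoots_ne_zero (A F : Type*) {K : Type*}
    [CommRing A] [Field F] [Algebra A F] [IsFractionRing A F] [CommRing K] [IsDomain K]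
    [Algebra A K] [Algebra F K] [IsScalarTower A F K] {α : K} (hα : IsIntegral F α) :
    ∃ f : A[X], f.natDegree = (minpoly F α).natDegree ∧ aeval α f = 0 ∧
      ∀ x y : A, algebraMap A K x ≠ algebraMap A K y * α → (f.scaleRoots y).eval x ≠ 0 := by
  obtain ⟨b, hb, hf⟩ := IsLocalization.integerNormalization_spec (nonZeroDivisors A) (minpoly F α)
  set f := IsLocalization.integerNormalization (nonZeroDivisors A) (minpoly F α)
  have hinj : Function.Injective (algebraMap A F) := IsFractionRing.injective A F
  have hb' : algebraMap A F b ≠ 0 := by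
    simpa using (IsLocalization.map_units F (⟨b, hb⟩ : nonZeroDivisors A)).ne_zero
  have hf' : f.map (algebraMap A F) = C (algebraMap A F b) * minpoly F α := by
    rw [hf, ← algebraMap_smul F b, smul_eq_C_mul]
  have hf0 : f ≠ 0 := by
    intro h
    simp [h, hb', minpoly.ne_zero hα] at hf'
  refine ⟨f, ?_, IsLocalization.integerNormalization_aeval_eq_zero _ _ (minpoly.aeval F α),
    fun x y hxy h ↦ ?_⟩
  · rw [← natDegree_map_eq_of_injective hinj, hf', natDegree_C_mul hb']
  · have hform : algebraMap A F ((f.scaleRoots y).eval x) =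
        algebraMap A F b *
          ((minpoly F α).scaleRoots (algebraMap A F y)).eval (algebraMap A F x) := by
      rw [← eval_map_apply, map_scaleRoots, hf', mul_scaleRoots_of_noZeroDivisors, scaleRoots_C,
        eval_mul, eval_C]
      simpa [hinj] using hf0
    rw [h, map_zero, eq_comm] at hform
    refine mul_ne_zero hb' (eval_scaleRoots_minpoly_ne_zero hα ?_) hform
    simpa only [← IsScalarTower.algebraMap_apply] using hxy

end BinaryForm

section Ultrametric

variable {R : Type*} [SeminormedCommRing R] [NormOneClass R] [IsUltrametricDist R] {u v : R} {M : ℝ}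

theorem norm_pow_sub_pow_le_of_isUltrametricDist (hu : ‖u‖ ≤ M) (hv : ‖v‖ ≤ M) (n : ℕ) :
    ‖u ^ n - v ^ n‖ ≤ M ^ (n - 1) * ‖u - v‖ := by
  have hM : 0 ≤ M := (norm_nonneg u).trans hu
  rw [← geom_sum₂_mul]
  refine (norm_mul_le _ _).trans ?_
  gcongr
  refine IsUltrametricDist.norm_sum_le_of_forall_le_of_nonneg (by positivity) fun i hi ↦ ?_
  have hi : i < n := mem_range.1 hi
  calc ‖u ^ i * v ^ (n - 1 - i)‖ ≤ ‖u ^ i‖ * ‖v ^ (n - 1 - i)‖ := norm_mul_le _ _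
    _ ≤ M ^ i * M ^ (n - 1 - i) := by
        gcongr
        · exact (norm_pow_le u i).trans (by gcongr)
        · exact (norm_pow_le v _).trans (by gcongr)
    _ = M ^ (n - 1) := by rw [← pow_add, Nat.add_sub_cancel' (Nat.le_sub_one_of_lt hi)]

theorem norm_eval_sub_eval_le_of_isUltrametricDist {f : R[X]} {B : ℝ} (hf : ∀ i, ‖f.coeff i‖ ≤ B)
    (hM : 1 ≤ M) (hu : ‖u‖ ≤ M) (hv : ‖v‖ ≤ M) :
    ‖f.eval u - f.eval v‖ ≤ B * (M ^ (f.natDegree - 1) * ‖u - v‖) := by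
  have hB : 0 ≤ B := (norm_nonneg _).trans (hf 0)
  rw [eval_eq_sum_range, eval_eq_sum_range, ← sum_sub_distrib]
  refine IsUltrametricDist.norm_sum_le_of_forall_le_of_nonneg (by positivity) fun i hi ↦ ?_
  have hi : i ≤ f.natDegree := mem_range_succ_iff.1 hi
  calc ‖f.coeff i * u ^ i - f.coeff i * v ^ i‖ ≤ ‖f.coeff i‖ * ‖u ^ i - v ^ i‖ := by
        rw [← mul_sub]
        exact norm_mul_le _ _
    _ ≤ B * (M ^ (i - 1) * ‖u - v‖) := by
        gcongr
        exacts [hf i, norm_pow_sub_pow_le_of_isUltrametricDist hu hv i]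
    _ ≤ B * (M ^ (f.natDegree - 1) * ‖u - v‖) := by gcongr

end Ultrametric

section Padic

variable (p : ℕ) [Fact p.Prime]

theorem one_le_abs_mul_padic_norm {n : ℤ} (hn : n ≠ 0) : 1 ≤ |(n : ℝ)| * ‖(n : ℚ_[p])‖ := by
  have hp : (0 : ℝ) < p := mod_cast (Fact.out : p.Prime).pos
  have hnorm : ‖(n : ℚ_[p])‖ = ((p : ℝ) ^ padicValInt p n)⁻¹ := by
    rw [Padic.norm_eq_zpow_neg_valuation (mod_cast hn), Padic.valuation_intCast, zpow_neg,
      zpow_natCast]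
  have hle : (p : ℤ) ^ padicValInt p n ≤ |n| :=
    Int.le_of_dvd (abs_pos.2 hn) ((dvd_abs _ _).2 (padicValInt_dvd n))
  rw [hnorm, ← div_eq_mul_inv, one_le_div (by positivity)]
  exact_mod_cast hle

theorem norm_intCast_eq_padic_norm {R : Type*} [SeminormedRing R] [NormOneClass R]
    [NormedAlgebra ℚ_[p] R] (n : ℤ) : ‖(n : R)‖ = ‖(n : ℚ_[p])‖ := by
  rw [← map_intCast (algebraMap ℚ_[p] R), norm_algebraMap']

theorem norm_eval_scaleRoots_le {K : Type*} [NormedField K] [NormedAlgebra ℚ_[p] K]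
    {f : ℤ[X]} {α : K} (hα : aeval α f = 0) (x y : ℤ) :
    ‖(((f.scaleRoots y).eval x : ℤ) : K)‖ ≤
      max 1 ‖α‖ ^ (f.natDegree - 1) * ‖(y : K) * α - x‖ := by
  have : IsUltrametricDist K := IsUltrametricDist.of_normedAlgebra ℚ_[p]
  have norm_int_le_one (n : ℤ) : ‖(n : K)‖ ≤ 1 :=
    (norm_intCast_eq_padic_norm p n).trans_le (Padic.norm_int_le_one n)
  set g : K[X] := (f.scaleRoots y).map (Int.castRingHom K)
  have hgx : g.eval (x : K) = ((f.scaleRoots y).eval x : ℤ) := eval_intCast_map _ _ _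
  have hgα : g.eval (y * α) = 0 := by
    simpa [g, aeval_def, eval_map] using scaleRoots_aeval_eq_zero (r := y) hα
  have hgdeg : g.natDegree ≤ f.natDegree := natDegree_map_le.trans (natDegree_scaleRoots f y).le
  have hgcoeff (i : ℕ) : ‖g.coeff i‖ ≤ 1 := by
    rw [coeff_map]
    exact norm_int_le_one _
  have hyα : ‖(y : K) * α‖ ≤ max 1 ‖α‖ := by
    rw [norm_mul]
    exact (mul_le_of_le_one_left (norm_nonneg α) (norm_int_le_one y)).trans (le_max_right _ _)
  calc ‖(((f.scaleRoots y).eval x : ℤ) : K)‖ = ‖g.eval (y * α) - g.eval (x : K)‖ := by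
        rw [hgα, hgx, zero_sub, norm_neg]
    _ ≤ 1 * (max 1 ‖α‖ ^ (g.natDegree - 1) * ‖(y : K) * α - x‖) :=
        norm_eval_sub_eval_le_of_isUltrametricDist hgcoeff (le_max_left _ _) hyα
          ((norm_int_le_one x).trans (le_max_left _ _))
    _ ≤ max 1 ‖α‖ ^ (f.natDegree - 1) * ‖(y : K) * α - x‖ := by
        rw [one_mul]
        gcongr
        exact le_max_left _ _

theorem one_le_mul_norm_sub_of_eval_scaleRoots_ne_zero {K : Type*} [NormedField K]
    [NormedAlgebra ℚ_[p] K] {f : ℤ[X]} {α : K} (hα : aeval α f = 0) {x y : ℤ}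
    (hxy : (f.scaleRoots y).eval x ≠ 0) :
    1 ≤ (∑ i ∈ range (f.natDegree + 1), |(f.coeff i : ℝ)|) * max |(x : ℝ)| |(y : ℝ)| ^ f.natDegree *
      (max 1 ‖α‖ ^ (f.natDegree - 1) * ‖(y : K) * α - x‖) := by
  have habs := abs_eval_scaleRoots_le f x y
  calc 1 ≤ |(((f.scaleRoots y).eval x : ℤ) : ℝ)| * ‖(((f.scaleRoots y).eval x : ℤ) : K)‖ := by
        rw [norm_intCast_eq_padic_norm p]
        exact one_le_abs_mul_padic_norm p hxy
    _ ≤ _ := by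
        gcongr
        exacts [mod_cast habs, norm_eval_scaleRoots_le p hα x y]

theorem padic_liouville_general {K : Type*} [NormedField K] [NormedAlgebra ℚ_[p] K] [Algebra ℚ K]
    {α : K} (hα : IsAlgebraic ℚ α) :
    ∃ C : ℝ, 0 < C ∧ ∀ x y : ℤ, (x : K) ≠ y * α →
      C / max |(x : ℝ)| |(y : ℝ)| ^ (minpoly ℚ α).natDegree ≤ ‖(y : K) * α - x‖ := by
  obtain ⟨f, hdeg, hroot, hform⟩ :=
    exists_natDegree_eq_minpoly_and_eval_scaleRoots_ne_zero ℤ ℚ hα.isIntegral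
  set A : ℝ := ∑ i ∈ range (f.natDegree + 1), |(f.coeff i : ℝ)|
  set B : ℝ := max 1 ‖α‖ ^ (f.natDegree - 1)
  have hA : 0 < A := by
    have hf : f ≠ 0 := by
      rintro rfl
      exact (minpoly.natDegree_pos hα.isIntegral).ne hdeg
    refine sum_pos' (fun _ _ ↦ abs_nonneg _) ⟨f.natDegree, self_mem_range_succ _, ?_⟩
    simpa using hf
  refine ⟨1 / (A * B), by positivity, fun x y hxy ↦ ?_⟩
  rw [← hdeg, div_div]
  refine div_le_of_le_mul₀ (by positivity) (norm_nonneg _) ?_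
  calc 1 ≤ A * max |(x : ℝ)| |(y : ℝ)| ^ f.natDegree * (B * ‖(y : K) * α - x‖) :=
        one_le_mul_norm_sub_of_eval_scaleRoots_ne_zero p hroot (hform x y (by simpa using hxy))
    _ = _ := by ring

end Padic

/-- **p-adic Liouville theorem.** Let `p` be a rational prime and let `α ∈ ℚ_p` be a
`p`-adic algebraic number of degree `d` over `ℚ`. Then there exists a positive real
number `C₇`, depending only on `α`, such that for all integers `x` and `y` with
`x ≠ y·α`, the inequality `‖y·α − x‖_p ≥ C₇ / H(x,y)^d` holds, where
`H(x,y) = max (|x|, |y|)`. -/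
theorem padic_liouville (p : ℕ) [Fact p.Prime] (α : ℚ_[p])
    (hα : IsAlgebraic ℚ α) (d : ℕ) (hdeg : (minpoly ℚ α).natDegree = d) :
    ∃ C₇ : ℝ, 0 < C₇ ∧
      ∀ x y : ℤ, (x : ℚ_[p]) ≠ (y : ℚ_[p]) * α →
        C₇ / (max |(x : ℝ)| |(y : ℝ)|) ^ d ≤ ‖(y : ℚ_[p]) * α - (x : ℚ_[p])‖ := by
  subst hdeg
  exact padic_liouville_general p hα
end

section
/- Let α be an algebraic number of degree d over ℚ and let β ∈ ℚ(α) be irrational. Then there exist polynomials P, Q ∈ ℤ[x], not both identically zero, with P(α) + β·Q(α) = 0 and max(deg P, deg Q) ≤ ⌊d/2⌋; moreover, if P, Q is a minimal pair for (α, β), then 1 ≤ r(α,β) ≤ ⌊d/2⌋. -/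
/-!
Pairs `(p, q)` of rational polynomials of degree at most `d / 2` form a space of dimension
`2 * (d / 2 + 1) > d`, and `(p, q) ↦ p(α) + β q(α)` maps it linearly into `ℚ[α]`, which has
dimension `d`. So this map has a nonzero kernel element, and multiplying it by a common denominator
makes it integral. A nonzero pair of constants in the kernel would make `β` rational.
-/

open Polynomial

/-- The height `H(P)` of an integer polynomial: the maximum of the absolute values of
its coefficients (as a natural number; `H(0) = 0`). -/
def polyHeight (P : Polynomial ℤ) : ℕ := P.support.sup fun i => (P.coeff i).natAbs

/-- `P, Q ∈ ℤ[x]`, not both identically zero, form a *minimal pair* for `(α, β)` if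
(1) `P, Q ∈ ℤ[x]`; (2) `P(α) + β·Q(α) = 0`; (3) `max (deg P, deg Q)` is minimal among
all pairs satisfying (1) and (2); (4) `max (H(P), H(Q))` is minimal among all pairs
satisfying (1), (2) and (3). -/
def IsMinimalPair {R : Type*} [CommRing R] (α β : R) (P Q : Polynomial ℤ) : Prop :=
  (¬(P = 0 ∧ Q = 0)) ∧
  (Polynomial.aeval α P + β * Polynomial.aeval α Q = 0) ∧
  (∀ P' Q' : Polynomial ℤ, ¬(P' = 0 ∧ Q' = 0) →
    Polynomial.aeval α P' + β * Polynomial.aeval α Q' = 0 →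
    max P.natDegree Q.natDegree ≤ max P'.natDegree Q'.natDegree) ∧
  (∀ P' Q' : Polynomial ℤ, ¬(P' = 0 ∧ Q' = 0) →
    Polynomial.aeval α P' + β * Polynomial.aeval α Q' = 0 →
    max P'.natDegree Q'.natDegree = max P.natDegree Q.natDegree →
    max (polyHeight P) (polyHeight Q) ≤ max (polyHeight P') (polyHeight Q'))

section ExistenceOverField

variable {K A : Type*} [Field K]

lemma exists_mem_degreeLT_aeval_add_mul_aeval_eq_zero [Ring A] [Algebra K A]
    [FiniteDimensional K A] {m n : ℕ} (hmn : Module.finrank K A < m + n) (α β : A) :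
    ∃ p ∈ degreeLT K m, ∃ q ∈ degreeLT K n,
      ¬(p = 0 ∧ q = 0) ∧ aeval α p + β * aeval α q = 0 := by
  have finite_degreeLT (k : ℕ) : Module.Finite K (degreeLT K k) :=
    .equiv (degreeLTEquiv K k).symm
  have finrank_degreeLT (k : ℕ) : Module.finrank K (degreeLT K k) = k := by
    rw [(degreeLTEquiv K k).finrank_eq, Module.finrank_fin_fun]
  let evalAt (k : ℕ) : degreeLT K k →ₗ[K] A :=
    (aeval α).toLinearMap ∘ₗ (degreeLT K k).subtype
  let f : degreeLT K m × degreeLT K n →ₗ[K] A :=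
    (evalAt m).coprod (LinearMap.mulLeft K β ∘ₗ evalAt n)
  have hker : LinearMap.ker f ≠ ⊥ := LinearMap.ker_ne_bot_of_finrank_lt <| by
    rwa [Module.finrank_prod, finrank_degreeLT, finrank_degreeLT]
  obtain ⟨⟨p, q⟩, hpq, hne⟩ := Submodule.exists_mem_ne_zero_of_ne_bot hker
  refine ⟨p, p.2, q, q.2, fun ⟨hp, hq⟩ ↦ hne ?_, LinearMap.mem_ker.1 hpq⟩
  exact Prod.ext (Subtype.ext hp) (Subtype.ext hq)

lemma exists_natDegree_le_aeval_add_mul_aeval_eq_zero [CommRing A] [Algebra K A] {α β : A}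
    (hα : IsIntegral K α) (hβ : β ∈ Algebra.adjoin K {α}) {m n : ℕ}
    (hmn : (minpoly K α).natDegree < (m + 1) + (n + 1)) :
    ∃ p q : K[X], ¬(p = 0 ∧ q = 0) ∧ aeval α p + β * aeval α q = 0 ∧
      p.natDegree ≤ m ∧ q.natDegree ≤ n := by
  let S := Algebra.adjoin K {α}
  let α' : S := ⟨α, Algebra.self_mem_adjoin_singleton K α⟩
  let powerBasis := Algebra.adjoin.powerBasis hα
  have : FiniteDimensional K S := powerBasis.finite
  have finrank_eq : Module.finrank K S = (minpoly K α).natDegree := powerBasis.finrank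
  have natDegree_le {k : ℕ} {p : K[X]} (hp : p ∈ degreeLT K (k + 1)) : p.natDegree ≤ k :=
    natDegree_le_of_degree_le (mem_degreeLE.1 (degreeLT_succ_eq_degreeLE (R := K) ▸ hp))
  obtain ⟨p, hp, q, hq, hne, hpq⟩ :=
    exists_mem_degreeLT_aeval_add_mul_aeval_eq_zero (finrank_eq ▸ hmn) α' ⟨β, hβ⟩
  refine ⟨p, q, hne, ?_, natDegree_le hp, natDegree_le hq⟩
  simpa [Subalgebra.aeval_coe, α'] using congrArg S.val hpq

end ExistenceOverField

lemma exists_map_eq_C_mul_map_eq_C_mul {R K : Type*} [CommSemiring R] (M : Submonoid R)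
    [CommSemiring K] [Algebra R K] [IsLocalization M K] (p q : K[X]) :
    ∃ b ∈ M, ∃ P Q : R[X], P.map (algebraMap R K) = C (algebraMap R K b) * p ∧
      Q.map (algebraMap R K) = C (algebraMap R K b) * q := by
  let : Algebra R[X] K[X] := Polynomial.algebra R K
  have : IsLocalization (M.map C) K[X] := Polynomial.isLocalization M K
  obtain ⟨P, Q, ⟨_, b, hb, rfl⟩, hP, hQ⟩ := IsLocalization.surj₂ (M.map C) K[X] p q
  refine ⟨b, hb, P, Q, ?_, ?_⟩
  · simpa [mul_comm] using hP.symm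
  · simpa [mul_comm] using hQ.symm

lemma exists_natDegree_eq_aeval_add_mul_aeval_eq_zero_of_isFractionRing {R K A : Type*}
    [CommRing R] [Field K] [Algebra R K] [IsFractionRing R K] [Ring A] [Algebra R A] [Algebra K A]
    [IsScalarTower R K A] {α β : A} {p q : K[X]} (hne : ¬(p = 0 ∧ q = 0))
    (hpq : aeval α p + β * aeval α q = 0) :
    ∃ P Q : R[X], ¬(P = 0 ∧ Q = 0) ∧ aeval α P + β * aeval α Q = 0 ∧
      P.natDegree = p.natDegree ∧ Q.natDegree = q.natDegree := by
  obtain ⟨b, hb, P, Q, hP, hQ⟩ := exists_map_eq_C_mul_map_eq_C_mul (nonZeroDivisors R) p q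
  have hinj : Function.Injective (algebraMap R K) := IsFractionRing.injective R K
  have hb₀ : algebraMap R K b ≠ 0 := (IsLocalization.map_units K ⟨b, hb⟩).ne_zero
  refine ⟨P, Q, fun ⟨hP₀, hQ₀⟩ ↦ hne ⟨?_, ?_⟩, ?_, ?_, ?_⟩
  · simpa [hP₀, hb₀] using hP
  · simpa [hQ₀, hb₀] using hQ
  · calc aeval α P + β * aeval α Q
        = algebraMap K A (algebraMap R K b) * (aeval α p + β * aeval α q) := by
          rw [← aeval_map_algebraMap K α P, ← aeval_map_algebraMap K α Q, hP, hQ]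
          simp only [map_mul, aeval_C, mul_add, Algebra.left_comm]
      _ = 0 := by rw [hpq, mul_zero]
  · rw [← natDegree_map_eq_of_injective hinj, hP, natDegree_C_mul hb₀]
  · rw [← natDegree_map_eq_of_injective hinj, hQ, natDegree_C_mul hb₀]

section ConstantPairs

variable {K A : Type*} [Field K] [Ring A] [Algebra K A]

lemma mem_range_algebraMap_of_algebraMap_add_mul_algebraMap_eq_zero {β : A} {a b : K}
    (hne : ¬(a = 0 ∧ b = 0)) (hab : algebraMap K A a + β * algebraMap K A b = 0) :
    β ∈ (algebraMap K A).range := by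
  nontriviality A
  have hb : b ≠ 0 := by
    rintro rfl
    exact hne ⟨by simpa using hab, rfl⟩
  refine ⟨-a / b, ?_⟩
  calc algebraMap K A (-a / b)
      = -algebraMap K A a * algebraMap K A b⁻¹ := by rw [div_eq_mul_inv, map_mul, map_neg]
    _ = β * algebraMap K A b * algebraMap K A b⁻¹ := by rw [neg_eq_of_add_eq_zero_right hab]
    _ = β := by rw [mul_assoc, ← map_mul, mul_inv_cancel₀ hb, map_one, mul_one]

lemma one_le_max_natDegree_of_aeval_add_mul_aeval_eq_zero {R : Type*} [CommRing R] [Algebra R K]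
    [FaithfulSMul R K] [Algebra R A] [IsScalarTower R K A] {α β : A}
    (hβ : β ∉ (algebraMap K A).range) {P Q : R[X]} (hne : ¬(P = 0 ∧ Q = 0))
    (hPQ : aeval α P + β * aeval α Q = 0) : 1 ≤ max P.natDegree Q.natDegree := by
  by_contra! hlt
  obtain ⟨hP, hQ⟩ : P.natDegree = 0 ∧ Q.natDegree = 0 := by omega
  obtain ⟨a, rfl⟩ := natDegree_eq_zero.1 hP
  obtain ⟨b, rfl⟩ := natDegree_eq_zero.1 hQ
  refine hβ (mem_range_algebraMap_of_algebraMap_add_mul_algebraMap_eq_zero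
    (a := algebraMap R K a) (b := algebraMap R K b) ?_ ?_)
  · simpa using hne
  · simpa [← IsScalarTower.algebraMap_apply] using hPQ

end ConstantPairs

theorem minimal_pair_exists_and_degree_bound_general {A : Type*} [CommRing A] [Algebra ℚ A]
    {α β : A} (hα : IsAlgebraic ℚ α) (hβmem : β ∈ Algebra.adjoin ℚ {α})
    (hβirr : β ∉ (algebraMap ℚ A).range) :
    (∃ P Q : ℤ[X], ¬(P = 0 ∧ Q = 0) ∧ aeval α P + β * aeval α Q = 0 ∧
      max P.natDegree Q.natDegree ≤ (minpoly ℚ α).natDegree / 2) ∧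
    ∀ P Q : ℤ[X], IsMinimalPair α β P Q →
      1 ≤ max P.natDegree Q.natDegree ∧
        max P.natDegree Q.natDegree ≤ (minpoly ℚ α).natDegree / 2 := by
  obtain ⟨p, q, hne, hpq, hp, hq⟩ :=
    exists_natDegree_le_aeval_add_mul_aeval_eq_zero hα.isIntegral hβmem
      (m := (minpoly ℚ α).natDegree / 2) (n := (minpoly ℚ α).natDegree / 2) (by omega)
  obtain ⟨P₀, Q₀, hne₀, hPQ₀, hP₀, hQ₀⟩ :=
    exists_natDegree_eq_aeval_add_mul_aeval_eq_zero_of_isFractionRing (R := ℤ) hne hpq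
  have hdeg : max P₀.natDegree Q₀.natDegree ≤ (minpoly ℚ α).natDegree / 2 := by
    rw [hP₀, hQ₀]
    exact max_le hp hq
  exact ⟨⟨P₀, Q₀, hne₀, hPQ₀, hdeg⟩, fun P Q ⟨hne, hPQ, hmin, _⟩ ↦
    ⟨one_le_max_natDegree_of_aeval_add_mul_aeval_eq_zero hβirr hne hPQ,
      (hmin P₀ Q₀ hne₀ hPQ₀).trans hdeg⟩⟩

/-- Let `α` be an algebraic number of degree `d` over `ℚ` and let `β ∈ ℚ(α)` be
irrational. Then there exist `P, Q ∈ ℤ[x]`, not both identically zero, with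
`P(α) + β·Q(α) = 0` and `max (deg P, deg Q) ≤ ⌊d/2⌋`; moreover, if `P, Q` is a
minimal pair for `(α, β)`, then `1 ≤ r(α,β) ≤ ⌊d/2⌋`, where
`r(α,β) = max (deg P, deg Q)`. -/
theorem minimal_pair_exists_and_degree_bound
    (α : ℂ) (hα : IsAlgebraic ℚ α) (d : ℕ) (hdeg : (minpoly ℚ α).natDegree = d)
    (β : ℂ) (hβmem : β ∈ Algebra.adjoin ℚ {α}) (hβirr : ∀ q : ℚ, (q : ℂ) ≠ β) :
    (∃ P Q : Polynomial ℤ, ¬(P = 0 ∧ Q = 0) ∧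
      Polynomial.aeval α P + β * Polynomial.aeval α Q = 0 ∧
      max P.natDegree Q.natDegree ≤ d / 2) ∧
    ∀ P Q : Polynomial ℤ, IsMinimalPair α β P Q →
      1 ≤ max P.natDegree Q.natDegree ∧ max P.natDegree Q.natDegree ≤ d / 2 := by
  subst hdeg
  exact minimal_pair_exists_and_degree_bound_general hα hβmem fun ⟨q, hq⟩ ↦ hβirr q hq
end

section
/- Let α be an algebraic number of degree d over ℚ, let β ∈ ℚ(α) be irrational, and let P, Q be a minimal pair for (α, β). Then P and Q are coprime in ℚ[x]. -/
/-!
Over a field `F` with `β ∈ F(α)`, let `(p, q) ≠ (0, 0)` satisfy `p(α) + β q(α) = 0` with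
`max (deg p, deg q)` least possible. A common factor `z` of positive degree must vanish at `α`,
since otherwise dividing by `z` would give a pair of smaller degree. So if `p, q` are not coprime,
then `α` is algebraic and its minimal polynomial divides both `p` and `q`. But then `β = r(α)` with
`deg r < deg α`, and the pair `(r, -1)` shows that `p` and `q` have degree less than `deg α`, so
both are zero, a contradiction. Integer coefficients reduce to the case `F = ℚ` by clearing
denominators.
-/

open Polynomial

/-- Conditions (1)–(3) of a minimal pair, with coefficients in an arbitrary ring `R`: the pair
`p, q`, not both zero, satisfies `p(α) + β·q(α) = 0`, and `max (deg p, deg q)` is minimal among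
such pairs. The height is ignored, so the notion makes sense over `ℚ` as well as over `ℤ`. -/
structure IsDegreeMinimalPair {R A : Type*} [CommRing R] [CommRing A] [Algebra R A]
    (α β : A) (p q : R[X]) : Prop where
  ne_zero : ¬(p = 0 ∧ q = 0)
  relation : aeval α p + β * aeval α q = 0
  max_natDegree_le (p' q' : R[X]) : ¬(p' = 0 ∧ q' = 0) → aeval α p' + β * aeval α q' = 0 →
    max p.natDegree q.natDegree ≤ max p'.natDegree q'.natDegree

theorem IsMinimalPair.isDegreeMinimalPair {A : Type*} [CommRing A] {α β : A} {P Q : ℤ[X]}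
    (h : IsMinimalPair α β P Q) : IsDegreeMinimalPair α β P Q :=
  ⟨h.1, h.2.1, h.2.2.1⟩

theorem max_natDegree_mul_left_s9 {R : Type*} [Semiring R] [NoZeroDivisors R] {p q r : R[X]}
    (hr : r ≠ 0) (hpq : ¬(p = 0 ∧ q = 0)) :
    max (r * p).natDegree (r * q).natDegree = r.natDegree + max p.natDegree q.natDegree := by
  rcases eq_or_ne p 0 with rfl | hp
  · have hq : q ≠ 0 := fun hq => hpq ⟨rfl, hq⟩
    simp [natDegree_mul hr hq]
  rcases eq_or_ne q 0 with rfl | hq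
  · simp [natDegree_mul hr hp]
  · rw [natDegree_mul hr hp, natDegree_mul hr hq, Nat.add_max_add_left]

theorem exists_common_integer_multiple {R S : Type*} [CommRing R] [CommRing S] [Algebra R S]
    (M : Submonoid R) [IsLocalization M S] (p q : S[X]) :
    ∃ b ∈ M, ∃ P Q : R[X], P.map (algebraMap R S) = b • p ∧ Q.map (algebraMap R S) = b • q := by
  obtain ⟨a, ha, hP⟩ := IsLocalization.integerNormalization_spec M p
  obtain ⟨b, hb, hQ⟩ := IsLocalization.integerNormalization_spec M q
  refine ⟨a * b, mul_mem ha hb, b • IsLocalization.integerNormalization M p,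
    a • IsLocalization.integerNormalization M q, ?_, ?_⟩
  · rw [Polynomial.map_smul, hP, algebraMap_smul, smul_smul, mul_comm]
  · rw [Polynomial.map_smul, hQ, algebraMap_smul, smul_smul]

theorem exists_natDegree_lt_minpoly_aeval_eq {R A : Type*} [CommRing R] [Ring A] [Nontrivial A]
    [Algebra R A] {α β : A} (hα : IsIntegral R α) (hβ : β ∈ Algebra.adjoin R {α}) :
    ∃ r : R[X], r.natDegree < (minpoly R α).natDegree ∧ aeval α r = β := by
  rw [Algebra.adjoin_singleton_eq_range_aeval] at hβ
  obtain ⟨r, rfl⟩ := hβ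
  exact ⟨r %ₘ minpoly R α,
    natDegree_modByMonic_lt r (minpoly.monic hα) (minpoly.ne_one R α),
    aeval_modByMonic_eq_self_of_root (minpoly.aeval R α)⟩

namespace IsDegreeMinimalPair

theorem map_fractionRing {R K A : Type*} [CommRing R] [Field K] [Algebra R K]
    [IsFractionRing R K] [CommRing A] [Algebra R A] [Algebra K A] [IsScalarTower R K A]
    {α β : A} {P Q : R[X]} (h : IsDegreeMinimalPair α β P Q) :
    IsDegreeMinimalPair α β (P.map (algebraMap R K)) (Q.map (algebraMap R K)) where
  ne_zero := by
    simpa only [Polynomial.map_eq_zero_iff (IsFractionRing.injective R K)] using h.ne_zero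
  relation := by simpa only [aeval_map_algebraMap] using h.relation
  max_natDegree_le p q hne hrel := by
    have hinj := IsFractionRing.injective R K
    obtain ⟨b, hb, P', Q', hP', hQ'⟩ := exists_common_integer_multiple (nonZeroDivisors R) p q
    rw [← algebraMap_smul K] at hP' hQ'
    have hb₀ : algebraMap R K b ≠ 0 := (IsLocalization.map_units K ⟨b, hb⟩).ne_zero
    have hne' : ¬(P' = 0 ∧ Q' = 0) := by
      rw [← Polynomial.map_eq_zero_iff hinj, ← Polynomial.map_eq_zero_iff hinj, hP', hQ']
      rwa [smul_eq_zero_iff_right hb₀, smul_eq_zero_iff_right hb₀]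
    have hrel' : aeval α P' + β * aeval α Q' = 0 := by
      rw [← aeval_map_algebraMap K α P', ← aeval_map_algebraMap K α Q', hP', hQ',
        map_smul, map_smul, mul_smul_comm, ← smul_add, hrel, smul_zero]
    have hle := h.max_natDegree_le P' Q' hne' hrel'
    rw [← natDegree_map_eq_of_injective hinj P', ← natDegree_map_eq_of_injective hinj Q',
      hP', hQ'] at hle
    rw [natDegree_map_eq_of_injective hinj, natDegree_map_eq_of_injective hinj]
    exact hle.trans (max_le_max (natDegree_smul_le _ p) (natDegree_smul_le _ q))

section CommRing

variable {R A : Type*} [CommRing R] [CommRing A] [Algebra R A] {α β : A} {p q : R[X]}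

theorem aeval_eq_zero_of_dvd [NoZeroDivisors R] [NoZeroDivisors A]
    (h : IsDegreeMinimalPair α β p q) {z : R[X]} (hz : 0 < z.natDegree) (hzp : z ∣ p)
    (hzq : z ∣ q) : aeval α z = 0 := by
  obtain ⟨p', rfl⟩ := hzp
  obtain ⟨q', rfl⟩ := hzq
  by_contra hzα
  have hne : ¬(p' = 0 ∧ q' = 0) := by
    rintro ⟨rfl, rfl⟩
    exact h.ne_zero ⟨mul_zero z, mul_zero z⟩
  have hrel : aeval α p' + β * aeval α q' = 0 := by
    have hmul := h.relation
    rw [map_mul, map_mul, mul_left_comm, ← mul_add] at hmul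
    exact (mul_eq_zero.mp hmul).resolve_left hzα
  have hle := h.max_natDegree_le p' q' hne hrel
  rw [max_natDegree_mul_left_s9 (ne_zero_of_natDegree_gt hz) hne] at hle
  omega

theorem max_natDegree_lt_minpoly [Nontrivial A] (h : IsDegreeMinimalPair α β p q)
    (hα : IsIntegral R α) (hβ : β ∈ Algebra.adjoin R {α}) :
    max p.natDegree q.natDegree < (minpoly R α).natDegree := by
  have : Nontrivial R := (algebraMap R A).domain_nontrivial
  obtain ⟨r, hr, hrβ⟩ := exists_natDegree_lt_minpoly_aeval_eq hα hβ
  have hle := h.max_natDegree_le r (-1) (by simp) (by simp [hrβ])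
  rw [natDegree_neg, natDegree_one, max_eq_left (Nat.zero_le _)] at hle
  exact hle.trans_lt hr

end CommRing

open IntermediateField in
theorem isCoprime {F L : Type*} [Field F] [Field L] [Algebra F L] {α β : L} {p q : F[X]}
    (h : IsDegreeMinimalPair α β p q) (hβ : β ∈ F⟮α⟯) : IsCoprime p q := by
  refine isCoprime_of_irreducible_dvd h.ne_zero fun z hz hzp hzq => ?_
  have hzα : aeval α z = 0 := h.aeval_eq_zero_of_dvd hz.natDegree_pos hzp hzq
  have hα : IsAlgebraic F α := ⟨z, hz.ne_zero, hzα⟩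
  have hlt : max p.natDegree q.natDegree < (minpoly F α).natDegree := by
    refine h.max_natDegree_lt_minpoly hα.isIntegral ?_
    rwa [← adjoin_simple_toSubalgebra_of_isAlgebraic hα]
  have hdvd : minpoly F α ∣ z := minpoly.dvd F α hzα
  exact h.ne_zero
    ⟨eq_zero_of_dvd_of_natDegree_lt (hdvd.trans hzp) ((le_max_left _ _).trans_lt hlt),
      eq_zero_of_dvd_of_natDegree_lt (hdvd.trans hzq) ((le_max_right _ _).trans_lt hlt)⟩

end IsDegreeMinimalPair

open IntermediateField in
theorem minimal_pair_coprime_general {L : Type*} [Field L] [Algebra ℚ L] {α β : L}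
    (hβ : β ∈ ℚ⟮α⟯) {P Q : ℤ[X]} (hmin : IsMinimalPair α β P Q) :
    IsCoprime (P.map (Int.castRingHom ℚ)) (Q.map (Int.castRingHom ℚ)) :=
  hmin.isDegreeMinimalPair.map_fractionRing.isCoprime hβ

/-- Let `α` be an algebraic number of degree `d` over `ℚ`, let `β ∈ ℚ(α)` be
irrational, and let `P, Q` be a minimal pair for `(α, β)`. Then `P` and `Q` are
coprime in `ℚ[x]`. -/
theorem minimal_pair_coprime
    (α : ℂ) (hα : IsAlgebraic ℚ α) (d : ℕ) (hdeg : (minpoly ℚ α).natDegree = d)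
    (β : ℂ) (hβmem : β ∈ Algebra.adjoin ℚ {α}) (hβirr : ∀ q : ℚ, (q : ℂ) ≠ β)
    (P Q : Polynomial ℤ) (hmin : IsMinimalPair α β P Q) :
    IsCoprime (P.map (Int.castRingHom ℚ)) (Q.map (Int.castRingHom ℚ)) :=
  minimal_pair_coprime_general (IntermediateField.algebra_adjoin_le_adjoin ℚ {α} hβmem) hmin
end

section
/- Let α be an algebraic number of degree d over ℚ, let β ∈ ℚ(α) be irrational, let P, Q be a minimal pair for (α, β) and set r = r(α,β). If P̂, Q̂ ∈ ℤ[x] satisfy P̂(α) + β·Q̂(α) = 0 and max(deg P̂, deg Q̂) ≤ d − 1 − r, then there exists G ∈ ℤ[x] with P̂ = G·P and Q̂ = G·Q. -/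
/-!
Since `P(α) = -β Q(α)` and `P̂(α) = -β Q̂(α)`, the integer polynomial `P Q̂ - P̂ Q` vanishes at
`α`. Its degree is at most `r + (d - 1 - r) < d`, so `P Q̂ = P̂ Q`. When `r < d`, the members of a
minimal pair are relatively prime in `ℤ[x]`: dividing out a common factor of positive degree would
lower the degree, and dividing out an integer of absolute value at least `2` would lower the height.
Hence `(P̂, Q̂)` is a multiple of `(P, Q)` by unique factorization in `ℤ[x]`.
-/

open Polynomial

theorem exists_eq_mul_and_eq_mul_of_isRelPrime {M : Type*} [CommMonoidWithZero M]
    [IsCancelMulZero M] [Nontrivial M] [DecompositionMonoid M] {a b c d : M}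
    (hab : IsRelPrime a b) (h : a * d = c * b) : ∃ g, c = g * a ∧ d = g * b := by
  rcases hab.ne_zero_or_ne_zero with ha | hb
  · obtain ⟨u, rfl⟩ : a ∣ c := hab.dvd_of_dvd_mul_right ⟨d, h.symm⟩
    refine ⟨u, mul_comm a u, mul_left_cancel₀ ha ?_⟩
    rw [h, mul_assoc]
  · obtain ⟨v, rfl⟩ : b ∣ d := hab.symm.dvd_of_dvd_mul_left ⟨c, by rw [h, mul_comm]⟩
    refine ⟨v, mul_right_cancel₀ hb ?_, mul_comm b v⟩
    rw [← h, mul_comm b v, mul_assoc, mul_left_comm]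

section Aeval

variable {A K : Type*} [CommRing A] [Field K] [Algebra A K] [FaithfulSMul A K]

theorem eq_zero_of_aeval_eq_zero_of_natDegree_lt_minpoly {B : Type*} [Ring B] [Algebra A B]
    [Algebra K B] [IsScalarTower A K B] {x : B} {F : A[X]} (hF : aeval x F = 0)
    (hdeg : F.natDegree < (minpoly K x).natDegree) : F = 0 := by
  have hinj : Function.Injective (algebraMap A K) := FaithfulSMul.algebraMap_injective A K
  have hdvd : minpoly K x ∣ F.map (algebraMap A K) :=
    minpoly.dvd K x (by rwa [aeval_map_algebraMap])
  refine (Polynomial.map_eq_zero_iff hinj).1 (eq_zero_of_dvd_of_natDegree_lt hdvd ?_)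
  rwa [natDegree_map_eq_of_injective hinj]

theorem mul_eq_mul_of_aeval_add_mul_aeval_eq_zero {B : Type*} [CommRing B] [Algebra A B]
    [Algebra K B] [IsScalarTower A K B] {x y : B} {P Q P' Q' : A[X]}
    (h : aeval x P + y * aeval x Q = 0) (h' : aeval x P' + y * aeval x Q' = 0)
    (hdeg : max P.natDegree Q.natDegree + max P'.natDegree Q'.natDegree <
      (minpoly K x).natDegree) :
    P * Q' = P' * Q := by
  refine sub_eq_zero.1 (eq_zero_of_aeval_eq_zero_of_natDegree_lt_minpoly (K := K) (x := x) ?_ ?_)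
  · simp only [map_sub, map_mul]
    linear_combination aeval x Q' * h - aeval x Q * h'
  · have hPQ' : (P * Q').natDegree ≤ P.natDegree + Q'.natDegree := natDegree_mul_le
    have hP'Q : (P' * Q).natDegree ≤ P'.natDegree + Q.natDegree := natDegree_mul_le
    have hsub := natDegree_sub_le (P * Q') (P' * Q)
    omega

end Aeval

theorem aeval_add_mul_aeval_eq_zero_of_mul {A B : Type*} [CommSemiring A] [CommSemiring B]
    [NoZeroDivisors B] [Algebra A B] {x y : B} {D F G : A[X]} (hD : aeval x D ≠ 0)
    (h : aeval x (D * F) + y * aeval x (D * G) = 0) : aeval x F + y * aeval x G = 0 := by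
  refine (mul_eq_zero_iff_left hD).1 ?_
  rw [← h, map_mul, map_mul, mul_add, mul_left_comm]

theorem max_natDegree_mul_left_s10 {A : Type*} [Semiring A] [NoZeroDivisors A] {D F G : A[X]}
    (hD : D ≠ 0) (hFG : ¬(F = 0 ∧ G = 0)) :
    max (D * F).natDegree (D * G).natDegree = D.natDegree + max F.natDegree G.natDegree := by
  by_cases hF : F = 0 <;> by_cases hG : G = 0
  · exact absurd ⟨hF, hG⟩ hFG
  all_goals simp [hF, hG, hD, natDegree_mul, Nat.add_max_add_left]

theorem polyHeight_C_mul (c : ℤ) (F : ℤ[X]) :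
    polyHeight (C c * F) = c.natAbs * polyHeight F := by
  rcases eq_or_ne c 0 with rfl | hc
  · simp [polyHeight]
  have hsupp : (C c * F).support = F.support := by
    ext i
    simp [hc]
  simp only [polyHeight, hsupp, coeff_C_mul, Int.natAbs_mul]
  exact (Finset.apply_sup_eq_sup_comp (fun n : ℕ => c.natAbs * n)
    (fun m n => (Nat.mul_max_mul_left _ m n).symm) (mul_zero _)).symm

theorem polyHeight_pos {F : ℤ[X]} (hF : F ≠ 0) : 0 < polyHeight F :=
  calc 0 < F.leadingCoeff.natAbs := Int.natAbs_pos.2 (leadingCoeff_ne_zero.2 hF)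
    _ ≤ polyHeight F := Finset.le_sup (f := fun i => (F.coeff i).natAbs)
        (natDegree_mem_support_of_nonzero hF)

namespace IsMinimalPair

variable {R : Type*} [CommRing R] {α β : R}

theorem not_eq_zero_and_eq_zero_of_mul {D F G : ℤ[X]}
    (h : IsMinimalPair α β (D * F) (D * G)) : ¬(F = 0 ∧ G = 0) :=
  fun ⟨hF, hG⟩ => h.1 (by simp [hF, hG])

variable [NoZeroDivisors R]

theorem natDegree_eq_zero_of_mul {D F G : ℤ[X]} (h : IsMinimalPair α β (D * F) (D * G))
    (hD : aeval α D ≠ 0) : D.natDegree = 0 := by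
  have hFG := h.not_eq_zero_and_eq_zero_of_mul
  obtain ⟨-, hrel, hdegree, -⟩ := h
  have hD0 : D ≠ 0 := fun h0 => hD (by simp [h0])
  have hle := hdegree F G hFG (aeval_add_mul_aeval_eq_zero_of_mul hD hrel)
  rw [max_natDegree_mul_left_s10 hD0 hFG] at hle
  omega

theorem isUnit_of_C_mul {c : ℤ} {F G : ℤ[X]} (h : IsMinimalPair α β (C c * F) (C c * G))
    (hc : aeval α (C c) ≠ 0) : IsUnit c := by
  have hFG := h.not_eq_zero_and_eq_zero_of_mul
  obtain ⟨-, hrel, -, hheight⟩ := h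
  have hc0 : c ≠ 0 := fun h0 => hc (by simp [h0])
  have hle := hheight F G hFG (aeval_add_mul_aeval_eq_zero_of_mul hc hrel)
    (by simp only [natDegree_C_mul hc0])
  rw [polyHeight_C_mul, polyHeight_C_mul, Nat.mul_max_mul_left] at hle
  have hpos : 0 < max (polyHeight F) (polyHeight G) := by
    rw [lt_max_iff]
    exact (not_and_or.1 hFG).imp polyHeight_pos polyHeight_pos
  have hc_le : c.natAbs ≤ 1 := le_of_mul_le_mul_right (by rwa [one_mul]) hpos
  exact Int.isUnit_iff_natAbs_eq.2 (le_antisymm hc_le (Int.natAbs_pos.2 hc0))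

theorem isUnit_of_mul {D F G : ℤ[X]} (h : IsMinimalPair α β (D * F) (D * G))
    (hD : aeval α D ≠ 0) : IsUnit D := by
  obtain ⟨c, rfl⟩ := natDegree_eq_zero.1 (h.natDegree_eq_zero_of_mul hD)
  exact isUnit_C.2 (h.isUnit_of_C_mul hD)

theorem isRelPrime [Algebra ℚ R] {P Q : ℤ[X]} (h : IsMinimalPair α β P Q)
    (hdeg : max P.natDegree Q.natDegree < (minpoly ℚ α).natDegree) : IsRelPrime P Q := by
  rintro D ⟨F, rfl⟩ ⟨G, rfl⟩
  have hD : D ≠ 0 := fun h0 => h.1 (by simp [h0])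
  rw [max_natDegree_mul_left_s10 hD h.not_eq_zero_and_eq_zero_of_mul] at hdeg
  exact h.isUnit_of_mul fun hα =>
    hD (eq_zero_of_aeval_eq_zero_of_natDegree_lt_minpoly (K := ℚ) hα (by omega))

end IsMinimalPair

theorem minimal_pair_divides_general {R : Type*} [CommRing R] [NoZeroDivisors R]
    [Algebra ℚ R] {α β : R} {P Q Phat Qhat : ℤ[X]} (hmin : IsMinimalPair α β P Q)
    (hhat : aeval α Phat + β * aeval α Qhat = 0)
    (hdeg : max P.natDegree Q.natDegree + max Phat.natDegree Qhat.natDegree <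
      (minpoly ℚ α).natDegree) :
    ∃ G : ℤ[X], Phat = G * P ∧ Qhat = G * Q := by
  have hcoprime : IsRelPrime P Q := hmin.isRelPrime (by omega)
  have hcross : P * Qhat = Phat * Q :=
    mul_eq_mul_of_aeval_add_mul_aeval_eq_zero hmin.2.1 hhat hdeg
  exact exists_eq_mul_and_eq_mul_of_isRelPrime hcoprime hcross

/-- Let `α` be an algebraic number of degree `d` over `ℚ`, let `β ∈ ℚ(α)` be
irrational, let `P, Q` be a minimal pair for `(α, β)` and set
`r = r(α,β) = max (deg P, deg Q)`. If `P̂, Q̂ ∈ ℤ[x]` satisfy `P̂(α) + β·Q̂(α) = 0`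
and `max (deg P̂, deg Q̂) ≤ d − 1 − r`, then there exists `G ∈ ℤ[x]` with
`P̂ = G·P` and `Q̂ = G·Q`. -/
theorem minimal_pair_divides
    (α : ℂ) (hα : IsAlgebraic ℚ α) (d : ℕ) (hdeg : (minpoly ℚ α).natDegree = d)
    (β : ℂ) (hβmem : β ∈ Algebra.adjoin ℚ {α}) (hβirr : ∀ q : ℚ, (q : ℂ) ≠ β)
    (P Q : Polynomial ℤ) (hmin : IsMinimalPair α β P Q)
    (Phat Qhat : Polynomial ℤ)
    (hhat : Polynomial.aeval α Phat + β * Polynomial.aeval α Qhat = 0)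
    (hhatdeg : (max Phat.natDegree Qhat.natDegree : ℤ) ≤
      (d : ℤ) - 1 - (max P.natDegree Q.natDegree : ℤ)) :
    ∃ G : Polynomial ℤ, Phat = G * P ∧ Qhat = G * Q :=
  minimal_pair_divides_general hmin hhat (by omega)
end

section
/- Let p be a rational prime, let α ∈ ℚ_p be a p-adic algebraic number of degree d over ℚ, let β ∈ ℚ(α) be irrational, let P, Q be a minimal pair for (α, β), and let W = P·Q′ − Q·P′ be the Wronskian of P and Q. Then there exists a positive real number C₁₄, depending only on α and β, such that |W(α)|_p ≥ C₁₄. -/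
/-!
Two minimal pairs for `(α, β)` have the same maximal degree and the same maximal height, so there
are only finitely many of them, and it is enough that `W(α) ≠ 0` for each. Substituting
`P(α) = -β Q(α)` in the Wronskian gives `W(α) = -Q(α) (P'(α) + β Q'(α))`. As `β` is irrational,
`P` and `Q` are not both constant, so `(P', Q')` is nonzero of smaller degree than the minimal pair
`(P, Q)`, and the second factor does not vanish. If `Q(α) = 0`, then also `P(α) = 0`, so `α` is
algebraic, and writing `β` as a polynomial in `α` of degree less than that of `α` forces the minimal
pair to have degree less than that of `α` too; then `P = Q = 0`, a contradiction.
-/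

open Polynomial

lemma finite_setOf_natDegree_le_forall_coeff_mem {R : Type*} [Semiring R] (n : ℕ) {s : Set R}
    (hs : s.Finite) : {P : R[X] | P.natDegree ≤ n ∧ ∀ i, P.coeff i ∈ s}.Finite := by
  refine Set.Finite.of_finite_image (f := fun P (i : Fin (n + 1)) => P.coeff i) ?_ ?_
  · refine (Set.Finite.pi' fun _ => hs).subset ?_
    rintro _ ⟨P, ⟨-, hP⟩, rfl⟩ i
    exact hP i
  · rintro P ⟨hP, -⟩ Q ⟨hQ, -⟩ hPQ
    exact (ext_iff_natDegree_le hP hQ).2 fun i hi => congrFun hPQ ⟨i, Nat.lt_succ_of_le hi⟩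

lemma natAbs_coeff_le_polyHeight (P : ℤ[X]) (i : ℕ) : (P.coeff i).natAbs ≤ polyHeight P := by
  by_cases hi : i ∈ P.support
  · exact Finset.le_sup (f := fun i => (P.coeff i).natAbs) hi
  · simp [notMem_support_iff.1 hi]

lemma finite_setOf_natDegree_le_polyHeight_le (n h : ℕ) :
    {P : ℤ[X] | P.natDegree ≤ n ∧ polyHeight P ≤ h}.Finite := by
  refine (finite_setOf_natDegree_le_forall_coeff_mem n (Set.finite_Icc (-(h : ℤ)) h)).subset ?_
  rintro P ⟨hdeg, hheight⟩
  refine ⟨hdeg, fun i => ?_⟩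
  have hcoeff := (natAbs_coeff_le_polyHeight P i).trans hheight
  rw [Set.mem_Icc]
  omega

lemma exists_pos_forall_mem_le_norm {E : Type*} [NormedAddGroup E] {s : Set E} (hs : s.Finite)
    (h0 : 0 ∉ s) : ∃ C : ℝ, 0 < C ∧ ∀ x ∈ s, C ≤ ‖x‖ := by
  obtain ⟨C, hC, hball⟩ := Metric.isOpen_iff.1 hs.isClosed.isOpen_compl 0 h0
  exact ⟨C, hC, fun x hx => le_of_not_gt fun hlt => hball (mem_ball_zero_iff.2 hlt) hx⟩

lemma natDegree_integerNormalization_le {A S : Type*} [CommRing A] (M : Submonoid A) [CommRing S]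
    [Algebra A S] [IsLocalization M S] (f : S[X]) :
    (IsLocalization.integerNormalization M f).natDegree ≤ f.natDegree :=
  natDegree_le_natDegree (Finset.sup_mono (IsLocalization.integerNormalization_support M f))

section Minpoly

variable {A F K : Type*} [CommRing A] [Field F] [Ring K] [Algebra A F] [Algebra F K] [Algebra A K]
  [IsScalarTower A F K]

lemma eq_zero_of_aeval_eq_zero_of_natDegree_lt_minpoly_s13 [FaithfulSMul A F] {α : K} {P : A[X]}
    (hP : aeval α P = 0) (hdeg : P.natDegree < (minpoly F α).natDegree) : P = 0 := by
  have hinj : Function.Injective (algebraMap A F) := FaithfulSMul.algebraMap_injective A F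
  rw [← Polynomial.map_eq_zero_iff hinj]
  refine eq_zero_of_dvd_of_natDegree_lt (minpoly.dvd F α ?_) ?_
  · rw [aeval_map_algebraMap, hP]
  · rwa [natDegree_map_eq_of_injective hinj]

lemma exists_aeval_eq_of_mem_adjoin_singleton [Nontrivial K] {α β : K} (hα : IsIntegral F α)
    (hβ : β ∈ Algebra.adjoin F {α}) :
    ∃ f : F[X], f.natDegree < (minpoly F α).natDegree ∧ aeval α f = β := by
  rw [Algebra.adjoin_singleton_eq_range_aeval] at hβ
  obtain ⟨g, rfl⟩ := hβ
  exact ⟨g %ₘ minpoly F α, natDegree_modByMonic_lt g (minpoly.monic hα) (minpoly.ne_one F α),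
    aeval_modByMonic_eq_self_of_root (minpoly.aeval F α)⟩

lemma exists_aeval_eq_smul_of_mem_adjoin_singleton (M : Submonoid A) [IsLocalization M F]
    [Nontrivial K] {α β : K} (hα : IsIntegral F α) (hβ : β ∈ Algebra.adjoin F {α}) :
    ∃ P : A[X], ∃ b ∈ M, P.natDegree < (minpoly F α).natDegree ∧ aeval α P = b • β := by
  obtain ⟨f, hdeg, rfl⟩ := exists_aeval_eq_of_mem_adjoin_singleton hα hβ
  obtain ⟨b, hb, hmap⟩ := IsLocalization.integerNormalization_spec M f
  refine ⟨_, b, hb, (natDegree_integerNormalization_le M f).trans_lt hdeg, ?_⟩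
  rw [← aeval_map_algebraMap F α, hmap]
  exact (aeval α).toLinearMap.map_smul_of_tower b f

end Minpoly

/-- Conditions (1) and (2) in the definition of a minimal pair: `P, Q ∈ ℤ[x]` are not both zero
and `α` is a root of `P + β·Q`. These are the pairs among which `IsMinimalPair` minimizes. -/
def IsAnnihilatingPair {R : Type*} [CommRing R] (α β : R) (P Q : ℤ[X]) : Prop :=
  ¬(P = 0 ∧ Q = 0) ∧ aeval α P + β * aeval α Q = 0

section CommRing

variable {R : Type*} [CommRing R] {α β : R} {P Q P' Q' : ℤ[X]}

namespace IsAnnihilatingPair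

lemma aeval_left_eq_zero (h : IsAnnihilatingPair α β P Q) (hQ : aeval α Q = 0) :
    aeval α P = 0 := by
  simpa [hQ] using h.2

lemma isAlgebraic_of_aeval_right_eq_zero (h : IsAnnihilatingPair α β P Q)
    (hQ : aeval α Q = 0) : IsAlgebraic ℤ α := by
  rcases not_and_or.1 h.1 with hP0 | hQ0
  · exact ⟨P, hP0, h.aeval_left_eq_zero hQ⟩
  · exact ⟨Q, hQ0, hQ⟩

end IsAnnihilatingPair

namespace IsMinimalPair

lemma isAnnihilatingPair (h : IsMinimalPair α β P Q) : IsAnnihilatingPair α β P Q :=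
  ⟨h.1, h.2.1⟩

lemma max_natDegree_le (h : IsMinimalPair α β P Q) (h' : IsAnnihilatingPair α β P' Q') :
    max P.natDegree Q.natDegree ≤ max P'.natDegree Q'.natDegree :=
  h.2.2.1 P' Q' h'.1 h'.2

lemma max_natDegree_eq (h : IsMinimalPair α β P Q) (h' : IsMinimalPair α β P' Q') :
    max P.natDegree Q.natDegree = max P'.natDegree Q'.natDegree :=
  (h.max_natDegree_le h'.isAnnihilatingPair).antisymm (h'.max_natDegree_le h.isAnnihilatingPair)

lemma max_polyHeight_le (h : IsMinimalPair α β P Q) (h' : IsMinimalPair α β P' Q') :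
    max (polyHeight P) (polyHeight Q) ≤ max (polyHeight P') (polyHeight Q') :=
  h.2.2.2 P' Q' h'.1 h'.2.1 (h'.max_natDegree_eq h)

end IsMinimalPair

lemma finite_setOf_isMinimalPair (α β : R) :
    {x : ℤ[X] × ℤ[X] | IsMinimalPair α β x.1 x.2}.Finite := by
  obtain hempty | ⟨⟨P₀, Q₀⟩, h₀⟩ :=
    {x : ℤ[X] × ℤ[X] | IsMinimalPair α β x.1 x.2}.eq_empty_or_nonempty
  · exact hempty ▸ Set.finite_empty
  · have hfin := finite_setOf_natDegree_le_polyHeight_le (max P₀.natDegree Q₀.natDegree)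
      (max (polyHeight P₀) (polyHeight Q₀))
    refine (hfin.prod hfin).subset fun ⟨P, Q⟩ h => ?_
    obtain ⟨hdegP, hdegQ⟩ := max_le_iff.1 (h.max_natDegree_eq h₀).le
    obtain ⟨hheightP, hheightQ⟩ := max_le_iff.1 (h.max_polyHeight_le h₀)
    exact ⟨⟨hdegP, hheightP⟩, ⟨hdegQ, hheightQ⟩⟩

lemma aeval_wronskian_of_aeval_add_mul_eq_zero {A : Type*} [CommRing A] [Algebra A R] {P Q : A[X]}
    (h : aeval α P + β * aeval α Q = 0) :
    aeval α (wronskian P Q) =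
      -(aeval α Q * (aeval α (derivative P) + β * aeval α (derivative Q))) := by
  simp only [wronskian, map_sub, map_mul]
  linear_combination aeval α (derivative Q) * h

end CommRing

section Field

variable {K : Type*} [Field K] [CharZero K] {α β : K} {P Q : ℤ[X]}

lemma exists_isAnnihilatingPair_natDegree_lt (hα : IsIntegral ℚ α)
    (hβ : β ∈ Algebra.adjoin ℚ {α}) :
    ∃ P Q : ℤ[X], IsAnnihilatingPair α β P Q ∧
      max P.natDegree Q.natDegree < (minpoly ℚ α).natDegree := by
  obtain ⟨P, b, hb, hdeg, hP⟩ :=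
    exists_aeval_eq_smul_of_mem_adjoin_singleton (nonZeroDivisors ℤ) hα hβ
  refine ⟨P, C (-b), ⟨fun h => nonZeroDivisors.ne_zero hb (by simpa using h.2), ?_⟩, ?_⟩
  · simp [hP, mul_comm]
  · rwa [natDegree_C, Nat.max_zero]

lemma IsAnnihilatingPair.max_natDegree_ne_zero (h : IsAnnihilatingPair α β P Q)
    (hβ : ∀ q : ℚ, (q : K) ≠ β) : max P.natDegree Q.natDegree ≠ 0 := by
  intro hdeg
  obtain ⟨a, rfl⟩ := natDegree_eq_zero.1 (show P.natDegree = 0 by omega)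
  obtain ⟨b, rfl⟩ := natDegree_eq_zero.1 (show Q.natDegree = 0 by omega)
  obtain ⟨hne, hrel⟩ := h
  simp only [eq_intCast, map_intCast] at hrel
  have hb : b ≠ 0 := by
    rintro rfl
    exact hne (by simpa using hrel)
  apply hβ (-a / b)
  push_cast
  field_simp
  linear_combination -hrel

namespace IsMinimalPair

lemma aeval_right_ne_zero (h : IsMinimalPair α β P Q) (hβ : β ∈ IntermediateField.adjoin ℚ {α}) :
    aeval α Q ≠ 0 := by
  intro hQ
  have hP := h.isAnnihilatingPair.aeval_left_eq_zero hQ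
  have hα : IsAlgebraic ℚ α :=
    (h.isAnnihilatingPair.isAlgebraic_of_aeval_right_eq_zero hQ).extendScalars
      (algebraMap ℤ ℚ).injective_int
  rw [← IntermediateField.mem_toSubalgebra,
    IntermediateField.adjoin_simple_toSubalgebra_of_isAlgebraic hα] at hβ
  obtain ⟨P₁, Q₁, h₁, hlt⟩ := exists_isAnnihilatingPair_natDegree_lt hα.isIntegral hβ
  obtain ⟨hdegP, hdegQ⟩ := max_lt_iff.1 ((h.max_natDegree_le h₁).trans_lt hlt)
  exact h.1 ⟨eq_zero_of_aeval_eq_zero_of_natDegree_lt_minpoly_s13 hP hdegP,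
    eq_zero_of_aeval_eq_zero_of_natDegree_lt_minpoly_s13 hQ hdegQ⟩

lemma aeval_derivative_add_mul_ne_zero (h : IsMinimalPair α β P Q)
    (hβ : ∀ q : ℚ, (q : K) ≠ β) :
    aeval α (derivative P) + β * aeval α (derivative Q) ≠ 0 := by
  intro hrel
  have hpos := h.isAnnihilatingPair.max_natDegree_ne_zero hβ
  have hne : ¬(derivative P = 0 ∧ derivative Q = 0) := by
    rw [derivative_eq_zero, derivative_eq_zero]
    omega
  have hle := h.max_natDegree_le ⟨hne, hrel⟩
  have hdegP := natDegree_derivative_le P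
  have hdegQ := natDegree_derivative_le Q
  omega

lemma aeval_wronskian_ne_zero (h : IsMinimalPair α β P Q)
    (hβmem : β ∈ IntermediateField.adjoin ℚ {α}) (hβirr : ∀ q : ℚ, (q : K) ≠ β) :
    aeval α (wronskian P Q) ≠ 0 := by
  rw [aeval_wronskian_of_aeval_add_mul_eq_zero h.isAnnihilatingPair.2]
  exact neg_ne_zero.2
    (mul_ne_zero (h.aeval_right_ne_zero hβmem) (h.aeval_derivative_add_mul_ne_zero hβirr))

end IsMinimalPair

end Field

theorem minimal_pair_wronskian_lower_bound_padic_general {K : Type*} [NormedField K] [CharZero K]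
    {α β : K} (hβmem : β ∈ IntermediateField.adjoin ℚ {α}) (hβirr : ∀ q : ℚ, (q : K) ≠ β) :
    ∃ c : ℝ, 0 < c ∧ ∀ P Q : ℤ[X], IsMinimalPair α β P Q →
      c ≤ ‖aeval α (P * derivative Q - Q * derivative P)‖ := by
  have hfin := (finite_setOf_isMinimalPair α β).image fun x => aeval α (wronskian x.1 x.2)
  obtain ⟨c, hc, hle⟩ := exists_pos_forall_mem_le_norm hfin fun ⟨_, h, h0⟩ =>
    h.aeval_wronskian_ne_zero hβmem hβirr h0
  refine ⟨c, hc, fun P Q h => ?_⟩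
  rw [mul_comm Q]
  exact hle _ ⟨(P, Q), h, rfl⟩

/-- Let `p` be a rational prime, let `α ∈ ℚ_p` be a `p`-adic algebraic number of
degree `d` over `ℚ`, let `β ∈ ℚ(α)` be irrational, let `P, Q` be a minimal pair for
`(α, β)` and let `W = P·Q′ − Q·P′` be the Wronskian of `P` and `Q`. Then there exists
a positive real `C₁₄`, depending only on `α` and `β`, such that `|W(α)|_p ≥ C₁₄`. -/
theorem minimal_pair_wronskian_lower_bound_padic
    (p : ℕ) [Fact p.Prime]
    (α : ℚ_[p]) (hα : IsAlgebraic ℚ α) (d : ℕ) (hdeg : (minpoly ℚ α).natDegree = d)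
    (β : ℚ_[p]) (hβmem : β ∈ Algebra.adjoin ℚ {α}) (hβirr : ∀ q : ℚ, (q : ℚ_[p]) ≠ β) :
    ∃ C₁₄ : ℝ, 0 < C₁₄ ∧
      ∀ P Q : Polynomial ℤ, IsMinimalPair α β P Q →
        C₁₄ ≤ ‖Polynomial.aeval α (P * Q.derivative - Q * P.derivative)‖ := by
  exact minimal_pair_wronskian_lower_bound_padic_general
    (IntermediateField.algebra_adjoin_le_adjoin ℚ {α} hβmem) hβirr
end

section
/- Let P, Q ∈ ℤ[x] be coprime polynomials with r = max(deg P, deg Q) ≥ 1. Let x₁/y₁ and x₂/y₂ be rational numbers in lowest terms such that H(x₂,y₂) ≥ H(x₁,y₁) and P(x₁/y₁) + (x₂/y₂)·Q(x₁/y₁) = 0. Then H(x₂,y₂) ≥ H(x₁,y₁)^r / (C₁₅ · max(H(P), H(Q))^{2r² + 3r}), where C₁₅ = 2^{r²} · (r+1)^{(3r² + 2r)/2}. -/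
/-!
Cramer's rule for the Sylvester matrix of `P` and `Q`, regarded as polynomials of degree `r`, writes
`R * X ^ (2 * r - 1)` and `R` as combinations of `P` and `Q` with integer cofactors of degree less
than `r`, where `R ≠ 0` is the resultant. The cofactors are minors of the Sylvester matrix, so their
coefficients are at most `(2 * r - 1)! * max (H(P), H(Q)) ^ (2 * r - 1)`. Evaluate at `x = x₁ / y₁`.
The height of a tuple does not change under scaling, so `R` disappears and
`H(x) ^ (2 * r - 1) ≤ c * H(x) ^ (r - 1) * H(P(x) : Q(x))`; and `H(P(x) : Q(x)) = H(x₂, y₂)` because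
`x₂ / y₂ = -P(x) / Q(x)`.
-/

open Polynomial

section Sylvester

open scoped Nat

variable {R S : Type*} [CommRing R] [CommRing S] [LinearOrder S] {abv : AbsoluteValue R S} {x : S}
  {f g : R[X]} {m n : ℕ}

theorem abv_adjugate_le [Nontrivial R] [IsStrictOrderedRing S] {A : Matrix (Fin n) (Fin n) R}
    (hA : ∀ i j, abv (A i j) ≤ x) (i j : Fin n) :
    abv (A.adjugate i j) ≤ (n - 1)! • x ^ (n - 1) := by
  cases n with
  | zero => exact i.elim0
  | succ n =>
    have hminor := Matrix.det_le (A := A.submatrix j.succAbove i.succAbove) fun _ _ ↦ hA _ _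
    rw [Fintype.card_fin] at hminor
    rcases neg_one_pow_eq_or R (j + i : ℕ) with hsign | hsign <;>
      simpa only [Matrix.adjugate_fin_succ_eq_det_submatrix, hsign, one_mul, neg_one_mul,
        abv.map_neg, Nat.add_sub_cancel] using hminor

theorem abv_sylvester_le (hf : ∀ i, abv (f.coeff i) ≤ x) (hg : ∀ i, abv (g.coeff i) ≤ x)
    (i j : Fin (m + n)) : abv (f.sylvester g m n i j) ≤ x := by
  have hx : 0 ≤ x := (abv.nonneg _).trans (hf 0)
  cases j using Fin.addCases <;>
    simp only [sylvester, Matrix.of_apply, Fin.addCases_left, Fin.addCases_right] <;> split_ifs <;>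
    simp only [hf, hg, map_zero, hx]

theorem coeff_adjSylvester_fst (f g : R[X]) (k : Fin (m + n)) (i : Fin m) :
    (adjSylvester f g (degreeLT.basis R (m + n) k)).1.1.coeff i =
      (f.sylvester g m n).adjugate (i.castAdd n) k := by
  have hcoord := LinearMap.toMatrix_apply (degreeLT.basis R (m + n))
    (((degreeLT.basis R m).prod (degreeLT.basis R n)).reindex finSumFinEquiv)
    (adjSylvester f g) (i.castAdd n) k
  rw [adjSylvester, LinearMap.toMatrix_toLin, Module.Basis.repr_reindex_apply,
    finSumFinEquiv_symm_apply_castAdd, Module.Basis.prod_repr_inl, degreeLT.basis_repr] at hcoord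
  exact hcoord.symm

theorem coeff_adjSylvester_snd (f g : R[X]) (k : Fin (m + n)) (i : Fin n) :
    (adjSylvester f g (degreeLT.basis R (m + n) k)).2.1.coeff i =
      (f.sylvester g m n).adjugate (i.natAdd m) k := by
  have hcoord := LinearMap.toMatrix_apply (degreeLT.basis R (m + n))
    (((degreeLT.basis R m).prod (degreeLT.basis R n)).reindex finSumFinEquiv)
    (adjSylvester f g) (i.natAdd m) k
  rw [adjSylvester, LinearMap.toMatrix_toLin, Module.Basis.repr_reindex_apply,
    finSumFinEquiv_symm_apply_natAdd, Module.Basis.prod_repr_inr, degreeLT.basis_repr] at hcoord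
  exact hcoord.symm

theorem abv_coeff_le_of_mem_degreeLT {p : R[X]_n} (hx : 0 ≤ x)
    (hp : ∀ i : Fin n, abv (p.1.coeff i) ≤ x) (i : ℕ) : abv (p.1.coeff i) ≤ x := by
  rcases lt_or_ge i n with hi | hi
  · exact hp ⟨i, hi⟩
  · simpa [coeff_eq_zero_of_degree_lt ((mem_degreeLT.mp p.2).trans_le (by exact_mod_cast hi))]

theorem exists_mul_add_mul_eq_C_resultant_mul_X_pow [Nontrivial R] [IsStrictOrderedRing S]
    (hf : f.natDegree ≤ m) (hg : g.natDegree ≤ n) (hfx : ∀ i, abv (f.coeff i) ≤ x)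
    (hgx : ∀ i, abv (g.coeff i) ≤ x) {k : ℕ} (hk : k < m + n) :
    ∃ (p : R[X]_n) (q : R[X]_m), f * p.1 + g * q.1 = C (f.resultant g m n) * X ^ k ∧
      (∀ i, abv (p.1.coeff i) ≤ (m + n - 1)! • x ^ (m + n - 1)) ∧
      ∀ i, abv (q.1.coeff i) ≤ (m + n - 1)! • x ^ (m + n - 1) := by
  let X_k := degreeLT.basis R (m + n) ⟨k, hk⟩
  have hbound := abv_adjugate_le (abv_sylvester_le (m := m) (n := n) hfx hgx)
  have hbound_nonneg : 0 ≤ (m + n - 1)! • x ^ (m + n - 1) :=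
    (abv.nonneg _).trans (hbound ⟨k, hk⟩ ⟨k, hk⟩)
  have hcramer := congr(($(sylveserMap_comp_adjSylvester f g hf hg) X_k).1)
  refine ⟨(adjSylvester f g X_k).2, (adjSylvester f g X_k).1, ?_,
    abv_coeff_le_of_mem_degreeLT hbound_nonneg fun i ↦ ?_,
    abv_coeff_le_of_mem_degreeLT hbound_nonneg fun i ↦ ?_⟩
  · simpa [X_k, degreeLT.basis_val, smul_eq_C_mul] using hcramer
  · simpa only [X_k, coeff_adjSylvester_snd] using hbound _ _
  · simpa only [X_k, coeff_adjSylvester_fst] using hbound _ _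

theorem resultant_natDegree_right_ne_zero_of_isCoprime [IsDomain R] (h : IsCoprime f g)
    (hle : f.natDegree ≤ g.natDegree) : f.resultant g g.natDegree g.natDegree ≠ 0 := by
  obtain ⟨k, hk⟩ := Nat.exists_eq_add_of_le hle
  have hlead : g.leadingCoeff ^ k ≠ 0 := by
    rcases eq_or_ne g 0 with rfl | hg
    · rw [natDegree_zero] at hk
      simp [show k = 0 by omega]
    · exact pow_ne_zero k (leadingCoeff_ne_zero.mpr hg)
  have hdeg := resultant_add_left_deg f g f.natDegree g.natDegree k le_rfl
  rw [← hk] at hdeg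
  rw [hdeg]
  exact mul_ne_zero (mul_ne_zero (by simp) hlead) (resultant_ne_zero f g h)

theorem resultant_max_natDegree_ne_zero_of_isCoprime [IsDomain R] (h : IsCoprime f g) :
    f.resultant g (max f.natDegree g.natDegree) (max f.natDegree g.natDegree) ≠ 0 := by
  rcases le_total f.natDegree g.natDegree with hle | hle
  · simpa only [max_eq_right hle] using resultant_natDegree_right_ne_zero_of_isCoprime h hle
  · rw [max_eq_left hle, resultant_comm]
    exact mul_ne_zero (by simp) (resultant_natDegree_right_ne_zero_of_isCoprime h.symm hle)

end Sylvester

section LocalBounds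

variable {A S : Type*} [Ring A] [CommRing S] [LinearOrder S] [IsStrictOrderedRing S]
  {v : AbsoluteValue A S} {p : ℤ[X]} {d B : ℕ}

theorem pow_le_max_one_pow {a : S} (ha : 0 ≤ a) {i : ℕ} (hi : i ≤ d) : a ^ i ≤ max a 1 ^ d :=
  (pow_le_pow_left₀ ha (le_max_left a 1) i).trans (pow_le_pow_right₀ (le_max_right a 1) hi)

theorem abv_intCast_le (v : AbsoluteValue A S) {n : ℤ} (hn : |n| ≤ B) : v n ≤ B :=
  calc v n = v (n.natAbs : A) := (v.apply_natAbs_eq n).symm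
    _ ≤ n.natAbs := v.apply_nat_le_self _
    _ ≤ B := by exact_mod_cast n.natCast_natAbs ▸ hn

variable [Nontrivial A]

theorem abv_aeval_le (v : AbsoluteValue A S) (hd : p.natDegree ≤ d)
    (hB : ∀ i, |p.coeff i| ≤ (B : ℤ)) (x : A) :
    v (aeval x p) ≤ (d + 1) * B * max (v x) 1 ^ d := by
  have hterm : ∀ i ∈ Finset.range (d + 1), v (p.coeff i • x ^ i) ≤ B * max (v x) 1 ^ d := by
    intro i hi
    rw [zsmul_eq_mul, map_mul, map_pow]
    exact mul_le_mul (abv_intCast_le v (hB i))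
      (pow_le_max_one_pow (v.nonneg x) (Finset.mem_range_succ_iff.mp hi)) (by positivity)
      (by positivity)
  rw [aeval_eq_sum_range' (Nat.lt_succ_of_le hd)]
  calc v (∑ i ∈ Finset.range (d + 1), p.coeff i • x ^ i)
    _ ≤ ∑ i ∈ Finset.range (d + 1), v (p.coeff i • x ^ i) := v.sum_le _ _
    _ ≤ (d + 1) • (B * max (v x) 1 ^ d) := by
        simpa only [Finset.card_range] using Finset.sum_le_card_nsmul _ _ _ hterm
    _ = (d + 1) * B * max (v x) 1 ^ d := by simp [mul_assoc]

theorem abv_aeval_le_of_isNonarchimedean (hv : IsNonarchimedean v) (hd : p.natDegree ≤ d) (x : A) :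
    v (aeval x p) ≤ max (v x) 1 ^ d := by
  rw [aeval_eq_sum_range' (Nat.lt_succ_of_le hd)]
  obtain ⟨i, hi, hsum⟩ := hv.finset_image_add_of_nonempty (fun i ↦ p.coeff i • x ^ i)
    (Finset.nonempty_range_add_one (n := d))
  calc v (∑ i ∈ Finset.range (d + 1), p.coeff i • x ^ i)
    _ ≤ v (p.coeff i) * v x ^ i := by simpa only [zsmul_eq_mul, map_mul, map_pow] using hsum
    _ ≤ v x ^ i := mul_le_of_le_one_left (by positivity) hv.apply_intCast_le_one
    _ ≤ max (v x) 1 ^ d := pow_le_max_one_pow (v.nonneg x) (Finset.mem_range_succ_iff.mp hi)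

end LocalBounds

section Height

open Height AdmissibleAbsValues Function
open scoped Nat

variable {K ι : Type*} [Field K] [AdmissibleAbsValues K]

theorem hasFiniteMulSupport_max_one (x : K) :
    (fun v : nonarchAbsVal (K := K) ↦ max (v.val x) 1).HasFiniteMulSupport := by
  rcases eq_or_ne x 0 with rfl | hx
  · simp [HasFiniteMulSupport]
  · exact (hasFiniteMulSupport hx).max (by fun_prop)

theorem mulHeight_aeval_le {p : ι → ℤ[X]} {d B : ℕ} (hd : ∀ i, (p i).natDegree ≤ d)
    (hB : ∀ i j, |(p i).coeff j| ≤ (B : ℤ)) (hB1 : 1 ≤ B) (x : K) :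
    mulHeight (fun i ↦ aeval x (p i)) ≤
      (((d + 1) * B : ℕ) : ℝ) ^ totalWeight K * mulHeight₁ x ^ d := by
  rcases eq_or_ne (fun i ↦ aeval x (p i)) 0 with h₀ | h₀
  · rw [h₀, mulHeight_zero]
    exact one_le_mul_of_one_le_of_one_le
      (one_le_pow₀ (by exact_mod_cast Nat.mul_pos d.succ_pos hB1))
      (one_le_pow₀ (one_le_mulHeight₁ x))
  have : Nonempty ι := (Function.ne_iff.mp h₀).nonempty
  have harch : (archAbsVal.map fun v ↦ ⨆ i, v (aeval x (p i))).prod ≤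
      (((d + 1) * B : ℕ) : ℝ) ^ totalWeight K *
        (archAbsVal.map fun v ↦ max (v x) 1).prod ^ d := by
    rw [totalWeight, ← Multiset.prod_map_pow, ← Multiset.prod_replicate, ← Multiset.map_const',
      ← Multiset.prod_map_mul]
    refine Multiset.prod_map_le_prod_map₀ _ _
      (fun _ _ ↦ Real.iSup_nonneg_of_nonnegHomClass ..) fun v _ ↦ ciSup_le fun i ↦ ?_
    exact_mod_cast abv_aeval_le v (hd i) (hB i) x
  have hnonarch : ∏ᶠ v : nonarchAbsVal (K := K), ⨆ i, v.val (aeval x (p i)) ≤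
      (∏ᶠ v : nonarchAbsVal (K := K), max (v.val x) 1) ^ d := by
    by_cases hfin :
        (fun v : nonarchAbsVal (K := K) ↦ ⨆ i, v.val (aeval x (p i))).HasFiniteMulSupport
    · have hfin_max := hasFiniteMulSupport_max_one x
      rw [finprod_pow hfin_max]
      exact finprod_le_finprod hfin (fun _ ↦ Real.iSup_nonneg_of_nonnegHomClass ..)
        (by fun_prop) fun v ↦ ciSup_le fun i ↦
          abv_aeval_le_of_isNonarchimedean (isNonarchimedean _ v.prop) (hd i) x
    · -- The left side is then the junk value `1`.
      rw [finprod_of_infinite_mulSupport hfin]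
      exact one_le_pow₀ (one_le_finprod fun _ ↦ le_max_right _ _)
  rw [mulHeight_eq h₀, mulHeight₁_eq, mul_pow, ← mul_assoc]
  refine mul_le_mul harch hnonarch
    (finprod_nonneg fun _ ↦ Real.iSup_nonneg_of_nonnegHomClass ..) ?_
  exact mul_nonneg (by positivity) (pow_nonneg (Multiset.prod_map_nonneg fun _ _ ↦ by positivity) d)

theorem mulHeight_aeval_le_of_sum_mul_eq {ι' : Type*} [Fintype ι] [Nonempty ι] [Finite ι']
    {F : ι → ℤ[X]} {G : ι' → ℤ[X]} {c : ι' × ι → ℤ[X]} {R : ℤ} {d B : ℕ} (hR : (R : K) ≠ 0)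
    (hcF : ∀ j, ∑ i, c (j, i) * F i = C R * G j) (hd : ∀ ji, (c ji).natDegree ≤ d)
    (hB : ∀ ji k, |(c ji).coeff k| ≤ (B : ℤ)) (hB1 : 1 ≤ B) (x : K) :
    mulHeight (fun j ↦ aeval x (G j)) ≤
      ((Nat.card ι * ((d + 1) * B) : ℕ) : ℝ) ^ totalWeight K * mulHeight₁ x ^ d *
        mulHeight (fun i ↦ aeval x (F i)) := by
  have hscale : (fun j ↦ ∑ i, aeval x (c (j, i)) * aeval x (F i)) =
      (R : K) • fun j ↦ aeval x (G j) := by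
    funext j
    simpa using congr(aeval x $(hcF j))
  calc mulHeight (fun j ↦ aeval x (G j))
    _ = mulHeight (fun j ↦ ∑ i, aeval x (c (j, i)) * aeval x (F i)) := by
        rw [hscale, mulHeight_smul_eq_mulHeight _ hR]
    _ ≤ Nat.card ι ^ totalWeight K * mulHeight (fun ji ↦ aeval x (c ji)) *
          mulHeight (fun i ↦ aeval x (F i)) :=
        mulHeight_linearMap_apply_le (fun ji ↦ aeval x (c ji)) _
    _ ≤ Nat.card ι ^ totalWeight K *
          ((((d + 1) * B : ℕ) : ℝ) ^ totalWeight K * mulHeight₁ x ^ d) *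
          mulHeight (fun i ↦ aeval x (F i)) := by
        gcongr
        exact mulHeight_aeval_le hd hB hB1 x
    _ = _ := by rw [Nat.cast_mul (Nat.card ι), mul_pow]; ring

theorem exists_mul_add_mul_eq_resultant_mul_X_pow_of_abs_coeff_le {f g : ℤ[X]} {s M : ℕ}
    (hf : f.natDegree ≤ s + 1) (hg : g.natDegree ≤ s + 1) (hfM : ∀ i, |f.coeff i| ≤ (M : ℤ))
    (hgM : ∀ i, |g.coeff i| ≤ (M : ℤ)) {k : ℕ} (hk : k ≤ 2 * s + 1) :
    ∃ c : Fin 2 → ℤ[X], c 0 * f + c 1 * g = C (f.resultant g (s + 1) (s + 1)) * X ^ k ∧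
      (∀ i, (c i).natDegree ≤ s) ∧
      ∀ i j, |(c i).coeff j| ≤ (((2 * s + 1)! * M ^ (2 * s + 1) : ℕ) : ℤ) := by
  obtain ⟨p, q, hpq, hp, hq⟩ := exists_mul_add_mul_eq_C_resultant_mul_X_pow
    (abv := AbsoluteValue.abs) hf hg hfM hgM (k := k) (by omega)
  have hdeg (c : ℤ[X]_(s + 1)) : c.1.natDegree ≤ s :=
    natDegree_le_iff_coeff_eq_zero.mpr fun i hi ↦
      coeff_eq_zero_of_degree_lt ((mem_degreeLT.mp c.2).trans_le (by exact_mod_cast hi))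
  rw [show s + 1 + (s + 1) - 1 = 2 * s + 1 by omega] at hp hq
  refine ⟨![p, q], by simpa [mul_comm] using hpq, by simp [Fin.forall_fin_two, hdeg], ?_⟩
  simpa [Fin.forall_fin_two] using And.intro hp hq

theorem mulHeight₁_pow_le_mulHeight_aeval {f g : ℤ[X]} {r M : ℕ} (hf : f.natDegree ≤ r)
    (hg : g.natDegree ≤ r) (hfM : ∀ i, |f.coeff i| ≤ (M : ℤ)) (hgM : ∀ i, |g.coeff i| ≤ (M : ℤ))
    (hM : 1 ≤ M) (hres : (f.resultant g r r : K) ≠ 0) (x : K) :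
    mulHeight₁ x ^ r ≤
      (((2 * r)! * M ^ (2 * r - 1) : ℕ) : ℝ) ^ totalWeight K *
        mulHeight ![aeval x f, aeval x g] := by
  obtain _ | s := r
  · simpa using one_le_mulHeight ![aeval x f, aeval x g]
  choose c hc hdeg hcoeff using fun j : Fin 2 ↦
    exists_mul_add_mul_eq_resultant_mul_X_pow_of_abs_coeff_le hf hg hfM hgM
      (k := ![2 * s + 1, 0] j) (by fin_cases j <;> simp)
  have hB : 1 ≤ (2 * s + 1)! * M ^ (2 * s + 1) :=
    Nat.mul_pos (Nat.factorial_pos _) (Nat.pow_pos hM)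
  have hconst : Nat.card (Fin 2) * ((s + 1) * ((2 * s + 1)! * M ^ (2 * s + 1))) =
      (2 * (s + 1))! * M ^ (2 * (s + 1) - 1) := by
    rw [Nat.card_fin, show 2 * (s + 1) = 2 * s + 1 + 1 by ring, Nat.factorial_succ (2 * s + 1),
      Nat.add_sub_cancel]
    ring
  have hG : (fun j : Fin 2 ↦ aeval x (X ^ ![2 * s + 1, 0] j : ℤ[X])) = ![x ^ (2 * s + 1), 1] := by
    funext j; fin_cases j <;> simp
  have hF : (fun i : Fin 2 ↦ aeval x (![f, g] i)) = ![aeval x f, aeval x g] := by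
    funext i; fin_cases i <;> rfl
  refine le_of_mul_le_mul_left ?_ (pow_pos (mulHeight₁_pos x) s)
  calc mulHeight₁ x ^ s * mulHeight₁ x ^ (s + 1)
    _ = mulHeight (fun j : Fin 2 ↦ aeval x (X ^ ![2 * s + 1, 0] j : ℤ[X])) := by
        rw [hG, ← mulHeight₁_eq_mulHeight, mulHeight₁_pow]
        ring
    _ ≤ _ := mulHeight_aeval_le_of_sum_mul_eq (F := ![f, g]) (c := fun ji ↦ c ji.1 ji.2) hres
        (fun j ↦ by simpa using hc j) (fun ji ↦ hdeg ji.1 ji.2) (fun ji ↦ hcoeff ji.1 ji.2) hB x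
    _ = _ := by
        rw [hF, hconst]
        ring

end Height

section GaussLemma

open scoped nonZeroDivisors

variable {R K : Type*} [CommRing R] [IsDomain R] [NormalizedGCDMonoid R] [Field K] [Algebra R K]
  [IsFractionRing R K]

theorem primPart_integerNormalization_dvd {f : R[X]} {g : K[X]}
    (h : g ∣ f.map (algebraMap R K)) : (IsLocalization.integerNormalization R⁰ g).primPart ∣ f := by
  obtain ⟨b, hb, hspec⟩ := IsLocalization.integerNormalization_spec R⁰ g
  have hunit : IsUnit (C (algebraMap R K b)) := (IsLocalization.map_units K ⟨b, hb⟩).map C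
  refine (isPrimitive_primPart _).dvd_of_fraction_map_dvd_fraction_map (K := K) ?_
  calc _ ∣ (IsLocalization.integerNormalization R⁰ g).map (algebraMap R K) :=
        map_dvd _ (primPart_dvd _)
    _ ∣ f.map (algebraMap R K) := by
        rw [hspec, algebra_compatible_smul K, smul_eq_C_mul]
        exact hunit.mul_left_dvd.mpr h

theorem isCoprime_map_of_isRelPrime {P Q : R[X]} (h : IsRelPrime P Q) :
    IsCoprime (P.map (algebraMap R K)) (Q.map (algebraMap R K)) := by
  rw [← isRelPrime_iff_isCoprime]
  intro g hgP hgQ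
  have hg : g ≠ 0 := by
    rintro rfl
    rw [zero_dvd_iff, Polynomial.map_eq_zero_iff (IsFractionRing.injective R K)] at hgP hgQ
    exact not_isUnit_zero (h hgP.symm.dvd hgQ.symm.dvd)
  exact isUnit_or_eq_zero_of_isUnit_integerNormalization_primPart hg
    (h (primPart_integerNormalization_dvd hgP) (primPart_integerNormalization_dvd hgQ))

end GaussLemma

section PolyHeight

theorem abs_coeff_le_polyHeight (P : ℤ[X]) (i : ℕ) : |P.coeff i| ≤ (polyHeight P : ℤ) := by
  by_cases hi : i ∈ P.support
  · rw [← Int.natCast_natAbs]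
    exact_mod_cast Finset.le_sup (f := fun i ↦ (P.coeff i).natAbs) hi
  · simp [notMem_support_iff.mp hi]

theorem polyHeight_pos_s14 {P : ℤ[X]} (hP : P ≠ 0) : 0 < polyHeight P := by
  exact_mod_cast (abs_pos.mpr (leadingCoeff_ne_zero.mpr hP)).trans_le (abs_coeff_le_polyHeight P _)

end PolyHeight

section RationalHeight

open Height

theorem mulHeight₁_intCast_div_intCast {a b : ℤ} (h : IsCoprime a b) :
    mulHeight₁ ((a : ℚ) / b) = max |(a : ℝ)| |(b : ℝ)| := by
  have hgcd : Finset.univ.gcd ![a, b] = 1 := by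
    simpa [Finset.univ_fin2, ← Int.coe_gcd, ← Int.abs_eq_normalize, Int.gcd_eq_natAbs,
      Int.natAbs_abs] using Int.isCoprime_iff_gcd_eq_one.mp h
  have hcast : ![(a : ℚ), (b : ℚ)] = ((↑) : ℤ → ℚ) ∘ ![a, b] := by
    funext i; fin_cases i <;> rfl
  rw [mulHeight₁_div_eq_mulHeight, hcast, Rat.mulHeight_eq_max_abs_of_gcd_eq_one hgcd,
    ← Finset.sup'_univ_eq_ciSup]
  simp [Finset.univ_fin2]

end RationalHeight

section GapPrinciple

open Height
open scoped Nat

variable {P Q : ℤ[X]} {K : Type*} [Field K] {r : ℕ}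

theorem one_le_max_polyHeight_of_isCoprime_map
    (h : IsCoprime (P.map (algebraMap ℤ K)) (Q.map (algebraMap ℤ K))) :
    1 ≤ max (polyHeight P) (polyHeight Q) := by
  have hne {F : ℤ[X]} (hF : F.map (algebraMap ℤ K) ≠ 0) : 1 ≤ polyHeight F :=
    polyHeight_pos_s14 fun h₀ ↦ hF (by rw [h₀, Polynomial.map_zero])
  exact le_max_iff.mpr (h.ne_zero_or_ne_zero.imp hne hne)

theorem intCast_resultant_ne_zero_of_isCoprime_map [CharZero K]
    (h : IsCoprime (P.map (algebraMap ℤ K)) (Q.map (algebraMap ℤ K)))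
    (hr : r = max P.natDegree Q.natDegree) : (P.resultant Q r r : K) ≠ 0 := by
  have hinj : Function.Injective (algebraMap ℤ K) := (algebraMap ℤ K).injective_int
  rw [← eq_intCast (algebraMap ℤ K), ← resultant_map_map, hr]
  simpa only [natDegree_map_eq_of_injective hinj] using
    resultant_max_natDegree_ne_zero_of_isCoprime h

theorem aeval_ne_zero_of_isCoprime_map {x y : K}
    (h : IsCoprime (P.map (algebraMap ℤ K)) (Q.map (algebraMap ℤ K)))
    (hxy : aeval x P + y * aeval x Q = 0) : aeval x Q ≠ 0 := by
  intro hQ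
  have hP : aeval x P = 0 := by simpa [hQ] using hxy
  have hcoprime := h.map (evalRingHom x)
  rw [coe_evalRingHom, eval_map_algebraMap, eval_map_algebraMap, hP, hQ] at hcoprime
  exact not_isCoprime_zero_zero hcoprime

theorem gap_principle_with_vanishing_general [CharZero K] [AdmissibleAbsValues K]
    (hcop : IsCoprime (P.map (algebraMap ℤ K)) (Q.map (algebraMap ℤ K)))
    (hr : r = max P.natDegree Q.natDegree) {x₁ x₂ : K}
    (hvanish : aeval x₁ P + x₂ * aeval x₁ Q = 0) :
    mulHeight₁ x₁ ^ r ≤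
      (((2 * r)! * max (polyHeight P) (polyHeight Q) ^ (2 * r - 1) : ℕ) : ℝ) ^ totalWeight K *
        mulHeight₁ x₂ := by
  have hx₂ : x₂ = -(aeval x₁ P / aeval x₁ Q) := by
    field_simp [aeval_ne_zero_of_isCoprime_map hcop hvanish]
    linear_combination hvanish
  rw [hx₂, mulHeight₁_neg, mulHeight₁_div_eq_mulHeight]
  exact mulHeight₁_pow_le_mulHeight_aeval (hr ▸ le_max_left _ _) (hr ▸ le_max_right _ _)
    (fun i ↦ (abs_coeff_le_polyHeight P i).trans (by exact_mod_cast le_max_left _ _))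
    (fun i ↦ (abs_coeff_le_polyHeight Q i).trans (by exact_mod_cast le_max_right _ _))
    (one_le_max_polyHeight_of_isCoprime_map hcop)
    (intCast_resultant_ne_zero_of_isCoprime_map hcop hr) x₁

theorem factorial_two_mul_le_two_pow_sq_mul (r : ℕ) :
    (2 * r)! ≤ 2 ^ r ^ 2 * (r + 1) ^ (2 * r) :=
  calc (2 * r)! ≤ (2 * r) ^ r * r ! := Nat.factorial_two_mul_le r
    _ ≤ (2 * r) ^ r * r ^ r := by gcongr; exact Nat.factorial_le_pow r
    _ = 2 ^ r * r ^ (2 * r) := by ring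
    _ ≤ 2 ^ r ^ 2 * (r + 1) ^ (2 * r) := by
        gcongr
        · norm_num
        · exact Nat.le_self_pow two_ne_zero r
        · omega

theorem factorial_two_mul_mul_pow_le (r M : ℕ) :
    (((2 * r)! * M ^ (2 * r - 1) : ℕ) : ℝ) ≤
      2 ^ r ^ 2 * ((r : ℝ) + 1) ^ ((3 * (r : ℝ) ^ 2 + 2 * r) / 2) *
        (M : ℝ) ^ (2 * r ^ 2 + 3 * r) := by
  have hr : (r : ℝ) ≤ (r : ℝ) ^ 2 := by exact_mod_cast Nat.le_self_pow two_ne_zero r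
  have hbase : ((r : ℝ) + 1) ^ (2 * r) ≤ ((r : ℝ) + 1) ^ ((3 * (r : ℝ) ^ 2 + 2 * r) / 2) := by
    rw [← Real.rpow_natCast]
    exact Real.rpow_le_rpow_of_exponent_le (by simp) (by push_cast; linarith)
  have hM : M ^ (2 * r - 1) ≤ M ^ (2 * r ^ 2 + 3 * r) := by
    rcases M.eq_zero_or_pos with rfl | hpos
    · rcases r.eq_zero_or_pos with rfl | hr_pos
      · simp
      · rw [zero_pow (by omega), zero_pow (by positivity)]
    · exact Nat.pow_le_pow_right hpos (by omega)
  calc (((2 * r)! * M ^ (2 * r - 1) : ℕ) : ℝ)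
    _ ≤ ((2 ^ r ^ 2 * (r + 1) ^ (2 * r) * M ^ (2 * r ^ 2 + 3 * r) : ℕ) : ℝ) := by
        exact_mod_cast Nat.mul_le_mul (factorial_two_mul_le_two_pow_sq_mul r) hM
    _ ≤ _ := by
        push_cast
        gcongr

end GapPrinciple

/-- **A gap principle in the presence of vanishing.** Let `P, Q ∈ ℤ[x]` be coprime
with `r = max (deg P, deg Q) ≥ 1`. Let `x₁/y₁` and `x₂/y₂` be rational numbers in
lowest terms such that `H(x₂,y₂) ≥ H(x₁,y₁)` and `P(x₁/y₁) + (x₂/y₂)·Q(x₁/y₁) = 0`.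
Then `H(x₂,y₂) ≥ H(x₁,y₁)^r / (C₁₅ · max (H(P), H(Q))^(2r² + 3r))`, where
`C₁₅ = 2^(r²) · (r+1)^((3r² + 2r)/2)`. -/
theorem gap_principle_with_vanishing
    (P Q : Polynomial ℤ)
    (hcop : ∀ g : Polynomial ℤ, g ∣ P → g ∣ Q → IsUnit g)
    (r : ℕ) (hr : r = max P.natDegree Q.natDegree) (hr1 : 1 ≤ r)
    (x₁ y₁ x₂ y₂ : ℤ) (hy₁ : 0 < y₁) (hy₂ : 0 < y₂)
    (hcop₁ : IsCoprime x₁ y₁) (hcop₂ : IsCoprime x₂ y₂)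
    (hH : max |(x₁ : ℝ)| |(y₁ : ℝ)| ≤ max |(x₂ : ℝ)| |(y₂ : ℝ)|)
    (hvanish : Polynomial.aeval ((x₁ : ℚ) / (y₁ : ℚ)) P +
      ((x₂ : ℚ) / (y₂ : ℚ)) * Polynomial.aeval ((x₁ : ℚ) / (y₁ : ℚ)) Q = 0) :
    (max |(x₁ : ℝ)| |(y₁ : ℝ)|) ^ r /
        ((2 : ℝ) ^ (r ^ 2) * ((r : ℝ) + 1) ^ ((3 * (r : ℝ) ^ 2 + 2 * r) / 2) *
          (max (polyHeight P) (polyHeight Q) : ℝ) ^ (2 * r ^ 2 + 3 * r)) ≤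
      max |(x₂ : ℝ)| |(y₂ : ℝ)| := by
  have hgap := gap_principle_with_vanishing_general (K := ℚ)
    (isCoprime_map_of_isRelPrime fun g ↦ hcop g) hr hvanish
  rw [mulHeight₁_intCast_div_intCast hcop₁, mulHeight₁_intCast_div_intCast hcop₂,
    NumberField.totalWeight_eq_finrank, Module.finrank_self, pow_one] at hgap
  refine div_le_of_le_mul₀ (by positivity) (by positivity) (hgap.trans ?_)
  rw [mul_comm]
  gcongr
  exact_mod_cast factorial_two_mul_mul_pow_le r (max (polyHeight P) (polyHeight Q))
end

section
/- Let P, Q ∈ ℤ[x] be coprime polynomials of degrees r and s respectively, with r ≥ max(1, s). Let c_P be the leading coefficient of P, and set P(x,y) = y^r·P(x/y) and Q(x,y) = y^r·Q(x/y) (the degree-r homogenizations). Then for all coprime integers a and b, gcd(P(a,b), Q(a,b)) divides ϱ = |c_P^{r−s} · Res(P,Q)|, and moreover 1 ≤ ϱ ≤ (r+1)^r · max(H(P), H(Q))^{2r}. -/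
/-!
Give `Q` the formal degree `r`: then `c_P ^ (r - s) * Res(P, Q)` is the resultant of `P` and `Q` as
forms of degree `r`. The adjugate of their Sylvester map writes this resultant times any form of
degree `2 * r - 1` as a combination of the two forms; taking `x ^ (2 * r - 1)` and
`y ^ (2 * r - 1)`, a common divisor of the values at coprime `(a, b)` divides the resultant. By
Gauss's lemma `P` and `Q` stay coprime over `ℚ`, so the resultant does not vanish. Each row of the
transposed Sylvester matrix has at most `r + 1` nonzero entries, all bounded by the heights, so
Hadamard's inequality gives the upper bound.
-/

open Polynomial

/-- The Sylvester matrix of `P` (of degree `r`) and `Q` (of degree `s`): an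
`(s + r) × (s + r)` integer matrix whose first `s` rows carry the shifted
coefficients of `P` and whose last `r` rows carry the shifted coefficients of `Q`. -/
def sylvesterMatrix (P Q : Polynomial ℤ) (r s : ℕ) :
    Matrix (Fin (s + r)) (Fin (s + r)) ℤ :=
  Matrix.of fun i j =>
    if (i : ℕ) < s then
      (if (i : ℕ) ≤ (j : ℕ) ∧ (j : ℕ) ≤ r + (i : ℕ) then P.coeff (r + (i : ℕ) - (j : ℕ)) else 0)
    else
      (if (i : ℕ) - s ≤ (j : ℕ) ∧ (j : ℕ) ≤ (i : ℕ) then Q.coeff ((i : ℕ) - (j : ℕ)) else 0)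

/-- The resultant `Res(P, Q)` of `P` (of degree `r`) and `Q` (of degree `s`), as the
determinant of the Sylvester matrix. -/
def resultantZ (P Q : Polynomial ℤ) (r s : ℕ) : ℤ := (sylvesterMatrix P Q r s).det

/-- The degree-`r` homogenization of an integer polynomial, evaluated at an integer
point `(a, b)`: if `P(x) = ∑ cᵢ xⁱ`, this is `∑_{i ≤ r} cᵢ aⁱ b^(r−i)`,
i.e. `b^r · P(a/b)`. -/
def homogEvalZ (P : Polynomial ℤ) (r : ℕ) (a b : ℤ) : ℤ :=
  ∑ i ∈ Finset.range (r + 1), P.coeff i * a ^ i * b ^ (r - i)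

section Homogenize

variable {R : Type*} [CommRing R] {f g : R[X]} {m n : ℕ}

lemma exists_mul_add_mul_eq_C_resultant_mul (hf : f.natDegree ≤ m) (hg : g.natDegree ≤ n) {h : R[X]}
    (hh : h.degree < ↑(m + n)) :
    ∃ p q : R[X], p.degree < n ∧ q.degree < m ∧ f * p + g * q = C (resultant f g m n) * h := by
  let X : R[X]_m × R[X]_n := adjSylvester f g ⟨h, mem_degreeLT.2 hh⟩
  have hX := congr(($(sylveserMap_comp_adjSylvester f g hf hg) ⟨h, mem_degreeLT.2 hh⟩).1)
  exact ⟨X.2, X.1, mem_degreeLT.1 X.2.2, mem_degreeLT.1 X.1.2, by simpa [smul_eq_C_mul] using hX⟩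

lemma homogenize_mul_of_degree_lt (hf : f.natDegree ≤ m) {p : R[X]} (hp : p.degree < n) :
    (f * p).homogenize (m + n - 1) = f.homogenize m * p.homogenize (n - 1) := by
  obtain rfl | hn := n.eq_zero_or_pos
  · obtain rfl : p = 0 := by simpa using hp
    simp
  · rw [Nat.add_sub_assoc hn, homogenize_mul _ _ hf]
    obtain rfl | hp0 := eq_or_ne p 0
    · simp
    · exact Nat.le_sub_one_of_lt ((natDegree_lt_iff_degree_lt hp0).2 hp)

lemma dvd_resultant_mul_eval_homogenize (hf : f.natDegree ≤ m) (hg : g.natDegree ≤ n)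
    {x : Fin 2 → R} {d : R} (hdf : d ∣ MvPolynomial.eval x (f.homogenize m))
    (hdg : d ∣ MvPolynomial.eval x (g.homogenize n)) {h : R[X]} (hh : h.degree < ↑(m + n)) :
    d ∣ resultant f g m n * MvPolynomial.eval x (h.homogenize (m + n - 1)) := by
  obtain ⟨p, q, hp, hq, hpq⟩ := exists_mul_add_mul_eq_C_resultant_mul hf hg hh
  have hom := congr(MvPolynomial.eval x (homogenize $hpq (m + n - 1)))
  rw [homogenize_add, homogenize_mul_of_degree_lt hf hp, add_comm m n,
    homogenize_mul_of_degree_lt hg hq, homogenize_C_mul, add_comm n m] at hom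
  simp only [map_add, map_mul, MvPolynomial.eval_C] at hom
  exact hom ▸ dvd_add (hdf.mul_right _) (hdg.mul_right _)

theorem dvd_resultant_of_dvd_eval_homogenize (hf : f.natDegree ≤ m) (hg : g.natDegree ≤ n)
    (hmn : m + n ≠ 0) {x : Fin 2 → R} (hx : IsCoprime (x 0) (x 1)) {d : R}
    (hdf : d ∣ MvPolynomial.eval x (f.homogenize m))
    (hdg : d ∣ MvPolynomial.eval x (g.homogenize n)) : d ∣ resultant f g m n := by
  set N := m + n - 1
  have hN : N < m + n := by omega
  have dvd_pow_zero : d ∣ resultant f g m n * x 0 ^ N := by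
    have := dvd_resultant_mul_eval_homogenize hf hg hdf hdg (h := X ^ N)
      ((degree_X_pow_le N).trans_lt (mod_cast hN))
    simpa [N] using this
  have dvd_pow_one : d ∣ resultant f g m n * x 1 ^ N := by
    have := dvd_resultant_mul_eval_homogenize hf hg hdf hdg (h := 1)
      (degree_one_le.trans_lt (mod_cast hmn.bot_lt))
    simpa [N] using this
  obtain ⟨u, v, huv⟩ : IsCoprime (x 0 ^ N) (x 1 ^ N) := hx.pow
  have : resultant f g m n =
      u * (resultant f g m n * x 0 ^ N) + v * (resultant f g m n * x 1 ^ N) := by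
    linear_combination -resultant f g m n * huv
  rw [this]
  exact dvd_add (dvd_pow_zero.mul_left _) (dvd_pow_one.mul_left _)

end Homogenize

section Coprime

variable {R : Type*} [CommRing R]

lemma map_primPart_integerNormalization_dvd [NormalizedGCDMonoid R] {K : Type*} [Field K]
    [Algebra R K] [IsFractionRing R K] (p : K[X]) :
    (IsLocalization.integerNormalization (nonZeroDivisors R) p).primPart.map (algebraMap R K) ∣
      p := by
  obtain ⟨c, hc, hcp⟩ := IsLocalization.integerNormalization_spec (nonZeroDivisors R) p
  have hunit : IsUnit (C (algebraMap R K c)) :=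
    isUnit_C.2 (IsLocalization.map_units K (⟨c, hc⟩ : nonZeroDivisors R))
  refine (Polynomial.map_dvd _ (primPart_dvd _)).trans ?_
  rw [hcp, Algebra.smul_def, Polynomial.algebraMap_apply]
  exact (hunit.mul_left_dvd).2 dvd_rfl

variable [IsDomain R] [IsGCDMonoid R]

lemma isCoprime_map_of_isRelPrime_s15 (K : Type*) [Field K] [Algebra R K]
    [IsFractionRing R K] {f g : R[X]} (h : IsRelPrime f g) :
    IsCoprime (f.map (algebraMap R K)) (g.map (algebraMap R K)) := by
  have := Classical.arbitrary (NormalizedGCDMonoid R)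
  refine IsRelPrime.isCoprime fun p hpf hpg => ?_
  have hp0 : p ≠ 0 := by
    rintro rfl
    simp only [zero_dvd_iff, Polynomial.map_eq_zero_iff (IsFractionRing.injective R K)] at hpf hpg
    exact not_isRelPrime_zero_zero (hpf ▸ hpg ▸ h)
  have primPart_dvd_of_dvd {q : R[X]} (hq : p ∣ q.map (algebraMap R K)) :
      (IsLocalization.integerNormalization (nonZeroDivisors R) p).primPart ∣ q :=
    (isPrimitive_primPart _).dvd_of_fraction_map_dvd_fraction_map
      ((map_primPart_integerNormalization_dvd p).trans hq)
  exact isUnit_or_eq_zero_of_isUnit_integerNormalization_primPart hp0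
    (h (primPart_dvd_of_dvd hpf) (primPart_dvd_of_dvd hpg))

theorem resultant_ne_zero_of_isRelPrime {f g : R[X]} (h : IsRelPrime f g) :
    resultant f g ≠ 0 := by
  have inj := IsFractionRing.injective R (FractionRing R)
  have := resultant_ne_zero _ _ (isCoprime_map_of_isRelPrime_s15 (FractionRing R) h)
  rw [natDegree_map_eq_of_injective inj, natDegree_map_eq_of_injective inj,
    resultant_map_map] at this
  exact fun h0 => this (by rw [h0, map_zero])

end Coprime

section Hadamard

variable {𝕜 ι : Type*} [RCLike 𝕜] [Fintype ι]

lemma norm_det_toBasis_le_prod_norm [DecidableEq ι] {E : Type*} [NormedAddCommGroup E]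
    [InnerProductSpace 𝕜 E] (e : OrthonormalBasis ι 𝕜 E) (v : ι → E) :
    ‖e.toBasis.det v‖ ≤ ∏ i, ‖v i‖ := by
  have : FiniteDimensional 𝕜 E := e.toBasis.finiteDimensional_of_finite
  let σ := Fintype.equivFin ι
  let b : OrthonormalBasis ι 𝕜 E :=
    (InnerProductSpace.gramSchmidtOrthonormalBasis (Module.finrank_eq_card_basis
      (e.reindex σ).toBasis) (v ∘ σ.symm)).reindex σ.symm
  have det_b : b.toBasis.det v = ∏ i, inner 𝕜 (b i) (v i) := by
    rw [OrthonormalBasis.reindex_toBasis, Module.Basis.det_reindex,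
      InnerProductSpace.gramSchmidtOrthonormalBasis_det, ← σ.prod_comp]
    simp [b]
  rw [e.toBasis.det.eq_smul_basis_det b.toBasis, AlternatingMap.smul_apply, norm_smul,
    b.coe_toBasis, e.det_to_matrix_orthonormalBasis, one_mul, det_b, norm_prod]
  gcongr with i
  simpa using norm_inner_le_norm (𝕜 := 𝕜) (b i) (v i)

/-- **Hadamard's inequality**. -/
theorem norm_det_le_prod_norm_row [DecidableEq ι] (A : Matrix ι ι 𝕜) :
    ‖A.det‖ ≤ ∏ i, ‖WithLp.toLp 2 (A i)‖ := by
  have h := norm_det_toBasis_le_prod_norm (EuclideanSpace.basisFun ι 𝕜) fun i => WithLp.toLp 2 (A i)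
  have hA : (EuclideanSpace.basisFun ι 𝕜).toBasis.toMatrix (fun i => WithLp.toLp 2 (A i)) =
      A.transpose := by
    ext i j
    simp [Module.Basis.toMatrix_apply]
  rwa [Module.Basis.det_apply, hA, Matrix.det_transpose] at h

lemma norm_le_sqrt_card_mul {x : EuclideanSpace 𝕜 ι} {s : Finset ι} {c : ℝ} (hc : 0 ≤ c)
    (hxs : ∀ i ∉ s, x i = 0) (hxc : ∀ i ∈ s, ‖x i‖ ≤ c) : ‖x‖ ≤ √(s.card) * c := by
  have hsum : ∑ i, ‖x i‖ ^ 2 = ∑ i ∈ s, ‖x i‖ ^ 2 :=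
    (Finset.sum_subset s.subset_univ fun i _ hi => by simp [hxs i hi]).symm
  rw [EuclideanSpace.norm_eq, hsum, Real.sqrt_le_left (by positivity), mul_pow,
    Real.sq_sqrt (Nat.cast_nonneg _), ← nsmul_eq_mul]
  refine Finset.sum_le_card_nsmul _ _ _ fun i hi => ?_
  gcongr
  exact hxc i hi

end Hadamard

section Sylvester

variable {𝕜 : Type*} [RCLike 𝕜]

lemma norm_shifted_coeff_le (f : 𝕜[X]) (m N j : ℕ) :
    ‖WithLp.toLp 2 fun i : Fin N => if (i : ℕ) ∈ Set.Icc j (j + m) then f.coeff (i - j) else 0‖ ≤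
      √(m + 1) * f.supNorm := by
  let s : Finset (Fin N) := {i | (i : ℕ) ∈ Set.Icc j (j + m)}
  have hs : s.card ≤ m + 1 := by
    have := Finset.card_le_card_of_injOn (s := s) (t := Finset.Icc j (j + m)) Fin.val
      (fun i hi => by simpa [s] using hi) Fin.val_injective.injOn
    simpa [show j + m + 1 - j = m + 1 by omega] using this
  refine (norm_le_sqrt_card_mul (s := s) f.supNorm_nonneg (by simp +contextual [s])
    fun i hi => ?_).trans ?_
  · simpa [(Finset.mem_filter.1 hi).2] using f.le_supNorm _
  · gcongr
    · exact f.supNorm_nonneg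
    · exact_mod_cast hs

theorem norm_resultant_le (f g : 𝕜[X]) (m n : ℕ) :
    ‖resultant f g m n‖ ≤ (√(n + 1) * g.supNorm) ^ m * (√(m + 1) * f.supNorm) ^ n := by
  have row_g (j : Fin m) : (sylvester f g m n).transpose (j.castAdd n) = fun i : Fin (m + n) =>
      if (i : ℕ) ∈ Set.Icc (j : ℕ) (j + n) then g.coeff (i - j) else 0 := by
    ext i
    simp [sylvester]
  have row_f (j : Fin n) : (sylvester f g m n).transpose (j.natAdd m) = fun i : Fin (m + n) =>
      if (i : ℕ) ∈ Set.Icc (j : ℕ) (j + m) then f.coeff (i - j) else 0 := by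
    ext i
    simp [sylvester]
  have hg : 0 ≤ g.supNorm := g.supNorm_nonneg
  calc ‖resultant f g m n‖
    _ ≤ ∏ j, ‖WithLp.toLp 2 ((sylvester f g m n).transpose j)‖ := by
      rw [resultant, ← Matrix.det_transpose]
      exact norm_det_le_prod_norm_row _
    _ ≤ (∏ _j : Fin m, √(n + 1) * g.supNorm) * ∏ _j : Fin n, √(m + 1) * f.supNorm := by
      simp only [Fin.prod_univ_add, row_g, row_f]
      gcongr <;> exact norm_shifted_coeff_le ..
    _ = (√(n + 1) * g.supNorm) ^ m * (√(m + 1) * f.supNorm) ^ n := by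
      rw [Fin.prod_const, Fin.prod_const]

end Sylvester

section Integer

lemma supNorm_map_intCast_eq_polyHeight (P : ℤ[X]) :
    (P.map (Int.castRingHom ℝ)).supNorm = polyHeight P := by
  have norm_coeff (i : ℕ) : ‖(P.map (Int.castRingHom ℝ)).coeff i‖ = (P.coeff i).natAbs := by
    simp [Nat.cast_natAbs]
  refine le_antisymm ?_ ?_
  · obtain ⟨i, hi⟩ := (P.map (Int.castRingHom ℝ)).exists_eq_supNorm
    rw [hi, norm_coeff, Nat.cast_le]
    by_cases h : i ∈ P.support
    · exact Finset.le_sup (f := fun i => (P.coeff i).natAbs) h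
    · simp [notMem_support_iff.1 h]
  · refine (Nat.le_floor_iff (supNorm_nonneg _)).1 (Finset.sup_le fun i _ => ?_)
    exact Nat.le_floor (norm_coeff i ▸ le_supNorm _ i)

lemma abs_resultant_le_mul_max_polyHeight_pow (P Q : ℤ[X]) (r : ℕ) :
    |((resultant P Q r r : ℤ) : ℝ)| ≤
      ((r : ℝ) + 1) ^ r * (max (polyHeight P) (polyHeight Q) : ℝ) ^ (2 * r) := by
  have h := norm_resultant_le (P.map (Int.castRingHom ℝ)) (Q.map (Int.castRingHom ℝ)) r r
  rw [resultant_map_map, supNorm_map_intCast_eq_polyHeight,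
    supNorm_map_intCast_eq_polyHeight, eq_intCast, Real.norm_eq_abs] at h
  set H : ℝ := max (polyHeight P) (polyHeight Q)
  calc |((resultant P Q r r : ℤ) : ℝ)|
    _ ≤ (√(r + 1) * polyHeight Q) ^ r * (√(r + 1) * polyHeight P) ^ r := h
    _ ≤ (√(r + 1) * H) ^ r * (√(r + 1) * H) ^ r := by
      gcongr
      · exact le_max_right _ _
      · exact le_max_left _ _
    _ = (√(r + 1) ^ 2) ^ r * H ^ (2 * r) := by ring
    _ = (r + 1) ^ r * H ^ (2 * r) := by rw [Real.sq_sqrt (by positivity)]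

lemma homogEvalZ_eq_eval_homogenize (P : ℤ[X]) (r : ℕ) (a b : ℤ) :
    homogEvalZ P r a b = MvPolynomial.eval ![a, b] (P.homogenize r) := by
  simp [homogEvalZ, homogenize, Finset.Nat.sum_antidiagonal_eq_sum_range_succ_mk,
    MvPolynomial.eval_monomial, Finsupp.prod_fintype, mul_assoc]

lemma resultantZ_eq_resultant (P Q : ℤ[X]) (r s : ℕ) :
    resultantZ P Q r s = resultant P Q r s := by
  let e : Fin (r + s) ≃ Fin (s + r) := Fin.revPerm.trans (finCongr (add_comm r s))
  have val_e (k : Fin (r + s)) : (e k : ℕ) = r + s - (k + 1) := by simp [e]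
  have submatrix_rev : (sylvesterMatrix P Q r s).submatrix e e = (sylvester P Q r s).transpose := by
    ext i j
    cases i using Fin.addCases with
    | left i =>
      simp only [sylvesterMatrix, sylvester, Matrix.submatrix_apply, Matrix.transpose_apply,
        Matrix.of_apply, val_e, Fin.addCases_left, Fin.val_castAdd, Set.mem_Icc]
      rw [if_neg (by omega)]
      exact ite_congr (propext (by omega)) (fun _ => congrArg Q.coeff (by omega)) fun _ => rfl
    | right i =>
      simp only [sylvesterMatrix, sylvester, Matrix.submatrix_apply, Matrix.transpose_apply,
        Matrix.of_apply, val_e, Fin.addCases_right, Fin.val_natAdd, Set.mem_Icc]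
      rw [if_pos (by omega)]
      exact ite_congr (propext (by omega)) (fun _ => congrArg P.coeff (by omega)) fun _ => rfl
  rw [resultantZ, ← Matrix.det_submatrix_equiv_self e, submatrix_rev, Matrix.det_transpose,
    resultant]

lemma leadingCoeff_pow_mul_resultantZ {P Q : ℤ[X]} {r s : ℕ} (hP : P.natDegree = r)
    (hQ : Q.natDegree ≤ s) (hsr : s ≤ r) :
    P.leadingCoeff ^ (r - s) * resultantZ P Q r s = resultant P Q r r := by
  have h := resultant_add_right_deg P Q r s (r - s) hQ
  rw [Nat.add_sub_cancel' hsr] at h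
  rw [resultantZ_eq_resultant, h, leadingCoeff, hP]

end Integer

/-- Let `P, Q ∈ ℤ[x]` be coprime polynomials of degrees `r` and `s` respectively,
with `r ≥ max (1, s)`. Let `c_P` be the leading coefficient of `P` and let
`P(x,y) = y^r·P(x/y)`, `Q(x,y) = y^r·Q(x/y)` be the degree-`r` homogenizations. Then
for all coprime integers `a` and `b`, `gcd (P(a,b), Q(a,b))` divides
`ϱ = |c_P^(r−s) · Res(P,Q)|`, and moreover
`1 ≤ ϱ ≤ (r+1)^r · max (H(P), H(Q))^(2r)`. -/
theorem gcd_of_homogenized_values_divides_resultant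
    (P Q : Polynomial ℤ) (r s : ℕ)
    (hP : P.natDegree = r) (hQ : Q.natDegree = s) (hr1 : 1 ≤ r) (hsr : s ≤ r)
    (hcop : ∀ g : Polynomial ℤ, g ∣ P → g ∣ Q → IsUnit g) :
    (∀ a b : ℤ, IsCoprime a b →
      (Int.gcd (homogEvalZ P r a b) (homogEvalZ Q r a b) : ℤ) ∣
        |P.leadingCoeff ^ (r - s) * resultantZ P Q r s|) ∧
    1 ≤ |P.leadingCoeff ^ (r - s) * resultantZ P Q r s| ∧
    (|P.leadingCoeff ^ (r - s) * resultantZ P Q r s| : ℝ) ≤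
      ((r : ℝ) + 1) ^ r * (max (polyHeight P) (polyHeight Q) : ℝ) ^ (2 * r) := by
  subst hP hQ
  have ϱ_eq : P.leadingCoeff ^ (P.natDegree - Q.natDegree) *
      resultantZ P Q P.natDegree Q.natDegree = resultant P Q P.natDegree P.natDegree :=
    leadingCoeff_pow_mul_resultantZ rfl le_rfl hsr
  refine ⟨fun a b hab => ?_, Int.one_le_abs ?_, ?_⟩
  · rw [dvd_abs, ϱ_eq]
    refine dvd_resultant_of_dvd_eval_homogenize (x := ![a, b]) le_rfl hsr (by omega) hab ?_ ?_
    · exact homogEvalZ_eq_eval_homogenize P _ a b ▸ Int.gcd_dvd_left ..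
    · exact homogEvalZ_eq_eval_homogenize Q _ a b ▸ Int.gcd_dvd_right ..
  · have hP0 : P ≠ 0 := ne_zero_of_natDegree_gt hr1
    rw [resultantZ_eq_resultant]
    exact mul_ne_zero (pow_ne_zero _ (leadingCoeff_ne_zero.2 hP0))
      (resultant_ne_zero_of_isRelPrime fun _ => hcop _)
  · have bound := abs_resultant_le_mul_max_polyHeight_pow P Q P.natDegree
    rwa [← ϱ_eq, Int.cast_mul, Int.cast_pow] at bound
end
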